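/- arXiv:2209.14939 — 2 statements merged into one kernel-verified Lean document; each statement's English description precedes it below -/
import Mathlib

section
/- Assume M ≥ 2. There exist C > 0 and x₀ (depending only on δ, M, K, ξ) such that for all x ≥ x₀, every integer N, every H ∈ 𝔥₂ and every j ∈ {1, 2}: |E[∑_{q ∈ Q_H} (∑_{−y ≤ n < Ky} λ*_b(H; q, n))^j] − ((K+1)y)^j·#Q_H| ≤ C·((K+1)y)^j·#Q_H / H^{M−2}. -/
open scoped Classical

noncomputable def yy (δ x : ℝ) : ℕ := ⌈x * Real.log x ^ δ⌉₊

noncomputable def zz (δ x : ℝ) : ℝ :=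
  (yy δ x : ℝ) * Real.log (Real.log x) ^ 2 / Real.log x ^ (1/2 : ℝ)

noncomputable def primesUpTo (t : ℝ) : Finset ℕ :=
  (Finset.range (⌊t⌋₊ + 1)).filter fun p => p.Prime ∧ (p : ℝ) ≤ t

noncomputable def PP (t : ℝ) : ℕ := ∏ p ∈ primesUpTo t, p

noncomputable def sigUpTo (t : ℝ) : ℝ := ∏ p ∈ primesUpTo t, (1 - 1 / (p : ℝ))

noncomputable def primesBetween (w t : ℝ) : Finset ℕ :=
  (Finset.range (⌊t⌋₊ + 1)).filter fun p => p.Prime ∧ w < (p : ℝ) ∧ (p : ℝ) ≤ t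

noncomputable def sigBetween (w t : ℝ) : ℝ := ∏ p ∈ primesBetween w t, (1 - 1 / (p : ℝ))

def inS (t : ℝ) (b n : ℤ) : Prop :=
  ∀ p : ℕ, p.Prime → (p : ℝ) ≤ t → ¬ ((p : ℤ) ∣ (n - b))

def inSBetween (w t : ℝ) (b n : ℤ) : Prop :=
  ∀ p : ℕ, p.Prime → w < (p : ℝ) → (p : ℝ) ≤ t → ¬ ((p : ℤ) ∣ (n - b))

noncomputable def countS (t : ℝ) (b lo hi : ℤ) : ℕ :=
  ((Finset.Icc lo hi).filter (inS t b)).card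

noncomputable def EE (δ x : ℝ) (g : ℤ → ℝ) : ℝ :=
  (1 / (PP (zz δ x) : ℝ)) * ∑ b ∈ Finset.range (PP (zz δ x)), g (b : ℤ)

def frakH (δ ξ x : ℝ) : Set ℝ :=
  {H | ∃ j : ℕ, H = ξ ^ j ∧ 2 * (yy δ x : ℝ) / x ≤ H ∧ H ≤ (yy δ x : ℝ) / (ξ * zz δ x)}

def frakH1 (δ ξ x : ℝ) : Set ℝ :=
  {H | ∃ j : ℕ, Even j ∧ H = ξ ^ j ∧ 2 * (yy δ x : ℝ) / x ≤ H ∧ H ≤ (yy δ x : ℝ) / (ξ * zz δ x)}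

def frakH2 (δ ξ x : ℝ) : Set ℝ :=
  {H | ∃ j : ℕ, Odd j ∧ H = ξ ^ j ∧ 2 * (yy δ x : ℝ) / x ≤ H ∧ H ≤ (yy δ x : ℝ) / (ξ * zz δ x)}

noncomputable def QH (δ ξ x H : ℝ) : Finset ℕ :=
  (Finset.range (⌊(yy δ x : ℝ) / H⌋₊ + 1)).filter fun q =>
    q.Prime ∧ (yy δ x : ℝ) / (ξ * H) < (q : ℝ) ∧ (q : ℝ) ≤ (yy δ x : ℝ) / H

noncomputable def Hq (δ ξ x : ℝ) (q : ℕ) : ℝ :=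
  if h : ∃ H ∈ frakH δ ξ x, (yy δ x : ℝ) / (ξ * H) < (q : ℝ) ∧ (q : ℝ) ≤ (yy δ x : ℝ) / H
  then h.choose else 1

noncomputable def APset (M : ℝ) (K : ℕ) (b : ℤ) (H : ℝ) (q : ℕ) (n : ℤ) : Finset ℤ :=
  ((Finset.Icc 1 ⌊(K : ℝ) * H⌋₊).image fun h : ℕ => n + (q : ℤ) * (h : ℤ)).filter (inS (H ^ M) b)

noncomputable def lam (M zv : ℝ) (K : ℕ) (b : ℤ) (H : ℝ) (q : ℕ) (n : ℤ) : ℝ :=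
  if ∀ m ∈ APset M K b H q n, inSBetween (H ^ M) zv b m
  then sigBetween (H ^ M) zv ^ (-((APset M K b H q n).card : ℤ))
  else 0

noncomputable def APsetStar (M : ℝ) (K : ℕ) (N b : ℤ) (H : ℝ) (q : ℕ) (n : ℤ) : Finset ℤ :=
  ((Finset.Icc 1 ⌊(K : ℝ) * H⌋₊).image fun h : ℕ => n - (q : ℤ) * (h : ℤ)).filter (inS (H ^ M) (-N - b))

noncomputable def lamStar (M zv : ℝ) (K : ℕ) (N b : ℤ) (H : ℝ) (q : ℕ) (n : ℤ) : ℝ :=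
  if ∀ m ∈ APsetStar M K N b H q n, inSBetween (H ^ M) zv (-N - b) m
  then sigBetween (H ^ M) zv ^ (-((APsetStar M K N b H q n).card : ℤ))
  else 0

lemma sum_range_mul_mod {P Q : ℕ} (hP : 0 < P) (hQ : 0 < Q) (h : P.Coprime Q) (f : ℕ → ℕ → ℝ) :
    ∑ b ∈ Finset.range (P * Q), f (b % P) (b % Q)
      = ∑ a ∈ Finset.range P, ∑ c ∈ Finset.range Q, f a c := by
  rw [← Finset.sum_product']
  have hinj : Set.InjOn (fun b : ℕ => (b % P, b % Q)) (Finset.range (P * Q)) := by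
    intro a ha b hb hab
    simp only [Prod.mk.injEq] at hab
    have h1 : a ≡ b [MOD P * Q] := (Nat.modEq_and_modEq_iff_modEq_mul h).1 hab
    exact Nat.ModEq.eq_of_lt_of_lt h1 (by simpa using ha) (by simpa using hb)
  have himg : (Finset.range (P * Q)).image (fun b : ℕ => (b % P, b % Q))
      = Finset.range P ×ˢ Finset.range Q := by
    apply Finset.eq_of_subset_of_card_le
    · intro u hu
      obtain ⟨b, -, rfl⟩ := Finset.mem_image.1 hu
      simp [Nat.mod_lt, hP, hQ]
    · rw [Finset.card_image_of_injOn hinj]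
      simp
  rw [← himg, Finset.sum_image hinj]

lemma sum_range_prod_mod (T : Finset ℕ) (hT : ∀ p ∈ T, p.Prime) (g : ℕ → ℕ → ℝ) :
    ∑ c ∈ Finset.range (∏ p ∈ T, p), ∏ p ∈ T, g p (c % p)
      = ∏ p ∈ T, ∑ r ∈ Finset.range p, g p r := by
  induction T using Finset.induction_on with
  | empty => simp
  | insert p T hp ih =>
    have hT' : ∀ q ∈ T, q.Prime := fun q hq => hT q (Finset.mem_insert_of_mem hq)
    have hpp : p.Prime := hT p (Finset.mem_insert_self _ _)
    have hcop : p.Coprime (∏ q ∈ T, q) := Nat.Coprime.prod_right fun q hq =>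
      (Nat.coprime_primes hpp (hT' q hq)).2 fun h => hp (h ▸ hq)
    rw [Finset.prod_insert hp, Finset.prod_insert hp, ← ih hT', Finset.sum_mul_sum,
      ← sum_range_mul_mod hpp.pos (Finset.prod_pos fun q hq => (hT' q hq).pos) hcop
        (fun a c => g p a * ∏ q ∈ T, g q (c % q))]
    refine Finset.sum_congr rfl fun b _ => ?_
    rw [Finset.prod_insert hp]
    congr 1
    refine Finset.prod_congr rfl fun q hq => ?_
    rw [Nat.mod_mod_of_dvd _ (Finset.dvd_prod_of_mem _ hq)]

/-- The number of residue classes modulo `p` met by the finite set `A`. -/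
noncomputable def residueCount (p : ℕ) (A : Finset ℤ) : ℕ :=
  (A.image fun m : ℤ => (m : ZMod p)).card

lemma residueCount_le_card (p : ℕ) (A : Finset ℤ) : residueCount p A ≤ A.card :=
  Finset.card_image_le

lemma sum_range_avoid {p : ℕ} (hp : p.Prime) (N : ℤ) (A : Finset ℤ) :
    ∑ r ∈ Finset.range p, (if ∀ m ∈ A, ¬ ((p : ℤ) ∣ m - (-N - (r : ℤ))) then (1 : ℝ) else 0)
      = p - residueCount p A := by
  have : NeZero p := ⟨hp.ne_zero⟩
  have hdvd : ∀ (m : ℤ) (r : ℕ), (p : ℤ) ∣ m - (-N - (r : ℤ)) ↔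
      (r : ZMod p) = -((m : ZMod p) + (N : ZMod p)) := by
    intro m r
    rw [← ZMod.intCast_zmod_eq_zero_iff_dvd]
    push_cast
    constructor <;> intro h <;> linear_combination h
  have hcast : ∑ r ∈ Finset.range p,
      (if ∀ m ∈ A, ¬ ((p : ℤ) ∣ m - (-N - (r : ℤ))) then (1 : ℝ) else 0)
      = ∑ s : ZMod p, if s ∈ A.image (fun m : ℤ => -((m : ZMod p) + (N : ZMod p)))
          then (0 : ℝ) else 1 := by
    refine Finset.sum_bij' (fun r _ => (r : ZMod p)) (fun s _ => s.val) ?_ ?_ ?_ ?_ ?_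
    · simp
    · intro s _; simpa using ZMod.val_lt s
    · intro r hr; exact ZMod.val_cast_of_lt (by simpa using hr)
    · intro s _; simp
    · intro r _
      simp only [hdvd, Finset.mem_image]
      by_cases h : ∃ m ∈ A, -((m : ZMod p) + (N : ZMod p)) = (r : ZMod p)
      · rw [if_pos h, if_neg]
        push Not
        obtain ⟨m, hm, e⟩ := h
        exact ⟨m, hm, e.symm⟩
      · rw [if_neg h, if_pos]
        intro m hm e
        exact h ⟨m, hm, e.symm⟩
  have hcard : (A.image (fun m : ℤ => -((m : ZMod p) + (N : ZMod p)))).card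
      = residueCount p A := by
    have : A.image (fun m : ℤ => -((m : ZMod p) + (N : ZMod p)))
        = (A.image fun m : ℤ => (m : ZMod p)).image (fun s => -(s + (N : ZMod p))) := by
      rw [Finset.image_image]; rfl
    rw [this, Finset.card_image_of_injective]
    · rfl
    · intro a b h; simpa using h
  rw [hcast, ← hcard]
  have h1 : ∀ s : ZMod p, (if s ∈ A.image (fun m : ℤ => -((m : ZMod p) + (N : ZMod p)))
      then (0 : ℝ) else 1) = 1 - (if s ∈ A.image (fun m : ℤ => -((m : ZMod p) + (N : ZMod p)))
      then (1 : ℝ) else 0) := by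
    intro s; split_ifs <;> simp
  simp only [h1, Finset.sum_sub_distrib]
  congr 1
  · simp
  · rw [Finset.sum_boole, Finset.filter_mem_eq_inter, Finset.univ_inter]

lemma mem_primesUpTo {t : ℝ} {p : ℕ} : p ∈ primesUpTo t ↔ p.Prime ∧ (p : ℝ) ≤ t := by
  simp only [primesUpTo, Finset.mem_filter, Finset.mem_range, and_iff_right_iff_imp]
  rintro ⟨-, h⟩
  exact Nat.lt_succ_of_le (Nat.le_floor h)

lemma mem_primesBetween {w t : ℝ} {p : ℕ} :
    p ∈ primesBetween w t ↔ p.Prime ∧ w < (p : ℝ) ∧ (p : ℝ) ≤ t := by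
  simp only [primesBetween, Finset.mem_filter, Finset.mem_range, and_iff_right_iff_imp]
  rintro ⟨-, -, h⟩
  exact Nat.lt_succ_of_le (Nat.le_floor h)

lemma PP_eq_mul {w t : ℝ} (hwt : w ≤ t) :
    PP t = PP w * ∏ p ∈ primesBetween w t, p := by
  unfold PP
  rw [← Finset.prod_union]
  · congr 1
    ext p
    rw [Finset.mem_union, mem_primesUpTo, mem_primesUpTo,
      mem_primesBetween]
    constructor
    · rintro ⟨h1, h2⟩
      rcases le_or_gt (p : ℝ) w with h | h
      · exact Or.inl ⟨h1, h⟩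
      · exact Or.inr ⟨h1, h, h2⟩
    · rintro (⟨h1, h2⟩ | ⟨h1, -, h2⟩)
      · exact ⟨h1, h2.trans hwt⟩
      · exact ⟨h1, h2⟩
  · rw [Finset.disjoint_left]
    intro p h1 h2
    rw [mem_primesUpTo] at h1
    rw [mem_primesBetween] at h2
    linarith [h1.2, h2.2.1]

lemma PP_pos (t : ℝ) : 0 < PP t :=
  Finset.prod_pos fun _ hp => (Finset.mem_filter.1 hp).2.1.pos

lemma prod_primesBetween_pos (w t : ℝ) : 0 < ∏ p ∈ primesBetween w t, p :=
  Finset.prod_pos fun _ hp => (Finset.mem_filter.1 hp).2.1.pos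

lemma PP_coprime_prod (w t : ℝ):
    (PP w).Coprime (∏ p ∈ primesBetween w t, p) := by
  refine Nat.Coprime.prod_left fun p hp => Nat.Coprime.prod_right fun q hq => ?_
  rw [mem_primesUpTo] at hp
  rw [mem_primesBetween] at hq
  refine (Nat.coprime_primes hp.1 hq.1).2 ?_
  rintro rfl
  linarith [hp.2, hq.2.1]

/-- Averaging over a full period factors through the residues modulo `PP w` and modulo each prime
between `w` and `z`. -/
lemma average_inSBetween {w z : ℝ} (hwz : w ≤ z) (N : ℤ) (B : ℕ → Finset ℤ)
    (W : ℕ → ℝ) (hB : ∀ b, B (b % PP w) = B b) (hW : ∀ b, W (b % PP w) = W b) :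
    (1 / (PP z : ℝ)) * ∑ b ∈ Finset.range (PP z),
        (if ∀ m ∈ B b, inSBetween w z (-N - (b : ℤ)) m then W b else 0)
      = (1 / (PP w : ℝ)) * ∑ a ∈ Finset.range (PP w),
        W a * ∏ p ∈ primesBetween w z, (1 - (residueCount p (B a) : ℝ) / p) := by
  set T := primesBetween w z with hT
  have hTp : ∀ p ∈ T, p.Prime := fun p hp => (mem_primesBetween.1 hp).1
  set Q := ∏ p ∈ T, p with hQ
  set G : ℕ → ℕ → ℕ → ℝ := fun a p r =>
    if ∀ m ∈ B a, ¬ ((p : ℤ) ∣ m - (-N - (r : ℤ))) then (1 : ℝ) else 0 with hG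
  have hterm : ∀ b : ℕ, (if ∀ m ∈ B b, inSBetween w z (-N - (b : ℤ)) m then W b else 0)
      = W (b % PP w) * ∏ p ∈ T, G (b % PP w) p ((b % Q) % p) := by
    intro b
    rw [hW]
    have hGb : ∀ p ∈ T, G (b % PP w) p ((b % Q) % p) =
        if ∀ m ∈ B b, ¬ ((p : ℤ) ∣ m - (-N - (b : ℤ))) then (1 : ℝ) else 0 := by
      intro p hp
      simp only [hG, hB]
      rw [Nat.mod_mod_of_dvd _ (Finset.dvd_prod_of_mem _ hp)]
      congr 1
      refine propext (forall₂_congr fun m _ => not_congr ?_)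
      have e : m - (-N - (b : ℤ)) = m - (-N - ((b % p : ℕ) : ℤ)) + p * ((b / p : ℕ) : ℤ) := by
        have := Nat.mod_add_div b p
        have h2 : (b : ℤ) = ((b % p : ℕ) : ℤ) + p * ((b / p : ℕ) : ℤ) := by exact_mod_cast this.symm
        linarith
      rw [e]
      exact (dvd_add_left (Dvd.intro _ rfl)).symm
    rw [Finset.prod_congr rfl hGb]
    by_cases h : ∀ m ∈ B b, inSBetween w z (-N - (b : ℤ)) m
    · rw [if_pos h, Finset.prod_eq_one, mul_one]
      intro p hp
      rw [hT, mem_primesBetween] at hp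
      exact if_pos fun m hm => h m hm p hp.1 hp.2.1 hp.2.2
    · rw [if_neg h]
      simp only [inSBetween] at h
      push Not at h
      obtain ⟨m, hm, p, hp, h1, h2, h3⟩ := h
      have hpT : p ∈ T := mem_primesBetween.2 ⟨hp, h1, h2⟩
      rw [Finset.prod_eq_zero hpT, mul_zero]
      exact if_neg fun hh => hh m hm h3
  simp only [hterm]
  rw [PP_eq_mul hwz, sum_range_mul_mod (PP_pos w) (prod_primesBetween_pos w z)
    (PP_coprime_prod w z) (fun a c => W a * ∏ p ∈ T, G a p (c % p))]
  simp only [← Finset.mul_sum]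
  have hprod : ∀ a, ∑ c ∈ Finset.range Q, ∏ p ∈ T, G a p (c % p)
      = (Q : ℝ) * ∏ p ∈ T, (1 - (residueCount p (B a) : ℝ) / p) := by
    intro a
    rw [sum_range_prod_mod T hTp, hQ, Nat.cast_prod, ← Finset.prod_mul_distrib]
    refine Finset.prod_congr rfl fun p hp => ?_
    rw [sum_range_avoid (hTp p hp)]
    have : (p : ℝ) ≠ 0 := by exact_mod_cast (hTp p hp).ne_zero
    field_simp
  rw [← hT, ← hQ]
  simp only [hprod]
  have hQ0 : (Q : ℝ) ≠ 0 := by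
    have := prod_primesBetween_pos w z
    rw [← hT, ← hQ] at this
    exact_mod_cast this.ne'
  rw [Finset.mul_sum, Finset.mul_sum]
  refine Finset.sum_congr rfl fun a _ => ?_
  push_cast
  field_simp

lemma one_sub_div_le_pow {p : ℝ} (hp : 1 ≤ p) (s : ℕ) : 1 - s / p ≤ (1 - 1 / p) ^ s := by
  have h : 1 / p ≤ 1 := by rw [div_le_one] <;> linarith
  have h2 := one_add_mul_le_pow (a := -(1 / p)) (by linarith) s
  calc 1 - s / p = 1 + s * (-(1 / p)) := by ring
    _ ≤ (1 + -(1 / p)) ^ s := h2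
    _ = _ := by ring

lemma one_sub_sq_le_mul_inv {p : ℝ} (hp : 2 ≤ p) {k : ℕ} (hk : (k : ℝ) ≤ p) :
    1 - (k : ℝ) ^ 2 / p ^ 2 ≤ (1 - k / p) * ((1 - 1 / p) ^ k)⁻¹ := by
  have hp0 : 0 < p := by linarith
  have h1 : 0 < 1 / p := by positivity
  have h2 : 1 / p ≤ 1 / 2 := one_div_le_one_div_of_le (by norm_num) hp
  have h3 : (1 - 1 / p) ^ k * (1 + 1 / p) ^ k ≤ 1 := by
    rw [← mul_pow]
    exact pow_le_one₀ (by nlinarith) (by nlinarith)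
  have h4 : 0 < (1 - 1 / p) ^ k := by apply pow_pos; linarith
  have h5 : 1 + k * (1 / p) ≤ (1 + 1 / p) ^ k := one_add_mul_le_pow (by linarith) k
  have h6 : 1 + k / p ≤ ((1 - 1 / p) ^ k)⁻¹ := by
    rw [← one_div, le_div_iff₀ h4]
    have : 1 + k / p = 1 + k * (1 / p) := by ring
    rw [this]
    nlinarith
  have h7 : 0 ≤ 1 - k / p := by
    have : k / p ≤ 1 := by rw [div_le_one hp0]; exact hk
    linarith
  calc 1 - (k : ℝ) ^ 2 / p ^ 2 = (1 - k / p) * (1 + k / p) := by ring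
    _ ≤ _ := mul_le_mul_of_nonneg_left h6 h7

lemma one_sub_sum_le_prod {ι : Type*} (s : Finset ι) (a : ι → ℝ) (h0 : ∀ i ∈ s, 0 ≤ a i)
    (h1 : ∀ i ∈ s, a i ≤ 1) : 1 - ∑ i ∈ s, a i ≤ ∏ i ∈ s, (1 - a i) := by
  induction s using Finset.induction_on with
  | empty => simp
  | insert i s hi ih =>
    rw [Finset.sum_insert hi, Finset.prod_insert hi]
    have ha := h0 i (Finset.mem_insert_self _ _)
    have ha' := h1 i (Finset.mem_insert_self _ _)
    have ih' := ih (fun j hj => h0 j (Finset.mem_insert_of_mem hj))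
      (fun j hj => h1 j (Finset.mem_insert_of_mem hj))
    have hs : 0 ≤ ∑ j ∈ s, a j := Finset.sum_nonneg fun j hj => h0 j (Finset.mem_insert_of_mem hj)
    nlinarith [mul_le_mul_of_nonneg_left ih' (sub_nonneg.2 ha'), mul_nonneg ha hs]

lemma sum_primesBetween_inv_sq_le {w z : ℝ} (hw : 0 < w) :
    ∑ p ∈ primesBetween w z, 1 / (p : ℝ) ^ 2 ≤ 2 / w := by
  have h1 : primesBetween w z ⊆ Finset.Ioo ⌊w⌋₊ (⌊z⌋₊ + 1) := by
    intro p hp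
    simp only [primesBetween, Finset.mem_filter, Finset.mem_range] at hp
    rw [Finset.mem_Ioo]
    exact ⟨(Nat.floor_lt hw.le).2 hp.2.2.1, hp.1⟩
  calc ∑ p ∈ primesBetween w z, 1 / (p : ℝ) ^ 2
      ≤ ∑ p ∈ Finset.Ioo ⌊w⌋₊ (⌊z⌋₊ + 1), 1 / (p : ℝ) ^ 2 :=
        Finset.sum_le_sum_of_subset_of_nonneg h1 fun _ _ _ => by positivity
    _ = ∑ p ∈ Finset.Ioo ⌊w⌋₊ (⌊z⌋₊ + 1), ((p : ℝ) ^ 2)⁻¹ := by simp only [one_div]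
    _ ≤ 2 / (⌊w⌋₊ + 1) := sum_Ioo_inv_sq_le _ _
    _ ≤ 2 / w := by
        apply div_le_div_of_nonneg_left (by norm_num) hw (Nat.lt_floor_add_one w).le

lemma one_sub_inv_pos {p : ℕ} (hp : p.Prime) : (0 : ℝ) < 1 - 1 / p := by
  have : (2 : ℝ) ≤ p := by exact_mod_cast hp.two_le
  have h2 : 1 / (p : ℝ) ≤ 1 / 2 := one_div_le_one_div_of_le (by norm_num) this
  linarith

lemma one_sub_inv_le_one (p : ℕ) : 1 - 1 / (p : ℝ) ≤ 1 := by
  have : (0 : ℝ) ≤ 1 / p := by positivity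
  linarith

lemma sigBetween_zpow_neg (w z : ℝ) (k : ℕ) :
    sigBetween w z ^ (-(k : ℤ)) = ∏ p ∈ primesBetween w z, ((1 - 1 / (p : ℝ)) ^ k)⁻¹ := by
  rw [zpow_neg, zpow_natCast, sigBetween, ← Finset.prod_pow, Finset.prod_inv_distrib]

lemma sigBetween_pos (w z : ℝ) : 0 < sigBetween w z :=
  Finset.prod_pos fun _ hp => one_sub_inv_pos (mem_primesBetween.1 hp).1

lemma APsetStar_mod (M : ℝ) (K : ℕ) (N : ℤ) (H : ℝ) (q : ℕ) (n : ℤ) (b : ℕ) :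
    APsetStar M K N ((b % PP (H ^ M) : ℕ) : ℤ) H q n = APsetStar M K N (b : ℤ) H q n := by
  unfold APsetStar
  refine Finset.filter_congr fun m _ => ?_
  refine forall₃_congr fun p hp hpw => not_congr ?_
  have hd : (p : ℤ) ∣ (PP (H ^ M) : ℤ) := by
    exact_mod_cast Finset.dvd_prod_of_mem _ (mem_primesUpTo.2 ⟨hp, hpw⟩)
  have e : m - (-N - (b : ℤ)) = m - (-N - ((b % PP (H ^ M) : ℕ) : ℤ))
      + (PP (H ^ M) : ℤ) * ((b / PP (H ^ M) : ℕ) : ℤ) := by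
    have h2 : (b : ℤ) = ((b % PP (H ^ M) : ℕ) : ℤ)
        + (PP (H ^ M) : ℤ) * ((b / PP (H ^ M) : ℕ) : ℤ) := by
      exact_mod_cast (Nat.mod_add_div b _).symm
    linarith
  rw [e]
  exact (dvd_add_left (hd.mul_right _)).symm

lemma card_APsetStar_le (M : ℝ) (K : ℕ) (N b : ℤ) (H : ℝ) (q : ℕ) (n : ℤ) :
    (APsetStar M K N b H q n).card ≤ ⌊(K : ℝ) * H⌋₊ :=
  (Finset.card_filter_le _ _).trans (Finset.card_image_le.trans (by simp))

lemma average_const_le {P : ℕ} (hP : 0 < P) {f : ℕ → ℝ} {c : ℝ} (h : ∀ a, f a ≤ c) :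
    (1 / (P : ℝ)) * ∑ a ∈ Finset.range P, f a ≤ c := by
  have hP' : (0 : ℝ) < P := by exact_mod_cast hP
  have : ∑ a ∈ Finset.range P, f a ≤ P * c := by
    simpa using Finset.sum_le_card_nsmul (Finset.range P) f c fun a _ => h a
  rw [one_div, inv_mul_le_iff₀ hP']
  exact this

lemma le_average_const {P : ℕ} (hP : 0 < P) {f : ℕ → ℝ} {c : ℝ} (h : ∀ a, c ≤ f a) :
    c ≤ (1 / (P : ℝ)) * ∑ a ∈ Finset.range P, f a := by
  have := average_const_le hP (f := fun a => -f a) (c := -c) fun a => neg_le_neg (h a)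
  rw [Finset.sum_neg_distrib] at this
  linarith

lemma le_average_lamStar {M z H : ℝ} {K : ℕ} (hw : 0 < H ^ M) (hwz : H ^ M ≤ z)
    (hR : (⌊(K : ℝ) * H⌋₊ : ℝ) ≤ H ^ M) (N : ℤ) (q : ℕ) (n : ℤ) :
    1 - (⌊(K : ℝ) * H⌋₊ : ℝ) ^ 2 * (2 / H ^ M) ≤
      (1 / (PP z : ℝ)) * ∑ b ∈ Finset.range (PP z), lamStar M z K N (b : ℤ) H q n := by
  unfold lamStar
  rw [average_inSBetween hwz N (fun b => APsetStar M K N (b : ℤ) H q n)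
    (fun b => sigBetween (H ^ M) z ^ (-((APsetStar M K N (b : ℤ) H q n).card : ℤ)))
    (fun b => APsetStar_mod M K N H q n b) (fun b => by simp only [APsetStar_mod])]
  refine le_average_const (PP_pos _) fun a => ?_
  set A := APsetStar M K N (a : ℤ) H q n
  set R := ⌊(K : ℝ) * H⌋₊
  have hAR : (A.card : ℝ) ≤ R := by exact_mod_cast card_APsetStar_le M K N a H q n
  rw [sigBetween_zpow_neg, ← Finset.prod_mul_distrib]
  have hpw : ∀ p ∈ primesBetween (H ^ M) z, (R : ℝ) ≤ p := fun p hp =>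
    hR.trans (mem_primesBetween.1 hp).2.1.le
  have hp2 : ∀ p ∈ primesBetween (H ^ M) z, (2 : ℝ) ≤ p := fun p hp => by
    exact_mod_cast (mem_primesBetween.1 hp).1.two_le
  have hle1 : ∀ p ∈ primesBetween (H ^ M) z, (R : ℝ) ^ 2 / (p : ℝ) ^ 2 ≤ 1 := fun p hp => by
    have := hp2 p hp
    rw [div_le_one (by positivity)]
    exact pow_le_pow_left₀ (by positivity) (hpw p hp) 2
  calc 1 - (R : ℝ) ^ 2 * (2 / H ^ M)
      ≤ 1 - (R : ℝ) ^ 2 * ∑ p ∈ primesBetween (H ^ M) z, 1 / (p : ℝ) ^ 2 := by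
        have := mul_le_mul_of_nonneg_left (sum_primesBetween_inv_sq_le (z := z) hw)
          (sq_nonneg (R : ℝ))
        linarith
    _ = 1 - ∑ p ∈ primesBetween (H ^ M) z, (R : ℝ) ^ 2 / (p : ℝ) ^ 2 := by
        rw [Finset.mul_sum]; simp only [mul_one_div]
    _ ≤ ∏ p ∈ primesBetween (H ^ M) z, (1 - (R : ℝ) ^ 2 / (p : ℝ) ^ 2) :=
        one_sub_sum_le_prod _ _ (fun _ _ => by positivity) hle1
    _ ≤ _ := by
        refine Finset.prod_le_prod (fun p hp => sub_nonneg.2 (hle1 p hp)) fun p hp => ?_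
        have h2 := hp2 p hp
        have hpos := one_sub_inv_pos (mem_primesBetween.1 hp).1
        have hν : (residueCount p A : ℝ) ≤ A.card := by exact_mod_cast residueCount_le_card p A
        calc 1 - (R : ℝ) ^ 2 / (p : ℝ) ^ 2 ≤ 1 - (A.card : ℝ) ^ 2 / (p : ℝ) ^ 2 := by gcongr
          _ ≤ (1 - A.card / p) * ((1 - 1 / (p : ℝ)) ^ A.card)⁻¹ :=
              one_sub_sq_le_mul_inv h2 (hAR.trans (hpw p hp))
          _ ≤ (1 - residueCount p A / p) * ((1 - 1 / (p : ℝ)) ^ A.card)⁻¹ := by gcongr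
          _ = _ := mul_comm _ _

/-- A prime `p` collides at `m` if `m ≡ q ℓ` modulo `p` for some `|ℓ| ≤ R`. -/
def Collides (q R p : ℕ) (m : ℤ) : Prop :=
  ∃ l ∈ Finset.Icc (-(R : ℤ)) R, (p : ℤ) ∣ m - q * l

noncomputable def pairBound (w z : ℝ) (q R : ℕ) (m : ℤ) : ℝ :=
  ∏ p ∈ primesBetween w z, if Collides q R p m then ((1 - 1 / (p : ℝ)) ^ R)⁻¹ else 1

lemma residueCount_eq_card {M H : ℝ} {K : ℕ} {N b : ℤ} {q p : ℕ} {n : ℤ} (hp : p.Prime)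
    (hq : q.Prime) (hpq : p ≠ q) (hR : ⌊(K : ℝ) * H⌋₊ ≤ p) :
    residueCount p (APsetStar M K N b H q n) = (APsetStar M K N b H q n).card := by
  refine Finset.card_image_of_injOn ?_
  intro m hm m' hm' h
  simp only [APsetStar, Finset.coe_filter, Finset.mem_image, Finset.mem_Icc,
    Set.mem_ofPred_eq] at hm hm'
  obtain ⟨⟨i, hi, rfl⟩, -⟩ := hm
  obtain ⟨⟨j, hj, rfl⟩, -⟩ := hm'
  have h1 : (p : ℤ) ∣ q * ((i : ℤ) - j) := by
    have := (ZMod.intCast_eq_intCast_iff_dvd_sub _ _ _).1 h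
    have e : n - (q : ℤ) * j - (n - q * i) = q * ((i : ℤ) - j) := by ring
    rwa [e] at this
  have h2 : (p : ℤ) ∣ (i : ℤ) - j := by
    rcases (Nat.prime_iff_prime_int.1 hp).dvd_or_dvd h1 with h | h
    · exact absurd ((Nat.prime_dvd_prime_iff_eq hp hq).1 (by exact_mod_cast h)) hpq
    · exact h
  have h3 : (i : ℤ) - j = 0 := by
    apply Int.eq_zero_of_abs_lt_dvd h2
    rw [abs_lt]
    constructor <;> omega
  have : i = j := by omega
  rw [this]

lemma residueCount_union_of_not_collides {M H : ℝ} {K : ℕ} {N b : ℤ} {q p : ℕ} {n₁ n₂ : ℤ}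
    (hp : p.Prime) (hq : q.Prime) (hpq : p ≠ q) (hR : ⌊(K : ℝ) * H⌋₊ ≤ p)
    (hc : ¬ Collides q ⌊(K : ℝ) * H⌋₊ p (n₁ - n₂)) :
    residueCount p (APsetStar M K N b H q n₁ ∪ APsetStar M K N b H q n₂) =
      (APsetStar M K N b H q n₁).card + (APsetStar M K N b H q n₂).card := by
  rw [← residueCount_eq_card hp hq hpq hR, ← residueCount_eq_card hp hq hpq hR]
  unfold residueCount
  rw [Finset.image_union, Finset.card_union_of_disjoint]
  rw [Finset.disjoint_left]
  intro s h1 h2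
  simp only [APsetStar, Finset.mem_image, Finset.mem_filter, Finset.mem_Icc] at h1 h2
  obtain ⟨_, ⟨⟨i, hi, rfl⟩, -⟩, e1⟩ := h1
  obtain ⟨_, ⟨⟨j, hj, rfl⟩, -⟩, e2⟩ := h2
  refine hc ⟨(i : ℤ) - j, by rw [Finset.mem_Icc]; omega, ?_⟩
  have := (ZMod.intCast_eq_intCast_iff_dvd_sub _ _ _).1 (e2.trans e1.symm)
  have e : n₁ - (q : ℤ) * i - (n₂ - q * j) = n₁ - n₂ - q * ((i : ℤ) - j) := by ring
  rwa [e] at this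

lemma average_lamStar_mul_le {M z H : ℝ} {K : ℕ} (hwz : H ^ M ≤ z)
    (hR : 2 * (⌊(K : ℝ) * H⌋₊ : ℝ) ≤ H ^ M) (N : ℤ) {q : ℕ}
    (hq : q.Prime) (hzq : z < q) (n₁ n₂ : ℤ) :
    (1 / (PP z : ℝ)) * ∑ b ∈ Finset.range (PP z),
        lamStar M z K N (b : ℤ) H q n₁ * lamStar M z K N (b : ℤ) H q n₂ ≤
      pairBound (H ^ M) z q ⌊(K : ℝ) * H⌋₊ (n₁ - n₂) := by
  have hmul : ∀ b : ℕ, lamStar M z K N (b : ℤ) H q n₁ * lamStar M z K N (b : ℤ) H q n₂ =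
      if ∀ m ∈ APsetStar M K N (b : ℤ) H q n₁ ∪ APsetStar M K N (b : ℤ) H q n₂,
        inSBetween (H ^ M) z (-N - (b : ℤ)) m then
        sigBetween (H ^ M) z ^ (-((APsetStar M K N (b : ℤ) H q n₁).card : ℤ)) *
        sigBetween (H ^ M) z ^ (-((APsetStar M K N (b : ℤ) H q n₂).card : ℤ)) else 0 := by
    intro b
    unfold lamStar
    simp only [Finset.mem_union, or_imp, forall_and]
    split_ifs <;> simp_all
  simp only [hmul]
  rw [average_inSBetween hwz N
    (fun b => APsetStar M K N (b : ℤ) H q n₁ ∪ APsetStar M K N (b : ℤ) H q n₂)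
    (fun b => sigBetween (H ^ M) z ^ (-((APsetStar M K N (b : ℤ) H q n₁).card : ℤ)) *
      sigBetween (H ^ M) z ^ (-((APsetStar M K N (b : ℤ) H q n₂).card : ℤ)))
    (fun b => by simp only [APsetStar_mod]) (fun b => by simp only [APsetStar_mod])]
  refine average_const_le (PP_pos _) fun a => ?_
  have hA₁ := card_APsetStar_le M K N a H q n₁
  have hA₂ := card_APsetStar_le M K N a H q n₂
  rw [sigBetween_zpow_neg, sigBetween_zpow_neg, ← Finset.prod_mul_distrib,
    ← Finset.prod_mul_distrib]
  refine Finset.prod_le_prod ?_ ?_ <;> intro p hp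
  all_goals
    obtain ⟨hpp, hwp, hpz⟩ := mem_primesBetween.1 hp
    have hpos := one_sub_inv_pos hpp
    have hp0 : (0 : ℝ) < p := by exact_mod_cast hpp.pos
  · refine mul_nonneg (by positivity) (sub_nonneg.2 ?_)
    rw [div_le_one hp0]
    have h1 : residueCount p (APsetStar M K N (a : ℤ) H q n₁ ∪ APsetStar M K N (a : ℤ) H q n₂)
        ≤ 2 * ⌊(K : ℝ) * H⌋₊ :=
      (residueCount_le_card _ _).trans ((Finset.card_union_le _ _).trans (by omega))
    have h1' : (residueCount p (APsetStar M K N (a : ℤ) H q n₁ ∪ APsetStar M K N (a : ℤ) H q n₂)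
        : ℝ) ≤ 2 * (⌊(K : ℝ) * H⌋₊ : ℝ) := by exact_mod_cast h1
    linarith
  · have hpq : p ≠ q := by
      rintro rfl
      linarith
    have hRp : ⌊(K : ℝ) * H⌋₊ ≤ p := by
      have h0 : (0 : ℝ) ≤ ⌊(K : ℝ) * H⌋₊ := Nat.cast_nonneg _
      have : (⌊(K : ℝ) * H⌋₊ : ℝ) ≤ p := by linarith
      exact_mod_cast this
    have hp1 : (1 : ℝ) ≤ p := by exact_mod_cast hpp.one_lt.le
    set A₁ := APsetStar M K N (a : ℤ) H q n₁
    set A₂ := APsetStar M K N (a : ℤ) H q n₂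
    set t : ℝ := 1 - 1 / p with ht
    split_ifs with hc
    · have hν : A₁.card ≤ residueCount p (A₁ ∪ A₂) := by
        rw [← residueCount_eq_card (M := M) (N := N) (b := a) (n := n₁) hpp hq hpq hRp]
        exact Finset.card_le_card (Finset.image_subset_image Finset.subset_union_left)
      calc (t ^ A₁.card)⁻¹ * (t ^ A₂.card)⁻¹ * (1 - residueCount p (A₁ ∪ A₂) / p)
          ≤ (t ^ A₁.card)⁻¹ * (t ^ A₂.card)⁻¹ * (1 - A₁.card / p) := by gcongr
        _ ≤ (t ^ A₁.card)⁻¹ * (t ^ A₂.card)⁻¹ * t ^ A₁.card := by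
            gcongr
            exact one_sub_div_le_pow hp1 _
        _ = (t ^ A₂.card)⁻¹ := by field_simp
        _ ≤ (t ^ ⌊(K : ℝ) * H⌋₊)⁻¹ := by
            gcongr ?_⁻¹
            exact pow_le_pow_of_le_one hpos.le (one_sub_inv_le_one p) hA₂
    · rw [residueCount_union_of_not_collides hpp hq hpq hRp hc]
      calc (t ^ A₁.card)⁻¹ * (t ^ A₂.card)⁻¹ * (1 - (A₁.card + A₂.card : ℕ) / p)
          ≤ (t ^ A₁.card)⁻¹ * (t ^ A₂.card)⁻¹ * t ^ (A₁.card + A₂.card) := by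
            gcongr
            exact one_sub_div_le_pow hp1 _
        _ = 1 := by rw [pow_add]; field_simp

lemma prod_le_average_pow {ι : Type*} (s : Finset ι) (hs : s.Nonempty) (V : ι → ℝ)
    (hV : ∀ i ∈ s, 0 ≤ V i) :
    ∏ i ∈ s, V i ≤ (1 / (s.card : ℝ)) * ∑ i ∈ s, V i ^ s.card := by
  have hc : s.card ≠ 0 := hs.card_pos.ne'
  have hc' : (s.card : ℝ) ≠ 0 := by exact_mod_cast hc
  have h := Real.geom_mean_le_arith_mean_weighted s (fun _ => (s.card : ℝ)⁻¹)
    (fun i => V i ^ s.card) (fun _ _ => by positivity) (by simp [hc'])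
    (fun i hi => pow_nonneg (hV i hi) _)
  calc ∏ i ∈ s, V i = ∏ i ∈ s, (V i ^ s.card) ^ ((s.card : ℝ)⁻¹) :=
        Finset.prod_congr rfl fun i hi => (Real.pow_rpow_inv_natCast (hV i hi) hc).symm
    _ ≤ _ := h
    _ = _ := by rw [Finset.mul_sum]; simp only [one_div]

/-- The number of nonzero multiples of `d` in a shifted interval. -/
lemma card_filter_dvd_sub_le {I : Finset ℤ} {c : ℤ} {L d : ℕ} (hd : 0 < d)
    (hI : ∀ n ∈ I, |n - c| ≤ 2 * (L : ℤ)) :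
    ((I.filter fun n => n - c ≠ 0 ∧ (d : ℤ) ∣ n - c).card : ℝ) ≤ 4 * L / d := by
  set r : ℕ := 2 * L / d with hr
  have hsub : (I.filter fun n => n - c ≠ 0 ∧ (d : ℤ) ∣ n - c) ⊆
      ((Finset.Icc (-(r : ℤ)) r).erase 0).image fun k => c + d * k := by
    intro n hn
    obtain ⟨hnI, h0, k, hk⟩ := Finset.mem_filter.1 hn
    refine Finset.mem_image.2 ⟨k, ?_, by rw [← hk]; ring⟩
    have hk0 : k ≠ 0 := by rintro rfl; exact h0 (by simpa using hk)
    refine Finset.mem_erase.2 ⟨hk0, ?_⟩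
    have h1 : (k.natAbs * d : ℕ) ≤ 2 * L := by
      have := hI n hnI
      rw [hk, abs_mul, Nat.abs_cast] at this
      have h2 : ((d * k.natAbs : ℕ) : ℤ) ≤ ((2 * L : ℕ) : ℤ) := by push_cast; exact this
      rw [mul_comm]
      exact_mod_cast h2
    have h3 : k.natAbs ≤ r := (Nat.le_div_iff_mul_le hd).2 h1
    rw [Finset.mem_Icc]
    omega
  have hcard : (I.filter fun n => n - c ≠ 0 ∧ (d : ℤ) ∣ n - c).card ≤ 2 * r := by
    refine (Finset.card_le_card hsub).trans (Finset.card_image_le.trans ?_)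
    rw [Finset.card_erase_of_mem (by simp), Int.card_Icc]
    omega
  have hr' : (r : ℝ) ≤ 2 * L / d := by
    have := @Nat.cast_div_le ℝ _ _ _ (2 * L) d
    push_cast at this
    exact this
  calc ((I.filter fun n => n - c ≠ 0 ∧ (d : ℤ) ∣ n - c).card : ℝ) ≤ 2 * r := by exact_mod_cast hcard
    _ ≤ 2 * (2 * L / d) := by linarith
    _ = _ := by ring

lemma sum_prod_dvd_le {I : Finset ℤ} {c : ℤ} {L : ℕ} (hI : ∀ n ∈ I, |n - c| ≤ 2 * (L : ℤ))
    (hcard : I.card ≤ L) {D : ℝ} (hD : 0 ≤ D) {w z : ℝ} (hw : 0 < w) :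
    ∑ n ∈ I, (if n - c ≠ 0 then ∏ p ∈ primesBetween w z,
        (if (p : ℤ) ∣ n - c then 1 + D / p else 1) else 0)
      ≤ L * (1 + 4 * (Real.exp (D * (2 / w)) - 1)) := by
  set T := primesBetween w z with hT
  have hprime : ∀ p ∈ T, p.Prime := fun p hp => (mem_primesBetween.1 hp).1
  have hexpand : ∀ n : ℤ, (if n - c ≠ 0 then ∏ p ∈ T,
        (if (p : ℤ) ∣ n - c then 1 + D / p else 1) else 0) ≤
      ∑ S ∈ T.powerset, (∏ p ∈ S, D / p) *
        (if n - c ≠ 0 ∧ ((∏ p ∈ S, p : ℕ) : ℤ) ∣ n - c then 1 else 0) := by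
    intro n
    by_cases h0 : n - c = 0
    · rw [if_neg (not_not.2 h0)]
      refine Finset.sum_nonneg fun S _ => mul_nonneg (Finset.prod_nonneg fun p _ => by positivity) ?_
      split_ifs <;> norm_num
    · rw [if_pos h0]
      have h1 : ∀ p ∈ T, (if (p : ℤ) ∣ n - c then 1 + D / p else 1)
          = 1 + (if (p : ℤ) ∣ n - c then D / (p : ℝ) else 0) := by
        intro p _; split_ifs <;> simp
      rw [Finset.prod_congr rfl h1, Finset.prod_one_add]
      refine Finset.sum_le_sum fun S hS => ?_
      have hST := Finset.mem_powerset.1 hS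
      by_cases hall : ∀ p ∈ S, (p : ℤ) ∣ n - c
      · have hdvd : ((∏ p ∈ S, p : ℕ) : ℤ) ∣ n - c := by
          rw [Int.natCast_dvd]
          refine Finset.prod_primes_dvd _ (fun p hp => (hprime p (hST hp)).prime) fun p hp => ?_
          exact Int.natCast_dvd.1 (hall p hp)
        rw [if_pos ⟨h0, hdvd⟩, mul_one]
        exact (Finset.prod_congr rfl fun p hp => if_pos (hall p hp)).le
      · push Not at hall
        obtain ⟨p, hp, hnp⟩ := hall
        rw [Finset.prod_eq_zero hp (if_neg hnp)]
        refine mul_nonneg (Finset.prod_nonneg fun p _ => by positivity) ?_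
        split_ifs <;> norm_num
  have hcount : ∀ S ∈ T.powerset, ∑ n ∈ I,
      (if n - c ≠ 0 ∧ ((∏ p ∈ S, p : ℕ) : ℤ) ∣ n - c then (1 : ℝ) else 0)
      ≤ 4 * L * (∏ p ∈ S, 1 / (p : ℝ)) - (if S = ∅ then 3 * (L : ℝ) else 0) := by
    intro S hS
    rw [Finset.sum_boole]
    split_ifs with hS0
    · have h1 : ((I.filter fun n => n - c ≠ 0 ∧ ((∏ p ∈ S, p : ℕ) : ℤ) ∣ n - c).card : ℝ) ≤ L := by
        exact_mod_cast (Finset.card_filter_le _ _).trans hcard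
      have h2 : ∏ p ∈ S, 1 / (p : ℝ) = 1 := by simp [hS0]
      rw [h2]
      linarith
    · have hpos : 0 < ∏ p ∈ S, p :=
        Finset.prod_pos fun p hp => (hprime p (Finset.mem_powerset.1 hS hp)).pos
      have := card_filter_dvd_sub_le hpos hI
      rw [sub_zero]
      refine this.trans_eq ?_
      rw [Finset.prod_div_distrib, Finset.prod_const_one]
      push_cast
      ring
  calc ∑ n ∈ I, (if n - c ≠ 0 then ∏ p ∈ T, (if (p : ℤ) ∣ n - c then 1 + D / p else 1) else 0)
      ≤ ∑ n ∈ I, ∑ S ∈ T.powerset, (∏ p ∈ S, D / p) *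
        (if n - c ≠ 0 ∧ ((∏ p ∈ S, p : ℕ) : ℤ) ∣ n - c then 1 else 0) :=
        Finset.sum_le_sum fun n _ => hexpand n
    _ = ∑ S ∈ T.powerset, (∏ p ∈ S, D / p) * ∑ n ∈ I,
        (if n - c ≠ 0 ∧ ((∏ p ∈ S, p : ℕ) : ℤ) ∣ n - c then 1 else 0) := by
        rw [Finset.sum_comm]; simp only [Finset.mul_sum]
    _ ≤ ∑ S ∈ T.powerset, (∏ p ∈ S, D / p) *
        (4 * L * (∏ p ∈ S, 1 / (p : ℝ)) - (if S = ∅ then 3 * (L : ℝ) else 0)) :=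
        Finset.sum_le_sum fun S hS => mul_le_mul_of_nonneg_left (hcount S hS)
          (Finset.prod_nonneg fun p _ => by positivity)
    _ = 4 * L * (∏ p ∈ T, (1 + D / (p : ℝ) ^ 2)) - 3 * L := by
        simp only [mul_sub, Finset.sum_sub_distrib]
        congr 1
        · rw [Finset.prod_one_add, Finset.mul_sum]
          refine Finset.sum_congr rfl fun S _ => ?_
          have : ∏ p ∈ S, D / (p : ℝ) ^ 2 = (∏ p ∈ S, D / (p : ℝ)) * ∏ p ∈ S, 1 / (p : ℝ) := by
            rw [← Finset.prod_mul_distrib]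
            refine Finset.prod_congr rfl fun p _ => ?_
            ring
          rw [this]; ring
        · rw [Finset.sum_eq_single_of_mem ∅ (Finset.empty_mem_powerset T)]
          · simp
          · intro S _ hS; simp [hS]
    _ ≤ 4 * L * Real.exp (D * (2 / w)) - 3 * L := by
        have h1 : ∏ p ∈ T, (1 + D / (p : ℝ) ^ 2) ≤ Real.exp (D * (2 / w)) := by
          calc ∏ p ∈ T, (1 + D / (p : ℝ) ^ 2) ≤ ∏ p ∈ T, Real.exp (D / (p : ℝ) ^ 2) :=
                Finset.prod_le_prod (fun p _ => by positivity) fun p _ => by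
                  rw [add_comm]; exact Real.add_one_le_exp _
            _ = Real.exp (D * ∑ p ∈ T, 1 / (p : ℝ) ^ 2) := by
                rw [← Real.exp_sum, Finset.mul_sum]; simp only [mul_one_div]
            _ ≤ _ := by
                gcongr
                exact sum_primesBetween_inv_sq_le hw
        gcongr
    _ = _ := by ring

lemma one_le_inv_pow {p : ℕ} (hp : p.Prime) (R : ℕ) : 1 ≤ ((1 - 1 / (p : ℝ)) ^ R)⁻¹ :=
  (one_le_inv₀ (pow_pos (one_sub_inv_pos hp) R)).2
    (pow_le_one₀ (one_sub_inv_pos hp).le (one_sub_inv_le_one p))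

lemma pairBound_le_sigBetween (w z : ℝ) (q R : ℕ) (m : ℤ) :
    pairBound w z q R m ≤ (sigBetween w z ^ R)⁻¹ := by
  rw [sigBetween, ← Finset.prod_pow, ← Finset.prod_inv_distrib]
  refine Finset.prod_le_prod (fun p hp => ?_) fun p hp => ?_
  all_goals
    have := one_le_inv_pow (mem_primesBetween.1 hp).1 R
    split_ifs <;> linarith

lemma pairBound_le_average {w z D : ℝ} {q R : ℕ}
    (hD : ∀ p ∈ primesBetween w z, ((1 - 1 / (p : ℝ)) ^ (R * (2 * R + 1)))⁻¹ ≤ 1 + D / p)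
    (m : ℤ) :
    pairBound w z q R m ≤ (1 / (2 * R + 1 : ℝ)) * ∑ l ∈ Finset.Icc (-(R : ℤ)) R,
      ∏ p ∈ primesBetween w z, (if (p : ℤ) ∣ m - q * l then 1 + D / p else 1) := by
  set J := Finset.Icc (-(R : ℤ)) R with hJ
  have hJc : J.card = 2 * R + 1 := by rw [hJ, Int.card_Icc]; omega
  set V : ℤ → ℝ := fun l => ∏ p ∈ primesBetween w z,
    (if (p : ℤ) ∣ m - q * l then ((1 - 1 / (p : ℝ)) ^ R)⁻¹ else 1) with hV
  have hV0 : ∀ l ∈ J, 0 ≤ V l := fun l _ => Finset.prod_nonneg fun p hp => by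
    have := one_le_inv_pow (mem_primesBetween.1 hp).1 R
    split_ifs <;> linarith
  have h1 : pairBound w z q R m ≤ ∏ l ∈ J, V l := by
    rw [hV, Finset.prod_comm]
    refine Finset.prod_le_prod (fun p hp => ?_) fun p hp => ?_
    · have := one_le_inv_pow (mem_primesBetween.1 hp).1 R
      split_ifs <;> linarith
    · have h2 := one_le_inv_pow (mem_primesBetween.1 hp).1 R
      rw [Finset.prod_ite, Finset.prod_const_one, mul_one, Finset.prod_const]
      split_ifs with hc
      · obtain ⟨l, hl, hd⟩ := hc
        exact le_self_pow₀ h2 (Finset.card_pos.2 ⟨l, Finset.mem_filter.2 ⟨hl, hd⟩⟩).ne'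
      · exact one_le_pow₀ h2
  have hne : J.Nonempty := Finset.card_pos.1 (by omega)
  refine h1.trans ((prod_le_average_pow J hne V hV0).trans ?_)
  rw [hJc]
  push_cast
  gcongr with l hl
  simp only [hV]
  rw [← Finset.prod_pow]
  refine Finset.prod_le_prod (fun p hp => ?_) fun p hp => ?_
  all_goals
    have h2 := one_le_inv_pow (mem_primesBetween.1 hp).1 R
  · split_ifs <;> positivity
  · split_ifs
    · rw [inv_pow, ← pow_mul]
      exact hD p hp
    · simp

lemma sum_pairBound_le {w z D : ℝ} {q R L : ℕ} (hw : 0 < w) (hD0 : 0 ≤ D)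
    (hD : ∀ p ∈ primesBetween w z, ((1 - 1 / (p : ℝ)) ^ (R * (2 * R + 1)))⁻¹ ≤ 1 + D / p)
    (hqR : q * R ≤ L) (a : ℤ) :
    ∑ n₂ ∈ Finset.Ico a (a + L), ∑ n₁ ∈ Finset.Ico a (a + L), pairBound w z q R (n₁ - n₂)
      ≤ L * (L * (1 + 4 * (Real.exp (D * (2 / w)) - 1))
          + (2 * R + 1) * (sigBetween w z ^ R)⁻¹) := by
  set I := Finset.Ico a (a + L) with hI
  set J := Finset.Icc (-(R : ℤ)) R with hJ
  have hIc : I.card = L := by simp [hI]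
  have hJc : (J.card : ℝ) = 2 * R + 1 := by
    have : J.card = 2 * R + 1 := by rw [hJ, Int.card_Icc]; omega
    rw [this]; push_cast; rfl
  set E := (sigBetween w z ^ R)⁻¹ with hE
  have hE0 : 0 ≤ E := by
    have := sigBetween_pos w z
    positivity
  set U : ℤ → ℝ := fun v => ∏ p ∈ primesBetween w z,
    (if (p : ℤ) ∣ v then 1 + D / (p : ℝ) else 1) with hU
  have hU0 : ∀ v, 0 ≤ U v := fun v => Finset.prod_nonneg fun p _ => by
    split_ifs <;> positivity
  have hpt : ∀ n₁ n₂ : ℤ, pairBound w z q R (n₁ - n₂) ≤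
      (1 / (2 * R + 1 : ℝ)) * ∑ l ∈ J,
        (if n₁ - (n₂ + q * l) ≠ 0 then U (n₁ - (n₂ + q * l)) else 0) +
      ∑ l ∈ J, (if n₁ - (n₂ + q * l) = 0 then E else 0) := by
    intro n₁ n₂
    by_cases hz : ∃ l ∈ J, n₁ - (n₂ + q * l) = 0
    · obtain ⟨l, hl, h0⟩ := hz
      have h1 : E ≤ ∑ l ∈ J, (if n₁ - (n₂ + q * l) = 0 then E else 0) := by
        have := Finset.single_le_sum (f := fun l => if n₁ - (n₂ + q * l) = 0 then E else 0)
          (fun i _ => by split_ifs <;> simp [hE0]) hl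
        simpa [h0] using this
      have h2 : 0 ≤ (1 / (2 * R + 1 : ℝ)) * ∑ l ∈ J,
        (if n₁ - (n₂ + q * l) ≠ 0 then U (n₁ - (n₂ + q * l)) else 0) := by
        refine mul_nonneg (by positivity) (Finset.sum_nonneg fun l _ => ?_)
        split_ifs
        · exact hU0 _
        · exact le_rfl
      linarith [pairBound_le_sigBetween w z q R (n₁ - n₂)]
    · push Not at hz
      have h1 : ∑ l ∈ J, (if n₁ - (n₂ + q * l) = 0 then E else 0) = 0 :=
        Finset.sum_eq_zero fun l hl => if_neg (hz l hl)
      rw [h1, add_zero]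
      refine (pairBound_le_average hD _).trans_eq ?_
      congr 1
      refine Finset.sum_congr rfl fun l hl => ?_
      rw [if_pos (hz l hl), hU, sub_add_eq_sub_sub]
  have hrow : ∀ n₂ ∈ I, ∑ n₁ ∈ I, pairBound w z q R (n₁ - n₂) ≤
      L * (1 + 4 * (Real.exp (D * (2 / w)) - 1)) + (2 * R + 1) * E := by
    intro n₂ hn₂
    have hfar : ∀ l ∈ J, ∀ n ∈ I, |n - (n₂ + q * l)| ≤ 2 * (L : ℤ) := by
      intro l hl n hn
      have h1 : |n - n₂| ≤ L := by
        rw [hI, Finset.mem_Ico] at hn hn₂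
        rw [abs_le]
        constructor <;> linarith
      have h2 : |(q : ℤ) * l| ≤ L := by
        rw [abs_mul, Nat.abs_cast]
        have : |l| ≤ R := by rw [hJ, Finset.mem_Icc] at hl; exact abs_le.2 hl
        calc (q : ℤ) * |l| ≤ q * R := by gcongr
          _ ≤ L := by exact_mod_cast hqR
      calc |n - (n₂ + q * l)| = |(n - n₂) - q * l| := by congr 1; ring
        _ ≤ |n - n₂| + |(q : ℤ) * l| := abs_sub _ _
        _ ≤ _ := by linarith
    calc ∑ n₁ ∈ I, pairBound w z q R (n₁ - n₂)
        ≤ ∑ n₁ ∈ I, ((1 / (2 * R + 1 : ℝ)) * ∑ l ∈ J,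
          (if n₁ - (n₂ + q * l) ≠ 0 then U (n₁ - (n₂ + q * l)) else 0) +
          ∑ l ∈ J, (if n₁ - (n₂ + q * l) = 0 then E else 0)) :=
          Finset.sum_le_sum fun n₁ _ => hpt n₁ n₂
      _ = (1 / (2 * R + 1 : ℝ)) * ∑ l ∈ J, ∑ n₁ ∈ I,
          (if n₁ - (n₂ + q * l) ≠ 0 then U (n₁ - (n₂ + q * l)) else 0) +
          ∑ l ∈ J, ∑ n₁ ∈ I, (if n₁ - (n₂ + q * l) = 0 then E else 0) := by
          rw [Finset.sum_add_distrib, ← Finset.mul_sum, Finset.sum_comm (s := I),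
            Finset.sum_comm (s := I)]
      _ ≤ (1 / (2 * R + 1 : ℝ)) * ∑ _l ∈ J, (L * (1 + 4 * (Real.exp (D * (2 / w)) - 1))) +
          ∑ _l ∈ J, E := by
          gcongr with l hl l hl
          · exact sum_prod_dvd_le (hfar l hl) hIc.le hD0 hw
          · simp only [sub_eq_zero]
            rw [Finset.sum_ite_eq']
            split_ifs <;> simp [hE0]
      _ = _ := by
          rw [Finset.sum_const, Finset.sum_const, nsmul_eq_mul, nsmul_eq_mul, hJc]
          field_simp
  refine (Finset.sum_le_card_nsmul I _ _ hrow).trans_eq ?_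
  rw [hIc, nsmul_eq_mul]

lemma card_primes_dyadic_le (k : ℕ) :
    (k + 1) * ((Finset.Ioc (2 ^ (k + 1)) (2 ^ (k + 2))).filter Nat.Prime).card ≤ 2 ^ (k + 3) := by
  set s := (Finset.Ioc (2 ^ (k + 1)) (2 ^ (k + 2))).filter Nat.Prime with hs
  have h1 : (2 ^ (k + 1)) ^ s.card ≤ ∏ p ∈ s, p :=
    Finset.pow_card_le_prod s id _ fun p hp => by
      simp only [hs, Finset.mem_filter, Finset.mem_Ioc] at hp
      exact hp.1.1.le
  have h2 : ∏ p ∈ s, p ≤ primorial (2 ^ (k + 2)) := by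
    refine Finset.prod_le_prod_of_subset_of_one_le' ?_ ?_
    · intro p hp
      simp only [hs, Finset.mem_filter, Finset.mem_Ioc] at hp
      exact Finset.mem_filter.2 ⟨Finset.mem_range.2 (Nat.lt_succ_of_le hp.1.2), hp.2⟩
    · intro p hp _
      exact (Finset.mem_filter.1 hp).2.one_lt.le
  have h3 := (h1.trans h2).trans (primorial_le_four_pow _)
  rw [← pow_mul, show (4 : ℕ) = 2 ^ 2 by norm_num, ← pow_mul] at h3
  have h4 := (Nat.pow_le_pow_iff_right (by norm_num)).1 h3
  calc _ ≤ 2 * 2 ^ (k + 2) := h4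
    _ = _ := by ring

lemma sum_inv_primes_le_harmonic (k : ℕ) :
    ∑ p ∈ (Finset.Icc 1 (2 ^ (k + 1))).filter Nat.Prime, 1 / (p : ℝ) ≤ 1 / 2 + 4 * (harmonic k : ℝ) := by
  induction k with
  | zero =>
    have : (Finset.Icc 1 (2 ^ (0 + 1))).filter Nat.Prime = {2} := by decide
    rw [this]
    simp
  | succ k ih =>
    have hsplit : (Finset.Icc 1 (2 ^ (k + 1 + 1))).filter Nat.Prime
        = (Finset.Icc 1 (2 ^ (k + 1))).filter Nat.Prime ∪
          (Finset.Ioc (2 ^ (k + 1)) (2 ^ (k + 2))).filter Nat.Prime := by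
      rw [← Finset.filter_union]
      congr 1
      ext p
      have h1 : 2 ^ (k + 1 + 1) = 2 * 2 ^ (k + 1) := by ring
      have h1' : 2 ^ (k + 2) = 2 * 2 ^ (k + 1) := by ring
      have h2 : 1 ≤ 2 ^ (k + 1) := Nat.one_le_two_pow
      simp only [Finset.mem_union, Finset.mem_Icc, Finset.mem_Ioc]
      omega
    have hdisj : Disjoint ((Finset.Icc 1 (2 ^ (k + 1))).filter Nat.Prime)
        ((Finset.Ioc (2 ^ (k + 1)) (2 ^ (k + 2))).filter Nat.Prime) := by
      rw [Finset.disjoint_left]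
      intro p h1 h2
      simp only [Finset.mem_filter, Finset.mem_Icc, Finset.mem_Ioc] at h1 h2
      omega
    rw [hsplit, Finset.sum_union hdisj, harmonic_succ]
    have hnew : ∑ p ∈ (Finset.Ioc (2 ^ (k + 1)) (2 ^ (k + 2))).filter Nat.Prime, 1 / (p : ℝ)
        ≤ 4 * ((k : ℝ) + 1)⁻¹ := by
      have h1 : ∑ p ∈ (Finset.Ioc (2 ^ (k + 1)) (2 ^ (k + 2))).filter Nat.Prime, 1 / (p : ℝ)
          ≤ ((Finset.Ioc (2 ^ (k + 1)) (2 ^ (k + 2))).filter Nat.Prime).card •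
            (1 / (2 : ℝ) ^ (k + 1)) := by
        refine Finset.sum_le_card_nsmul _ _ _ fun p hp => ?_
        simp only [Finset.mem_filter, Finset.mem_Ioc] at hp
        have : (2 : ℝ) ^ (k + 1) ≤ p := by exact_mod_cast hp.1.1.le
        gcongr
      refine h1.trans ?_
      have h2 : ((k : ℝ) + 1) * ((Finset.Ioc (2 ^ (k + 1)) (2 ^ (k + 2))).filter Nat.Prime).card
          ≤ 2 ^ (k + 3) := by exact_mod_cast card_primes_dyadic_le k
      rw [nsmul_eq_mul, mul_one_div, div_le_iff₀ (by positivity), mul_assoc, mul_comm _ ((2 : ℝ) ^ _),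
        ← mul_assoc, ← div_eq_mul_inv, le_div_iff₀ (by positivity), mul_comm]
      calc _ ≤ (2 : ℝ) ^ (k + 3) := h2
        _ = _ := by ring
    push_cast
    linarith

lemma inv_one_sub_inv_le_exp {p : ℕ} (hp : p.Prime) : (1 - 1 / (p : ℝ))⁻¹ ≤ Real.exp (2 * (1 / p)) := by
  have h0 := one_sub_inv_pos hp
  have h2 : 1 / (p : ℝ) ≤ 1 / 2 :=
    one_div_le_one_div_of_le (by norm_num) (by exact_mod_cast hp.two_le)
  have h1 : (0 : ℝ) ≤ 1 / p := by positivity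
  calc (1 - 1 / (p : ℝ))⁻¹ ≤ 2 * (1 / p) + 1 := by
        rw [inv_le_iff_one_le_mul₀ h0]
        nlinarith
    _ ≤ _ := Real.add_one_le_exp _

lemma inv_sigBetween_le {w z : ℝ} {k : ℕ} (hz : z ≤ 2 ^ (k + 1)) :
    (sigBetween w z)⁻¹ ≤ Real.exp (9 + 8 * Real.log k) := by
  have hsub : primesBetween w z ⊆ (Finset.Icc 1 (2 ^ (k + 1))).filter Nat.Prime := by
    intro p hp
    obtain ⟨hpp, -, hpz⟩ := mem_primesBetween.1 hp
    simp only [Finset.mem_filter, Finset.mem_Icc]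
    exact ⟨⟨hpp.one_lt.le, by exact_mod_cast hpz.trans hz⟩, hpp⟩
  calc (sigBetween w z)⁻¹ = ∏ p ∈ primesBetween w z, (1 - 1 / (p : ℝ))⁻¹ := by
        rw [sigBetween, Finset.prod_inv_distrib]
    _ ≤ ∏ p ∈ primesBetween w z, Real.exp (2 * (1 / p)) :=
        Finset.prod_le_prod
          (fun p hp => (inv_pos.2 (one_sub_inv_pos (mem_primesBetween.1 hp).1)).le)
          fun p hp => inv_one_sub_inv_le_exp (mem_primesBetween.1 hp).1
    _ = Real.exp (2 * ∑ p ∈ primesBetween w z, 1 / (p : ℝ)) := by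
        rw [← Real.exp_sum, Finset.mul_sum]
    _ ≤ Real.exp (9 + 8 * Real.log k) := by
        refine Real.exp_le_exp.2 ?_
        have h1 : ∑ p ∈ primesBetween w z, 1 / (p : ℝ)
            ≤ ∑ p ∈ (Finset.Icc 1 (2 ^ (k + 1))).filter Nat.Prime, 1 / (p : ℝ) :=
          Finset.sum_le_sum_of_subset_of_nonneg hsub fun _ _ _ => by positivity
        have h2 := sum_inv_primes_le_harmonic k
        have h3 := harmonic_le_one_add_log k
        linarith

lemma exp_le_one_add_mul_exp (t : ℝ) : Real.exp t ≤ 1 + t * Real.exp t := by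
  have h := mul_le_mul_of_nonneg_right (Real.one_sub_le_exp_neg t) (Real.exp_pos t).le
  rw [← Real.exp_add, neg_add_cancel, Real.exp_zero] at h
  linarith

lemma inv_pow_le_one_add_div {p : ℕ} (hp : p.Prime) {s : ℕ} {A B : ℝ} (hA : 2 * (s : ℝ) ≤ A)
    (hB : A ≤ B * p) :
    ((1 - 1 / (p : ℝ)) ^ s)⁻¹ ≤ 1 + A * Real.exp B / p := by
  have hp0 : (0 : ℝ) < p := by exact_mod_cast hp.pos
  have h0 := one_sub_inv_pos hp
  calc ((1 - 1 / (p : ℝ)) ^ s)⁻¹ = ((1 - 1 / (p : ℝ))⁻¹) ^ s := (inv_pow _ _).symm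
    _ ≤ Real.exp (2 * (1 / p)) ^ s :=
        pow_le_pow_left₀ (inv_pos.2 h0).le (inv_one_sub_inv_le_exp hp) s
    _ = Real.exp (2 * s / p) := by rw [← Real.exp_nat_mul]; congr 1; ring
    _ ≤ Real.exp (A / p) := by gcongr
    _ ≤ 1 + A / p * Real.exp (A / p) := exp_le_one_add_mul_exp _
    _ ≤ 1 + A / p * Real.exp B := by
        have : A / p ≤ B := by rw [div_le_iff₀ hp0]; exact hB
        have hA0 : 0 ≤ A := le_trans (by positivity) hA
        gcongr
    _ = _ := by ring

open Filter in
/-- The growth conditions in `u = log x` used below. -/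
lemma eventually_growth (δ M : ℝ) (K : ℕ) (hδ : 0 < δ) :
    ∀ᶠ u : ℝ in atTop, 1 ≤ u ∧ 1 ≤ Real.log u ∧ (K : ℝ) ≤ u ^ δ ∧
      u ^ (M / 2 + 1 / 2) ≤ Real.exp u ∧ 2 * u ^ (3 : ℝ) ≤ Real.exp u ∧
      (2 * (K * u ^ (1 / 2 : ℝ)) + 1) *
        Real.exp (K * u ^ (1 / 2 : ℝ) * (9 + 8 * Real.log (4 * u))) * u ^ (M / 2) ≤ Real.exp u := by
  have hpoly : ∀ (c s b : ℝ), 0 < b → ∀ᶠ u : ℝ in atTop, c * u ^ s ≤ Real.exp (b * u) := by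
    intro c s b hb
    have h := (tendsto_rpow_mul_exp_neg_mul_atTop_nhds_zero s b hb).const_mul c
    rw [mul_zero] at h
    filter_upwards [h.eventually (gt_mem_nhds one_pos)] with u hu
    have h2 := mul_le_mul_of_nonneg_right hu.le (Real.exp_pos (b * u)).le
    rwa [one_mul, mul_assoc, mul_assoc, ← Real.exp_add, neg_mul, neg_add_cancel, Real.exp_zero,
      mul_one] at h2
  have hlog : ∀ᶠ u : ℝ in atTop,
      K * u ^ (1 / 2 : ℝ) * (9 + 8 * Real.log (4 * u)) ≤ 1 / 2 * u := by
    have h1 : Tendsto (fun u : ℝ => (9 + 8 * Real.log (4 * u)) / (4 * u) ^ (1 / 2 : ℝ)) atTop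
        (nhds 0) := by
      have h4 : Tendsto (fun u : ℝ => 4 * u) atTop atTop :=
        tendsto_id.const_mul_atTop (by norm_num)
      have ha : Tendsto (fun v : ℝ => (9 + 8 * Real.log v) / v ^ (1 / 2 : ℝ)) atTop (nhds 0) := by
        have hb := (isLittleO_log_rpow_atTop (r := 1 / 2) (by norm_num)).tendsto_div_nhds_zero
        have hc := (tendsto_rpow_atTop (y := 1 / 2) (by norm_num)).inv_tendsto_atTop
        have hd := (hc.const_mul 9).add (hb.const_mul 8)
        simp only [mul_zero, add_zero] at hd
        refine hd.congr fun v => ?_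
        simp only [Pi.inv_apply]
        ring
      exact ha.comp h4
    have h2 := h1.const_mul (4 * (K : ℝ))
    rw [mul_zero] at h2
    filter_upwards [h2.eventually (gt_mem_nhds one_pos), eventually_gt_atTop 0] with u hu h0
    have e : (4 * u) ^ (1 / 2 : ℝ) = 2 * u ^ (1 / 2 : ℝ) := by
      rw [Real.mul_rpow (by norm_num) h0.le, show (4 : ℝ) = 2 ^ (2 : ℝ) by norm_num,
        ← Real.rpow_mul (by norm_num)]
      norm_num
    have hs : u ^ (1 / 2 : ℝ) * u ^ (1 / 2 : ℝ) = u := by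
      rw [← Real.rpow_add h0]; norm_num
    have hp : 0 < u ^ (1 / 2 : ℝ) := by positivity
    rw [e, ← mul_div_assoc, div_lt_one (by positivity)] at hu
    nlinarith
  filter_upwards [eventually_ge_atTop 1, Real.tendsto_log_atTop.eventually_ge_atTop 1,
    (tendsto_rpow_atTop hδ).eventually_ge_atTop (K : ℝ), hpoly 1 (M / 2 + 1 / 2) 1 one_pos,
    hpoly 2 3 1 one_pos, hpoly (2 * K + 1) (M / 2 + 1 / 2) (1 / 2) (by norm_num), hlog]
    with u h1 h2 h3 h4 h5 h6 h7
  rw [one_mul, one_mul] at h4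
  rw [one_mul] at h5
  refine ⟨h1, h2, h3, h4, h5, ?_⟩
  have h0 : 0 < u := by linarith
  have hs : 1 ≤ u ^ (1 / 2 : ℝ) := Real.one_le_rpow h1 (by norm_num)
  calc _ = ((2 * (K * u ^ (1 / 2 : ℝ)) + 1) * u ^ (M / 2)) *
        Real.exp (K * u ^ (1 / 2 : ℝ) * (9 + 8 * Real.log (4 * u))) := by ring
    _ ≤ Real.exp (1 / 2 * u) * Real.exp (1 / 2 * u) := by
        gcongr
        refine le_trans ?_ h6
        rw [Real.rpow_add h0]
        have : 0 < u ^ (M / 2) := by positivity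
        nlinarith
    _ = _ := by rw [← Real.exp_add]; congr 1; ring

lemma mul_self_exp_le_two_pow {u : ℝ} {k : ℕ} (hk : 3 * u ≤ k) :
    Real.exp u * Real.exp u ≤ 2 ^ (k + 1) := by
  rw [← Real.exp_add, ← Real.rpow_natCast, Real.rpow_def_of_pos (by norm_num)]
  refine Real.exp_le_exp.2 ?_
  push_cast
  nlinarith [Real.log_two_gt_d9]

open Filter in
set_option maxHeartbeats 1000000 in
/-- The sizes of the parameters for large `x`. -/
lemma eventually_scales (δ M : ℝ) (K : ℕ) (ξ : ℝ) (hδ0 : 0 < δ) (hδ1 : δ < 1 / 2) (hξ : 1 < ξ)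
    (hM : 2 ≤ M) (hK : 2 ≤ K) :
    ∀ᶠ x : ℝ in atTop, ∀ H ∈ frakH2 δ ξ x,
      2 * (K : ℝ) ≤ H ∧ H ^ M ≤ zz δ x ∧
      (∀ q ∈ QH δ ξ x H, q.Prime ∧ zz δ x < q ∧ q * ⌊(K : ℝ) * H⌋₊ ≤ (K + 1) * yy δ x) ∧
      (2 * (⌊(K : ℝ) * H⌋₊ : ℝ) + 1) * (sigBetween (H ^ M) (zz δ x) ^ ⌊(K : ℝ) * H⌋₊)⁻¹ *
        H ^ (M - 2) ≤ yy δ x := by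
  filter_upwards [Real.tendsto_log_atTop.eventually (eventually_growth δ M K hδ0),
    eventually_gt_atTop 0] with x hu hx H hH
  obtain ⟨j, -, -, hlow, hup⟩ := hH
  set u := Real.log x with hu_def
  obtain ⟨h1, h2, h3, h4, h5, h6⟩ := hu
  have hexp : Real.exp u = x := Real.exp_log hx
  rw [hexp] at h4 h5 h6
  have hu0 : 0 < u := by linarith
  have hK' : (2 : ℝ) ≤ K := by exact_mod_cast hK
  have hx1 : 1 ≤ x := by rw [← hexp]; exact Real.one_le_exp hu0.le
  have huδ : 1 ≤ u ^ δ := Real.one_le_rpow h1 hδ0.le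
  set s := u ^ (1 / 2 : ℝ) with hs
  have hs1 : 1 ≤ s := Real.one_le_rpow h1 (by norm_num)
  have hy1 : x * u ^ δ ≤ yy δ x := Nat.le_ceil _
  have hy2 : (yy δ x : ℝ) ≤ 2 * x * u := by
    have : (yy δ x : ℝ) < x * u ^ δ + 1 := Nat.ceil_lt_add_one (by positivity)
    have h' : u ^ δ ≤ u := by
      simpa using Real.rpow_le_rpow_of_exponent_le h1 (show δ ≤ 1 by linarith)
    nlinarith
  set y : ℝ := (yy δ x : ℝ) with hy
  have hyx : x ≤ y := by nlinarith
  have hy0 : 0 < y := by linarith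
  have hz : zz δ x = y * Real.log u ^ 2 / s := rfl
  set z := zz δ x with hz_def
  have hlog2 : 1 ≤ Real.log u ^ 2 := one_le_pow₀ h2
  have hzlow : y / s ≤ z := by
    rw [hz]
    gcongr
    nlinarith
  have hz0 : 0 < z := lt_of_lt_of_le (by positivity) hzlow
  have hHlow : 2 * (K : ℝ) ≤ H := by
    refine le_trans ?_ hlow
    rw [le_div_iff₀ hx]
    nlinarith
  have hH1 : 1 ≤ H := by linarith
  have hH0 : 0 < H := by linarith
  have hHs : H ≤ s := by
    refine hup.trans ?_
    rw [div_le_iff₀ (by positivity)]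
    rw [div_le_iff₀ (by positivity)] at hzlow
    nlinarith [mul_pos (by linarith : 0 < s) hz0]
  have hHM : H ^ M ≤ u ^ (M / 2) := by
    calc H ^ M ≤ s ^ M := Real.rpow_le_rpow hH0.le hHs (by linarith)
      _ = u ^ (M / 2) := by rw [hs, ← Real.rpow_mul hu0.le]; congr 1; ring
  set R := ⌊(K : ℝ) * H⌋₊ with hR
  have hRH : (R : ℝ) ≤ K * H := Nat.floor_le (by positivity)
  refine ⟨hHlow, ?_, ?_, ?_⟩
  · refine hHM.trans (le_trans ?_ hzlow)
    rw [le_div_iff₀ (by positivity), hs, ← Real.rpow_add hu0]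
    exact h4.trans hyx
  · intro q hq
    simp only [QH, Finset.mem_filter, Finset.mem_range] at hq
    obtain ⟨-, hqp, hq1, hq2⟩ := hq
    refine ⟨hqp, lt_of_le_of_lt ?_ hq1, ?_⟩
    · rw [le_div_iff₀ (by positivity)] at hup ⊢
      linarith
    · have hq3 : (q : ℝ) * H ≤ y := by rwa [le_div_iff₀ hH0] at hq2
      have h : ((q * R : ℕ) : ℝ) ≤ (((K + 1) * yy δ x : ℕ) : ℝ) := by
        push_cast
        calc (q : ℝ) * R ≤ q * (K * H) := by gcongr
          _ = K * (q * H) := by ring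
          _ ≤ K * y := by gcongr
          _ ≤ (K + 1) * y := by nlinarith
      exact_mod_cast h
  · set k := ⌈3 * u⌉₊ with hk
    have hk1 : 3 * u ≤ k := Nat.le_ceil _
    have hk2 : (k : ℝ) ≤ 4 * u := by
      have : (k : ℝ) < 3 * u + 1 := Nat.ceil_lt_add_one (by positivity)
      linarith
    have hzk : z ≤ 2 ^ (k + 1) := by
      have hzx : z ≤ x * x := by
        calc z ≤ y * Real.log u ^ 2 := by
              rw [hz]; exact div_le_self (by positivity) hs1
          _ ≤ (2 * x * u) * u ^ 2 := by
              have : Real.log u ≤ u := (Real.log_le_sub_one_of_pos hu0).trans (by linarith)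
              gcongr
          _ = x * (2 * u ^ (3 : ℝ)) := by
              rw [show (3 : ℝ) = ((3 : ℕ) : ℝ) by norm_num, Real.rpow_natCast]; ring
          _ ≤ x * x := by gcongr
      have h2k : x * x ≤ (2 : ℝ) ^ (k + 1) := by
        rw [← hexp]; exact mul_self_exp_le_two_pow hk1
      exact hzx.trans h2k
    have hσ : (sigBetween (H ^ M) z ^ R)⁻¹ ≤ Real.exp (K * s * (9 + 8 * Real.log (4 * u))) := by
      have hlogk : Real.log k ≤ Real.log (4 * u) := Real.log_le_log (by linarith) hk2
      have hlog4 : 0 ≤ Real.log (4 * u) := Real.log_nonneg (by linarith)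
      calc (sigBetween (H ^ M) z ^ R)⁻¹ = (sigBetween (H ^ M) z)⁻¹ ^ R := (inv_pow _ _).symm
        _ ≤ Real.exp (9 + 8 * Real.log k) ^ R :=
            pow_le_pow_left₀ (inv_pos.2 (sigBetween_pos _ _)).le (inv_sigBetween_le hzk) R
        _ = Real.exp (R * (9 + 8 * Real.log k)) := by rw [← Real.exp_nat_mul]
        _ ≤ Real.exp (R * (9 + 8 * Real.log (4 * u))) := by gcongr
        _ ≤ _ := by
            refine Real.exp_le_exp.2 (mul_le_mul_of_nonneg_right ?_ (by linarith))
            exact hRH.trans (by gcongr)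
    have hHM2 : H ^ (M - 2) ≤ u ^ (M / 2) :=
      (Real.rpow_le_rpow_of_exponent_le hH1 (by linarith)).trans hHM
    refine le_trans ?_ (h6.trans hyx)
    have hRs : (R : ℝ) ≤ K * s := hRH.trans (by gcongr)
    have hσ0 : 0 < (sigBetween (H ^ M) z ^ R)⁻¹ := inv_pos.2 (pow_pos (sigBetween_pos _ _) R)
    gcongr

lemma abs_sub_moments_le {a₁ a₂ L α β : ℝ} (hL : 0 ≤ L) (hα : 0 ≤ α) (hβ : 0 ≤ β)
    (hlow : L * (1 - α) ≤ a₁) (hup : a₂ ≤ L ^ 2 * (1 + β)) (hsq : a₁ ^ 2 ≤ a₂) :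
    |a₁ - L| ≤ (2 * α + β) * L ∧ |a₂ - L ^ 2| ≤ (2 * α + β) * L ^ 2 := by
  have h1 : a₁ ≤ L * (1 + β) := by
    refine le_of_sq_le_sq ?_ (by positivity)
    nlinarith [mul_nonneg (sq_nonneg L) hβ, mul_nonneg (sq_nonneg L) (mul_nonneg hβ hβ)]
  have h2 : L ^ 2 * (1 - 2 * α) ≤ a₂ := by
    rcases le_or_gt α 1 with h | h
    · have h3 : (L * (1 - α)) ^ 2 ≤ a₁ ^ 2 :=
        pow_le_pow_left₀ (mul_nonneg hL (by linarith)) hlow 2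
      nlinarith [mul_nonneg (sq_nonneg L) (sq_nonneg α)]
    · nlinarith [sq_nonneg L, sq_nonneg a₁]
  rw [abs_le, abs_le]
  refine ⟨⟨?_, ?_⟩, ?_, ?_⟩
  · nlinarith [mul_nonneg hL hα, mul_nonneg hL hβ]
  · nlinarith [mul_nonneg hL hα, mul_nonneg hL hβ]
  · nlinarith [mul_nonneg (sq_nonneg L) hα, mul_nonneg (sq_nonneg L) hβ]
  · nlinarith [mul_nonneg (sq_nonneg L) hα, mul_nonneg (sq_nonneg L) hβ]

lemma average_sum_pow_two_ge_sq {P : ℕ} (hP : 0 < P) (X : ℕ → ℝ) :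
    ((1 / (P : ℝ)) * ∑ b ∈ Finset.range P, X b) ^ 2 ≤
      (1 / (P : ℝ)) * ∑ b ∈ Finset.range P, X b ^ 2 := by
  have hP' : (0 : ℝ) < P := by exact_mod_cast hP
  have h := sq_sum_le_card_mul_sum_sq (s := Finset.range P) (f := X)
  rw [Finset.card_range] at h
  rw [mul_pow, one_div, inv_pow, inv_mul_le_iff₀ (by positivity)]
  refine h.trans_eq ?_
  field_simp

lemma le_average_sum_lamStar {M z H : ℝ} {K L : ℕ} (hwz : H ^ M ≤ z) (hH : 2 * (K : ℝ) ≤ H)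
    (hK : 2 ≤ K) (hM : 2 ≤ M) (N : ℤ) (q : ℕ) {I : Finset ℤ} (hI : I.card = L) :
    (L : ℝ) * (1 - 2 * (K : ℝ) ^ 2 / H ^ (M - 2)) ≤
      (1 / (PP z : ℝ)) * ∑ b ∈ Finset.range (PP z), ∑ n ∈ I, lamStar M z K N (b : ℤ) H q n := by
  have hK' : (2 : ℝ) ≤ K := by exact_mod_cast hK
  have hH0 : 0 < H := by linarith
  have hw : 0 < H ^ M := by positivity
  have hRH : (⌊(K : ℝ) * H⌋₊ : ℝ) ≤ K * H := Nat.floor_le (by positivity)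
  have hsplit : H ^ M = H ^ (M - 2) * H ^ 2 := by
    rw [← Real.rpow_natCast H 2, ← Real.rpow_add hH0]; congr 1; push_cast; ring
  have h1 : 1 ≤ H ^ (M - 2) := Real.one_le_rpow (by linarith) (by linarith)
  have hR : (⌊(K : ℝ) * H⌋₊ : ℝ) ≤ H ^ M := by
    rw [hsplit]; nlinarith [sq_nonneg H]
  rw [Finset.sum_comm, Finset.mul_sum, ← hI, ← nsmul_eq_mul]
  refine Finset.card_nsmul_le_sum _ _ _ fun n _ => le_trans ?_ (le_average_lamStar hw hwz hR N q n)
  have h2 : (⌊(K : ℝ) * H⌋₊ : ℝ) ^ 2 * (2 / H ^ M) ≤ 2 * (K : ℝ) ^ 2 / H ^ (M - 2) := by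
    calc (⌊(K : ℝ) * H⌋₊ : ℝ) ^ 2 * (2 / H ^ M) ≤ (K * H) ^ 2 * (2 / H ^ M) := by gcongr
      _ = _ := by rw [hsplit]; field_simp
  linarith

lemma average_sum_lamStar_sq_le {M z H : ℝ} {K L : ℕ} (hwz : H ^ M ≤ z) (hH : 2 * (K : ℝ) ≤ H)
    (hK : 2 ≤ K) (hM : 2 ≤ M) (N : ℤ) {q : ℕ} (hq : q.Prime) (hzq : z < q)
    (hqR : q * ⌊(K : ℝ) * H⌋₊ ≤ L)
    (hdiag : (2 * (⌊(K : ℝ) * H⌋₊ : ℝ) + 1) * (sigBetween (H ^ M) z ^ ⌊(K : ℝ) * H⌋₊)⁻¹ *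
        H ^ (M - 2) ≤ L) {c : ℝ} (hc : c = 12 * (K : ℝ) ^ 2 * Real.exp (6 * (K : ℝ) ^ 2)) (a : ℤ) :
    (1 / (PP z : ℝ)) * ∑ b ∈ Finset.range (PP z),
        (∑ n ∈ Finset.Ico a (a + L), lamStar M z K N (b : ℤ) H q n) ^ 2 ≤
      (L : ℝ) ^ 2 * (1 + (4 * (c * Real.exp c) + 1) / H ^ (M - 2)) := by
  have hK' : (2 : ℝ) ≤ K := by exact_mod_cast hK
  have hH0 : 0 < H := by linarith
  have hw : 0 < H ^ M := by positivity
  set R := ⌊(K : ℝ) * H⌋₊ with hRdef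
  have hRH : (R : ℝ) ≤ K * H := Nat.floor_le (by positivity)
  have hR1 : (1 : ℝ) ≤ R := by
    have : 1 ≤ R := Nat.le_floor (by push_cast; nlinarith)
    exact_mod_cast this
  have hsplit : H ^ M = H ^ (M - 2) * H ^ 2 := by
    rw [← Real.rpow_natCast H 2, ← Real.rpow_add hH0]; congr 1; push_cast; ring
  have h1 : 1 ≤ H ^ (M - 2) := Real.one_le_rpow (by linarith) (by linarith)
  have hHsq : H ^ 2 ≤ H ^ M := by rw [hsplit]; nlinarith [sq_nonneg H]
  have hR : 2 * (R : ℝ) ≤ H ^ M := by nlinarith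
  set D : ℝ := 6 * (K : ℝ) ^ 2 * H ^ 2 * Real.exp (6 * (K : ℝ) ^ 2) with hD
  have hDle : ∀ p ∈ primesBetween (H ^ M) z,
      ((1 - 1 / (p : ℝ)) ^ (R * (2 * R + 1)))⁻¹ ≤ 1 + D / p := by
    intro p hp
    obtain ⟨hpp, hwp, -⟩ := mem_primesBetween.1 hp
    refine inv_pow_le_one_add_div hpp ?_ ?_
    · push_cast
      have : (R : ℝ) ^ 2 ≤ (K * H) ^ 2 := by gcongr
      nlinarith
    · have : H ^ 2 ≤ p := hHsq.trans hwp.le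
      gcongr
  have hsum := sum_pairBound_le (z := z) hw (by positivity) hDle hqR a
  have hc0 : 0 ≤ c := by rw [hc]; positivity
  have hexpo : D * (2 / H ^ M) = c / H ^ (M - 2) := by
    rw [hD, hc, hsplit]; field_simp; ring
  have hexp : Real.exp (D * (2 / H ^ M)) - 1 ≤ c * Real.exp c / H ^ (M - 2) := by
    rw [hexpo]
    have hle : c / H ^ (M - 2) ≤ c := div_le_self hc0 h1
    calc Real.exp (c / H ^ (M - 2)) - 1 ≤ c / H ^ (M - 2) * Real.exp (c / H ^ (M - 2)) := by
          linarith [exp_le_one_add_mul_exp (c / H ^ (M - 2))]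
      _ ≤ c / H ^ (M - 2) * Real.exp c := by gcongr
      _ = _ := by ring
  have hdiag' : (2 * (R : ℝ) + 1) * (sigBetween (H ^ M) z ^ R)⁻¹ ≤ L / H ^ (M - 2) := by
    rwa [le_div_iff₀ (by positivity)]
  set I := Finset.Ico a (a + L)
  calc (1 / (PP z : ℝ)) * ∑ b ∈ Finset.range (PP z), (∑ n ∈ I, lamStar M z K N (b : ℤ) H q n) ^ 2
      = ∑ n₂ ∈ I, ∑ n₁ ∈ I, (1 / (PP z : ℝ)) * ∑ b ∈ Finset.range (PP z),
          lamStar M z K N (b : ℤ) H q n₁ * lamStar M z K N (b : ℤ) H q n₂ := by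
        simp only [sq, Finset.mul_sum, Finset.sum_mul]
        exact Finset.sum_comm.trans (Finset.sum_congr rfl fun _ _ => Finset.sum_comm)
    _ ≤ ∑ n₂ ∈ I, ∑ n₁ ∈ I, pairBound (H ^ M) z q R (n₁ - n₂) :=
        Finset.sum_le_sum fun n₂ _ => Finset.sum_le_sum fun n₁ _ =>
          average_lamStar_mul_le hwz hR N hq hzq n₁ n₂
    _ ≤ _ := hsum
    _ ≤ L * (L * (1 + 4 * (c * Real.exp c / H ^ (M - 2))) + L / H ^ (M - 2)) := by gcongr
    _ = _ := by ring

theorem stmt4 (δ M : ℝ) (K : ℕ) (ξ : ℝ)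
    (hδ0 : 0 < δ) (hδ1 : δ < 1/2) (hK : 2 ≤ K) (hξ : 1 < ξ) (hM : 2 ≤ M) :
    ∃ C : ℝ, 0 < C ∧ ∃ x₀ : ℝ, ∀ x ≥ x₀, ∀ N : ℤ, ∀ H ∈ frakH2 δ ξ x, ∀ j ∈ ({1, 2} : Set ℕ),
      |EE δ x (fun b => ∑ q ∈ QH δ ξ x H,
            (∑ n ∈ Finset.Ico (-(yy δ x : ℤ)) ((K * yy δ x : ℕ) : ℤ),
              lamStar M (zz δ x) K N b H q n) ^ j) -
          (((K : ℝ) + 1) * (yy δ x : ℝ)) ^ j * ((QH δ ξ x H).card : ℝ)| ≤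
        C * (((K : ℝ) + 1) * (yy δ x : ℝ)) ^ j * ((QH δ ξ x H).card : ℝ) / H ^ (M - 2) := by
  set c : ℝ := 12 * (K : ℝ) ^ 2 * Real.exp (6 * (K : ℝ) ^ 2) with hc
  have hc0 : 0 ≤ c := by positivity
  set C : ℝ := 2 * (2 * (K : ℝ) ^ 2) + (4 * (c * Real.exp c) + 1) with hC
  obtain ⟨x₀, hx₀⟩ := Filter.eventually_atTop.1 (eventually_scales δ M K ξ hδ0 hδ1 hξ hM hK)
  refine ⟨C, by positivity, x₀, fun x hx N H hH j hj => ?_⟩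
  obtain ⟨hHK, hwz, hQ, hdiag⟩ := hx₀ x hx H hH
  have hK' : (2 : ℝ) ≤ K := by exact_mod_cast hK
  have hη : 0 < H ^ (M - 2) := Real.rpow_pos_of_pos (by linarith) _
  set z := zz δ x with hz
  set L : ℕ := (K + 1) * yy δ x with hL
  have hLr : ((K : ℝ) + 1) * (yy δ x : ℝ) = L := by rw [hL]; push_cast; rfl
  have hIco : ((K * yy δ x : ℕ) : ℤ) = -(yy δ x : ℤ) + L := by rw [hL]; push_cast; ring
  rw [hLr, hIco]
  set I := Finset.Ico (-(yy δ x : ℤ)) (-(yy δ x : ℤ) + L) with hI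
  have hIc : I.card = L := by simp [hI]
  have hyL : (yy δ x : ℝ) ≤ L := by rw [← hLr]; nlinarith [Nat.cast_nonneg (α := ℝ) (yy δ x)]
  have hq : ∀ q ∈ QH δ ξ x H, |(1 / (PP z : ℝ)) * ∑ b ∈ Finset.range (PP z),
      (∑ n ∈ I, lamStar M z K N (b : ℤ) H q n) ^ j - (L : ℝ) ^ j| ≤ C / H ^ (M - 2) * (L : ℝ) ^ j := by
    intro q hqQ
    obtain ⟨hqp, hzq, hqR⟩ := hQ q hqQ
    have hmom := abs_sub_moments_le (Nat.cast_nonneg L) (by positivity) (by positivity)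
      (le_average_sum_lamStar hwz hHK hK hM N q hIc)
      (average_sum_lamStar_sq_le hwz hHK hK hM N hqp hzq hqR (hdiag.trans hyL) hc (-(yy δ x : ℤ)))
      (average_sum_pow_two_ge_sq (PP_pos z) _)
    have hCeq : 2 * (2 * (K : ℝ) ^ 2 / H ^ (M - 2)) + (4 * (c * Real.exp c) + 1) / H ^ (M - 2)
        = C / H ^ (M - 2) := by rw [hC]; ring
    rw [hCeq] at hmom
    rcases hj with rfl | rfl
    · simpa only [pow_one] using hmom.1
    · exact hmom.2
  calc _ = |∑ q ∈ QH δ ξ x H, ((1 / (PP z : ℝ)) * ∑ b ∈ Finset.range (PP z),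
        (∑ n ∈ I, lamStar M z K N (b : ℤ) H q n) ^ j - (L : ℝ) ^ j)| := by
        rw [EE, Finset.sum_comm, Finset.mul_sum, Finset.sum_sub_distrib, Finset.sum_const,
          nsmul_eq_mul, mul_comm ((L : ℝ) ^ j)]
    _ ≤ ∑ q ∈ QH δ ξ x H, C / H ^ (M - 2) * (L : ℝ) ^ j :=
        (Finset.abs_sum_le_sum_abs _ _).trans (Finset.sum_le_sum hq)
    _ = _ := by rw [Finset.sum_const, nsmul_eq_mul]; ring
end

section
/- There exists an absolute constant C₅ > 0 such that for every δ ∈ (0, 1/2] there exists y₀ with the following property. Let y ≥ y₀ be a real number, V a finite set with #V ≤ y, s an integer with 1 ≤ s ≤ y, and for each i ∈ {1,…,s} let 𝐞_i be a random subset of V, given by a probability mass function μ_i on the subsets of V. Assume: (1) every subset in the support of μ_i has at most (ln y)^{1/2}/ln ln y elements, for each i; (2) for every v ∈ V and every i, P(v ∈ 𝐞_i) ≤ y^{−1/2−1/100}; (3) for all distinct v, v' ∈ V, ∑_{i=1}^s P(v ∈ 𝐞_i and v' ∈ 𝐞_i) ≤ y^{−1/2}; (4) there exist reals C₄ and η with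 10^{2δ} ≤ C₄ ≤ 100 and η ≥ 1/((ln y)^δ·ln ln y) such that |∑_{i=1}^s P(v ∈ 𝐞_i) − C₄| ≤ η for every v ∈ V. Then there exist subsets e_i ⊆ V with μ_i(e_i) > 0 for each i, such that #(V \ ⋃_{i=1}^s e_i) ≤ C₅·η·#V. -/
open scoped Classical

/-- The indices in `S` can be labelled by `T` so that, for every `v` and `j`, the label `j` receives
roughly the proportion `p j` of the weight at `v`. -/
theorem exists_balanced_labelling {ι V κ : Type*} [Fintype V] (T : Finset κ) (p : κ → ℝ)
    (hp : ∀ j ∈ T, 0 ≤ p j) (hp1 : ∑ j ∈ T, p j = 1) (a : ι → V → ℝ) (S : Finset ι) :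
    ∃ τ : ι → κ, (∑ v, ∑ j ∈ T, (∑ i ∈ S, ((if τ i = j then 1 else 0) - p j) * a i v) ^ 2) ≤
      2 * ∑ i ∈ S, ∑ v, a i v ^ 2 := by
  have hT : T.Nonempty := by
    by_contra h
    rw [Finset.not_nonempty_iff_eq_empty] at h
    simp [h] at hp1
  have hple : ∀ j ∈ T, p j ≤ 1 := fun j hj => hp1 ▸ Finset.single_le_sum hp hj
  induction S using Finset.induction_on with
  | empty => exact ⟨fun _ => hT.choose, by simp⟩
  | insert i S hi ih =>
    obtain ⟨τ, hτ⟩ := ih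
    set D : V → κ → ℝ := fun v j => ∑ i ∈ S, ((if τ i = j then 1 else 0) - p j) * a i v with hD
    have key : ∃ l ∈ T, ∑ v, ∑ j ∈ T, D v j * (((if l = j then 1 else 0) - p j) * a i v) ≤ 0 := by
      by_contra! hcon
      have hz : ∑ l ∈ T, p l * ∑ v, ∑ j ∈ T, D v j * (((if l = j then 1 else 0) - p j) * a i v)
          = 0 := by
        simp_rw [Finset.mul_sum]
        rw [Finset.sum_comm]
        refine Finset.sum_eq_zero fun v _ => ?_
        rw [Finset.sum_comm]
        refine Finset.sum_eq_zero fun j hj => ?_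
        have : ∀ l ∈ T, p l * (D v j * (((if l = j then 1 else 0) - p j) * a i v)) =
            (if l = j then p l else 0) * (D v j * a i v) - p l * (p j * (D v j * a i v)) := by
          intro l _
          split_ifs <;> ring
        rw [Finset.sum_congr rfl this, Finset.sum_sub_distrib, ← Finset.sum_mul, ← Finset.sum_mul,
          hp1, Finset.sum_ite_eq' T j p, if_pos hj]
        ring
      have hnn : ∀ l ∈ T, 0 ≤ p l * ∑ v, ∑ j ∈ T,
          D v j * (((if l = j then 1 else 0) - p j) * a i v) :=
        fun l hl => mul_nonneg (hp l hl) (hcon l hl).le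
      have h0 : ∀ l ∈ T, p l = 0 := fun l hl =>
        (mul_eq_zero.1 ((Finset.sum_eq_zero_iff_of_nonneg hnn).1 hz l hl)).resolve_right
          (hcon l hl).ne'
      rw [Finset.sum_eq_zero h0] at hp1
      exact zero_ne_one hp1
    obtain ⟨l, hl, hcross⟩ := key
    refine ⟨Function.update τ i l, ?_⟩
    have hsplit : ∀ v, ∀ j ∈ T, (∑ i' ∈ insert i S,
        ((if Function.update τ i l i' = j then 1 else 0) - p j) * a i' v) ^ 2 =
        D v j ^ 2 + 2 * (D v j * (((if l = j then 1 else 0) - p j) * a i v)) +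
          ((if l = j then 1 else 0) - p j) ^ 2 * a i v ^ 2 := by
      intro v j _
      rw [Finset.sum_insert hi, Function.update_self]
      have : ∑ i' ∈ S, ((if Function.update τ i l i' = j then 1 else 0) - p j) * a i' v = D v j :=
        Finset.sum_congr rfl fun i' hi' => by
          rw [Function.update_of_ne (ne_of_mem_of_not_mem hi' hi)]
      rw [this]
      ring
    have hsq : ∑ j ∈ T, ((if l = j then (1 : ℝ) else 0) - p j) ^ 2 ≤ 2 := by
      have : ∀ j ∈ T, ((if l = j then (1 : ℝ) else 0) - p j) ^ 2 ≤
          (if l = j then 1 else 0) + p j := by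
        intro j hj
        have h1 := hp j hj
        have h2 := hple j hj
        split_ifs <;> nlinarith
      refine (Finset.sum_le_sum this).trans ?_
      rw [Finset.sum_add_distrib, hp1, Finset.sum_ite_eq, if_pos hl]
      norm_num
    calc _ = ∑ v, ∑ j ∈ T, (D v j ^ 2 +
            2 * (D v j * (((if l = j then 1 else 0) - p j) * a i v)) +
            ((if l = j then 1 else 0) - p j) ^ 2 * a i v ^ 2) :=
          Finset.sum_congr rfl fun v _ => Finset.sum_congr rfl (hsplit v)
      _ = ∑ v, ∑ j ∈ T, D v j ^ 2 +
            2 * ∑ v, ∑ j ∈ T, D v j * (((if l = j then 1 else 0) - p j) * a i v) +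
            ∑ v, (∑ j ∈ T, ((if l = j then 1 else 0) - p j) ^ 2) * a i v ^ 2 := by
          simp only [Finset.sum_add_distrib, Finset.mul_sum, Finset.sum_mul]
      _ ≤ 2 * ∑ i ∈ S, ∑ v, a i v ^ 2 + 2 * 0 + ∑ v, 2 * a i v ^ 2 := by
          gcongr
      _ = _ := by
          rw [Finset.sum_insert hi, ← Finset.mul_sum]
          ring

theorem abs_prod_sub_prod_le {ι : Type*} (S : Finset ι) (x y : ι → ℝ)
    (hx : ∀ i ∈ S, 0 ≤ x i ∧ x i ≤ 1) (hy : ∀ i ∈ S, 0 ≤ y i ∧ y i ≤ 1) :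
    |∏ i ∈ S, x i - ∏ i ∈ S, y i| ≤ ∑ i ∈ S, |x i - y i| := by
  induction S using Finset.induction_on with
  | empty => simp
  | insert i S hi ih =>
    rw [Finset.prod_insert hi, Finset.prod_insert hi, Finset.sum_insert hi]
    have hx' := fun k hk => hx k (Finset.mem_insert_of_mem hk)
    have hy' := fun k hk => hy k (Finset.mem_insert_of_mem hk)
    have hi1 := hx i (Finset.mem_insert_self _ _)
    have h1 : |∏ k ∈ S, y k| ≤ 1 := by
      rw [abs_of_nonneg (Finset.prod_nonneg fun k hk => (hy' k hk).1)]
      exact Finset.prod_le_one (fun k hk => (hy' k hk).1) fun k hk => (hy' k hk).2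
    calc |x i * ∏ k ∈ S, x k - y i * ∏ k ∈ S, y k|
        = |(x i - y i) * ∏ k ∈ S, y k + x i * (∏ k ∈ S, x k - ∏ k ∈ S, y k)| := by ring_nf
      _ ≤ |x i - y i| * |∏ k ∈ S, y k| + |x i| * |∏ k ∈ S, x k - ∏ k ∈ S, y k| := by
          refine (abs_add_le _ _).trans ?_
          rw [abs_mul, abs_mul]
      _ ≤ |x i - y i| * 1 + 1 * ∑ k ∈ S, |x k - y k| := by
          gcongr
          · rw [abs_of_nonneg hi1.1]; exact hi1.2
          · exact ih hx' hy'
      _ = _ := by ring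

section Weights

variable {V : Type} [Fintype V]

/-- The total weight of the sets that contain `v`. -/
noncomputable def vertexWeight (c : Finset V → ℝ) (v : V) : ℝ := ∑ e, if v ∈ e then c e else 0

/-- The total weight of the sets that contain both `v` and `v'`. -/
noncomputable def pairWeight (c : Finset V → ℝ) (v v' : V) : ℝ :=
  ∑ e, if v ∈ e ∧ v' ∈ e then c e else 0

/-- The total weight of the sets that avoid `f`. -/
noncomputable def avoidWeight (c : Finset V → ℝ) (f : Finset V) : ℝ :=
  ∑ e, if Disjoint f e then c e else 0

theorem avoidWeight_insert (c : Finset V → ℝ) (f : Finset V) (v : V) :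
    avoidWeight c (insert v f) =
      avoidWeight c f - vertexWeight c v + ∑ e, if v ∈ e ∧ ¬ Disjoint f e then c e else 0 := by
  unfold avoidWeight vertexWeight
  rw [← Finset.sum_sub_distrib, ← Finset.sum_add_distrib]
  refine Finset.sum_congr rfl fun e _ => ?_
  by_cases h1 : v ∈ e <;> by_cases h2 : Disjoint f e <;> simp [Finset.disjoint_insert_left, h1, h2]

theorem abs_avoidWeight_sub_prod_le (c : Finset V → ℝ) (hc : ∀ e, 0 ≤ c e) (hc1 : ∑ e, c e = 1)
    (f : Finset V) :
    |avoidWeight c f - ∏ v ∈ f, (1 - vertexWeight c v)| ≤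
      ∑ v ∈ f, ∑ v' ∈ f.erase v, (pairWeight c v v' + vertexWeight c v * vertexWeight c v') := by
  have hv0 : ∀ v, 0 ≤ vertexWeight c v := fun v =>
    Finset.sum_nonneg fun e _ => by split_ifs <;> simp [hc]
  have hv1 : ∀ v, vertexWeight c v ≤ 1 := fun v => by
    rw [← hc1]
    exact Finset.sum_le_sum fun e _ => by split_ifs <;> simp [hc]
  have hp0 : ∀ v v', 0 ≤ pairWeight c v v' := fun v v' =>
    Finset.sum_nonneg fun e _ => by split_ifs <;> simp [hc]
  induction f using Finset.induction_on with
  | empty => simp [avoidWeight, hc1]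
  | insert u f hu ih =>
    have hQ : ∑ e, (if u ∈ e ∧ ¬ Disjoint f e then c e else 0) ≤ ∑ v ∈ f, pairWeight c u v := by
      unfold pairWeight
      rw [Finset.sum_comm]
      refine Finset.sum_le_sum fun e _ => ?_
      split_ifs with h
      · obtain ⟨w, hw, hwe⟩ := Finset.not_disjoint_iff.1 h.2
        calc c e = if u ∈ e ∧ w ∈ e then c e else 0 := by simp [h.1, hwe]
          _ ≤ _ := Finset.single_le_sum (f := fun w => if u ∈ e ∧ w ∈ e then c e else 0)
              (fun w _ => by split_ifs <;> simp [hc]) hw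
      · exact Finset.sum_nonneg fun w _ => by split_ifs <;> simp [hc]
    have hQ0 : 0 ≤ ∑ e, (if u ∈ e ∧ ¬ Disjoint f e then c e else 0) :=
      Finset.sum_nonneg fun e _ => by split_ifs <;> simp [hc]
    have hprod : ∀ g : Finset V, 0 ≤ 1 - ∏ v ∈ g, (1 - vertexWeight c v) ∧
        1 - ∏ v ∈ g, (1 - vertexWeight c v) ≤ ∑ v ∈ g, vertexWeight c v := by
      intro g
      constructor
      · linarith [Finset.prod_le_one (s := g) (f := fun v => 1 - vertexWeight c v)
          (fun v _ => by linarith [hv1 v]) (fun v _ => by linarith [hv0 v])]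
      · have h := abs_prod_sub_prod_le g (fun _ => 1) (fun v => 1 - vertexWeight c v) (by simp)
          (fun v _ => ⟨by linarith [hv1 v], by linarith [hv0 v]⟩)
        simp only [Finset.prod_const_one, sub_sub_cancel, abs_of_nonneg (hv0 _)] at h
        exact (le_abs_self _).trans h
    have hrhs : ∑ v ∈ f, ∑ v' ∈ f.erase v,
          (pairWeight c v v' + vertexWeight c v * vertexWeight c v') +
        ∑ v' ∈ f, (pairWeight c u v' + vertexWeight c u * vertexWeight c v') ≤
        ∑ v ∈ insert u f, ∑ v' ∈ (insert u f).erase v,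
          (pairWeight c v v' + vertexWeight c v * vertexWeight c v') := by
      rw [Finset.sum_insert hu, Finset.erase_insert hu, add_comm]
      gcongr with v hv
      · intro v' _ _
        have := mul_nonneg (hv0 v) (hv0 v')
        have := hp0 v v'
        positivity
      · exact Finset.subset_insert u f
    refine le_trans ?_ hrhs
    rw [avoidWeight_insert, Finset.prod_insert hu]
    have hd : |vertexWeight c u * (∏ v ∈ f, (1 - vertexWeight c v) - 1) +
        ∑ e, (if u ∈ e ∧ ¬ Disjoint f e then c e else 0)| ≤
        ∑ v' ∈ f, (pairWeight c u v' + vertexWeight c u * vertexWeight c v') := by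
      rw [Finset.sum_add_distrib, ← Finset.mul_sum]
      obtain ⟨h1, h2⟩ := hprod f
      have h3 := mul_nonneg (hv0 u) h1
      have h4 := mul_le_mul_of_nonneg_left h2 (hv0 u)
      have h5 := h3.trans h4
      rw [abs_le]
      constructor <;> nlinarith
    calc _ = |(avoidWeight c f - ∏ v ∈ f, (1 - vertexWeight c v)) +
          (vertexWeight c u * (∏ v ∈ f, (1 - vertexWeight c v) - 1) +
        ∑ e, (if u ∈ e ∧ ¬ Disjoint f e then c e else 0))| := by ring_nf
      _ ≤ _ := (abs_add_le _ _).trans (add_le_add ih hd)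

end Weights

theorem sum_ite_forall_prod {ι κ : Type*} [Fintype ι] [Fintype κ] (P : ι → κ → Prop)
    (h : ι → κ → ℝ) :
    ∑ x : ι → κ, (if ∀ i, P i (x i) then ∏ i, h i (x i) else 0) =
      ∏ i, ∑ k, if P i k then h i k else 0 := by
  rw [Fintype.prod_sum]
  refine Finset.sum_congr rfl fun x _ => ?_
  rw [Finset.prod_ite_zero]
  simp

section RandomEdges

variable {V ι : Type} [Fintype V] [Fintype ι]

theorem vertexWeight_nonneg {c : Finset V → ℝ} (hc : ∀ e, 0 ≤ c e) (v : V) :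
    0 ≤ vertexWeight c v :=
  Finset.sum_nonneg fun e _ => by split_ifs <;> simp [hc]

theorem vertexWeight_le_sum {c : Finset V → ℝ} (hc : ∀ e, 0 ≤ c e) (v : V) :
    vertexWeight c v ≤ ∑ e, c e :=
  Finset.sum_le_sum fun e _ => by split_ifs <;> simp [hc]

theorem avoidWeight_singleton (c : Finset V → ℝ) (v : V) :
    avoidWeight c {v} = ∑ e, c e - vertexWeight c v := by
  unfold avoidWeight vertexWeight
  rw [← Finset.sum_sub_distrib]
  refine Finset.sum_congr rfl fun e _ => ?_
  by_cases h1 : v ∈ e <;> simp [h1]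

theorem abs_prod_avoidWeight_sub_le (a : ι → Finset V → ℝ) (ha : ∀ i e, 0 ≤ a i e)
    (ha1 : ∀ i, ∑ e, a i e = 1) (κ : ℝ) (hκ0 : 0 ≤ κ)
    (hκ : ∀ v v', v ≠ v' →
      ∑ i, (pairWeight (a i) v v' + vertexWeight (a i) v * vertexWeight (a i) v') ≤ κ)
    (f : Finset V) :
    |∏ i, avoidWeight (a i) f - ∏ v ∈ f, ∏ i, (1 - vertexWeight (a i) v)| ≤
      (f.card : ℝ) ^ 2 * κ := by
  have hav : ∀ i, 0 ≤ avoidWeight (a i) f ∧ avoidWeight (a i) f ≤ 1 := fun i =>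
    ⟨Finset.sum_nonneg fun e _ => by split_ifs <;> simp [ha], by
      rw [← ha1 i]; exact Finset.sum_le_sum fun e _ => by split_ifs <;> simp [ha]⟩
  have hv : ∀ i v, 0 ≤ 1 - vertexWeight (a i) v ∧ 1 - vertexWeight (a i) v ≤ 1 := fun i v =>
    ⟨by linarith [vertexWeight_le_sum (ha i) v, ha1 i], by
      linarith [vertexWeight_nonneg (ha i) v]⟩
  rw [Finset.prod_comm]
  refine (abs_prod_sub_prod_le _ _ _ (fun i _ => hav i) (fun i _ =>
    ⟨Finset.prod_nonneg fun v _ => (hv i v).1,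
      Finset.prod_le_one (fun v _ => (hv i v).1) fun v _ => (hv i v).2⟩)).trans ?_
  calc _ ≤ ∑ i, ∑ v ∈ f, ∑ v' ∈ f.erase v,
        (pairWeight (a i) v v' + vertexWeight (a i) v * vertexWeight (a i) v') :=
        Finset.sum_le_sum fun i _ => abs_avoidWeight_sub_prod_le (a i) (ha i) (ha1 i) f
    _ = ∑ v ∈ f, ∑ v' ∈ f.erase v, ∑ i,
        (pairWeight (a i) v v' + vertexWeight (a i) v * vertexWeight (a i) v') := by
        rw [Finset.sum_comm]
        exact Finset.sum_congr rfl fun v _ => Finset.sum_comm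
    _ ≤ ∑ v ∈ f, ∑ v' ∈ f.erase v, κ :=
        Finset.sum_le_sum fun v _ => Finset.sum_le_sum fun v' hv' =>
          hκ v v' (Finset.ne_of_mem_erase hv').symm
    _ ≤ _ := by
        have h1 : ∀ v ∈ f, ∑ v' ∈ f.erase v, κ ≤ (f.card : ℝ) * κ := fun v _ => by
          rw [Finset.sum_const, nsmul_eq_mul]
          gcongr
          exact Finset.erase_subset v f
        refine (Finset.sum_le_sum h1).trans ?_
        rw [Finset.sum_const, nsmul_eq_mul]
        exact le_of_eq (by ring)

/-- Independent choices `E i ∼ a i`, together with an independent random set `T` that evens out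
the probabilities with which the vertices survive. -/
theorem exists_random_edges (a : ι → Finset V → ℝ) (ha : ∀ i e, 0 ≤ a i e)
    (ha1 : ∀ i, ∑ e, a i e = 1) (β κ : ℝ) (hβ : 0 < β) (hκ0 : 0 ≤ κ)
    (hs : ∀ v, β ≤ ∏ i, (1 - vertexWeight (a i) v))
    (hκ : ∀ v v', v ≠ v' →
      ∑ i, (pairWeight (a i) v v' + vertexWeight (a i) v * vertexWeight (a i) v') ≤ κ) :
    ∃ (Ω : Type) (_ : Fintype Ω) (p : Ω → ℝ) (E : Ω → ι → Finset V) (T : Ω → Finset V),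
      (∀ ω, 0 ≤ p ω) ∧ ∑ ω, p ω = 1 ∧ (∀ ω, p ω ≠ 0 → ∀ i, a i (E ω i) ≠ 0) ∧
      (∀ f, |∑ ω, (if (∀ i, Disjoint f (E ω i)) ∧ f ⊆ T ω then p ω else 0) - β ^ f.card| ≤
        (f.card : ℝ) ^ 2 * κ) ∧
      ∀ v, ∑ ω, (if (∀ i, v ∉ E ω i) ∧ v ∉ T ω then p ω else 0) =
        ∏ i, (1 - vertexWeight (a i) v) - β := by
  set t : V → ℝ := fun v => β / ∏ i, (1 - vertexWeight (a i) v) with ht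
  have hspos : ∀ v, 0 < ∏ i, (1 - vertexWeight (a i) v) := fun v => hβ.trans_le (hs v)
  have ht0 : ∀ v, 0 ≤ t v := fun v => div_nonneg hβ.le (hspos v).le
  have ht1 : ∀ v, t v ≤ 1 := fun v => (div_le_one (hspos v)).2 (hs v)
  set h : V → Bool → ℝ := fun v x => if x = true then t v else 1 - t v with hh
  set T : (ι → Finset V) × (V → Bool) → Finset V :=
    fun ω => Finset.univ.filter fun v => ω.2 v = true with hT
  have factor : ∀ (P : ι → Finset V → Prop) (Q : V → Bool → Prop)
      (R : (ι → Finset V) × (V → Bool) → Prop) (A : ι → ℝ) (B : ℝ),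
      (∀ ω, R ω ↔ (∀ i, P i (ω.1 i)) ∧ (∀ v, Q v (ω.2 v))) →
      (∀ i, (∑ e, if P i e then a i e else 0) = A i) →
      (∏ v, ∑ x, if Q v x then h v x else 0) = B →
      ∑ ω : (ι → Finset V) × (V → Bool), (if R ω then
        (∏ i, a i (ω.1 i)) * ∏ v, h v (ω.2 v) else 0) = (∏ i, A i) * B := by
    intro P Q R A B hR hA hB
    rw [← Finset.prod_congr rfl fun i _ => hA i, ← hB, ← sum_ite_forall_prod,
      ← sum_ite_forall_prod, Finset.sum_mul_sum, Fintype.sum_prod_type]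
    refine Finset.sum_congr rfl fun x _ => Finset.sum_congr rfl fun y _ => ?_
    rw [if_congr (hR _) rfl rfl]
    by_cases h1 : ∀ i, P i (x i) <;> by_cases h2 : ∀ v, Q v (y v) <;> simp [h1, h2]
  refine ⟨(ι → Finset V) × (V → Bool), inferInstance,
    fun ω => (∏ i, a i (ω.1 i)) * ∏ v, h v (ω.2 v), fun ω => ω.1, T, ?_, ?_, ?_, ?_, ?_⟩
  · intro ω
    refine mul_nonneg (Finset.prod_nonneg fun i _ => ha i _) (Finset.prod_nonneg fun v _ => ?_)
    simp only [hh]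
    split_ifs
    · exact ht0 v
    · linarith [ht1 v]
  · have := factor (fun _ _ => True) (fun _ _ => True) (fun _ => True) (fun _ => 1) 1 (by simp)
      (by simp [ha1]) (by simp [hh])
    simpa using this
  · intro ω hω i hi
    exact hω (mul_eq_zero_of_left (Finset.prod_eq_zero (Finset.mem_univ i) hi) _)
  · intro f
    have h2 : ∏ v, ∑ x, (if v ∈ f → x = true then h v x else 0) = ∏ v ∈ f, t v := by
      rw [← Finset.prod_subset (Finset.subset_univ f)]
      · exact Finset.prod_congr rfl fun v hv => by simp [hv, hh]
      · intro v _ hv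
        simp [hv, hh]
    have h1 := factor (fun _ e => Disjoint f e) (fun v x => v ∈ f → x = true)
      (fun ω => (∀ i, Disjoint f (ω.1 i)) ∧ f ⊆ T ω) (fun i => avoidWeight (a i) f) (∏ v ∈ f, t v)
      (fun ω => by simp [hT, Finset.subset_iff]) (fun i => by unfold avoidWeight; congr!)
      (by rw [← h2]; congr!)
    have h3 : β ^ f.card = (∏ v ∈ f, ∏ i, (1 - vertexWeight (a i) v)) * ∏ v ∈ f, t v := by
      rw [← Finset.prod_mul_distrib, ← Finset.prod_const]
      exact Finset.prod_congr rfl fun v _ => (mul_div_cancel₀ β (hspos v).ne').symm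
    have h4 : 0 ≤ ∏ v ∈ f, t v := Finset.prod_nonneg fun v _ => ht0 v
    have h5 : ∏ v ∈ f, t v ≤ 1 := Finset.prod_le_one (fun v _ => ht0 v) fun v _ => ht1 v
    have h6 : |(∏ i, avoidWeight (a i) f) * ∏ v ∈ f, t v - β ^ f.card| ≤ (f.card : ℝ) ^ 2 * κ := by
      rw [h3, ← sub_mul, abs_mul, abs_of_nonneg h4]
      exact (mul_le_of_le_one_right (abs_nonneg _) h5).trans
        (abs_prod_avoidWeight_sub_le a ha ha1 κ hκ0 hκ f)
    rw [← h1] at h6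
    convert h6 using 5
  · intro v
    have h2 : ∏ u, ∑ x, (if u = v → x = false then h u x else 0) = 1 - t v := by
      rw [Finset.prod_eq_single v]
      · simp [hh]
      · intro u _ hu
        simp [hu, hh]
      · simp
    have h1 := factor (fun _ e => v ∉ e) (fun u x => u = v → x = false)
      (fun ω => (∀ i, v ∉ ω.1 i) ∧ v ∉ T ω) (fun i => 1 - vertexWeight (a i) v) (1 - t v)
      (fun ω => by simp [hT]) (fun i => by
        rw [← ha1 i, ← avoidWeight_singleton]
        simp [avoidWeight]
        congr!)
      (by rw [← h2]; congr!)
    have h3 : (∏ i, (1 - vertexWeight (a i) v)) * (1 - t v) =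
        ∏ i, (1 - vertexWeight (a i) v) - β := by
      rw [mul_sub, mul_one, mul_div_cancel₀ β (hspos v).ne']
    rw [← h3, ← h1]
    congr!

end RandomEdges

theorem mul_one_sub_div_max {x L : ℝ} (hL : 0 < L) :
    x * (1 - L / max L x) = max (x - L) 0 := by
  rcases le_total x L with h | h
  · rw [max_eq_left h, div_self hL.ne', max_eq_right (by linarith)]
    ring
  · rw [max_eq_right h, max_eq_left (by linarith)]
    have : x ≠ 0 := (hL.trans_le h).ne'
    field_simp

section Thinning

variable {V ι : Type} [Fintype V] [Fintype ι]

theorem sum_vertexWeight (c : Finset V → ℝ) : ∑ v, vertexWeight c v = ∑ e, (e.card : ℝ) * c e := by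
  unfold vertexWeight
  rw [Finset.sum_comm]
  refine Finset.sum_congr rfl fun e _ => ?_
  simp

theorem vertexWeight_mono {c d : Finset V → ℝ} (h : ∀ e, c e ≤ d e) (v : V) :
    vertexWeight c v ≤ vertexWeight d v :=
  Finset.sum_le_sum fun e _ => by split_ifs <;> simp [h]

theorem pairWeight_mono {c d : Finset V → ℝ} (h : ∀ e, c e ≤ d e) (v v' : V) :
    pairWeight c v v' ≤ pairWeight d v v' :=
  Finset.sum_le_sum fun e _ => by split_ifs <;> simp [h]

/-- Any system of weights can be thinned so that the total weight of each `w i` is at most `1` and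
the total weight at each vertex is at most `L`, and the loss is controlled by the excesses. -/
theorem exists_thinning (w : ι → Finset V → ℝ) (hw : ∀ i e, 0 ≤ w i e) (R : ℕ)
    (hR : ∀ i e, w i e ≠ 0 → e.card ≤ R) (L : ℝ) (hL : 0 < L) :
    ∃ a : ι → Finset V → ℝ, (∀ i e, 0 ≤ a i e) ∧ (∀ i e, a i e ≤ w i e) ∧
      (∀ i, ∑ e, a i e ≤ 1) ∧ (∀ v, ∑ i, vertexWeight (a i) v ≤ L) ∧
      ∑ v, (∑ i, vertexWeight (w i) v - ∑ i, vertexWeight (a i) v) ≤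
        R * (∑ i, max (∑ e, w i e - 1) 0 + ∑ v, max (∑ i, vertexWeight (w i) v - L) 0) := by
  set X : ι → ℝ := fun i => ∑ e, w i e with hX
  set Z : V → ℝ := fun v => ∑ i, vertexWeight (w i) v with hZ
  set g : ι → ℝ := fun i => 1 / max 1 (X i) with hg
  set h : V → ℝ := fun v => L / max L (Z v) with hh
  have hg0 : ∀ i, 0 ≤ g i := fun i => by positivity
  have hg1 : ∀ i, g i ≤ 1 := fun i => div_le_one_of_le₀ (le_max_left _ _) (by positivity)
  have hh0 : ∀ v, 0 ≤ h v := fun v => by positivity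
  have hh1 : ∀ v, h v ≤ 1 := fun v => div_le_one_of_le₀ (le_max_left _ _) (by positivity)
  have hpr0 : ∀ e : Finset V, 0 ≤ ∏ v ∈ e, h v := fun e => Finset.prod_nonneg fun v _ => hh0 v
  have hpr1 : ∀ e : Finset V, ∏ v ∈ e, h v ≤ 1 := fun e =>
    Finset.prod_le_one (fun v _ => hh0 v) fun v _ => hh1 v
  have hprv : ∀ (e : Finset V), ∀ v ∈ e, ∏ v ∈ e, h v ≤ h v := fun e v hv => by
    rw [← Finset.mul_prod_erase e h hv]
    exact mul_le_of_le_one_right (hh0 v) (hpr1 _)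
  have hle : ∀ i e, w i e * (g i * ∏ v ∈ e, h v) ≤ w i e := fun i e =>
    mul_le_of_le_one_right (hw i e) (mul_le_one₀ (hg1 i) (hpr0 e) (hpr1 e))
  refine ⟨fun i e => w i e * (g i * ∏ v ∈ e, h v), fun i e =>
    mul_nonneg (hw i e) (mul_nonneg (hg0 i) (hpr0 e)), hle, ?_, ?_, ?_⟩
  · intro i
    calc ∑ e, w i e * (g i * ∏ v ∈ e, h v) ≤ ∑ e, w i e * g i :=
          Finset.sum_le_sum fun e _ =>
            mul_le_mul_of_nonneg_left (mul_le_of_le_one_right (hg0 i) (hpr1 e)) (hw i e)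
      _ = X i / max 1 (X i) := by rw [← Finset.sum_mul, hg]; ring
      _ ≤ 1 := div_le_one_of_le₀ (le_max_right _ _) (by positivity)
  · intro v
    calc ∑ i, vertexWeight (fun e => w i e * (g i * ∏ v ∈ e, h v)) v
        ≤ ∑ i, vertexWeight (w i) v * h v := by
          refine Finset.sum_le_sum fun i _ => ?_
          unfold vertexWeight
          rw [Finset.sum_mul]
          refine Finset.sum_le_sum fun e _ => ?_
          split_ifs with hv
          · exact mul_le_mul_of_nonneg_left
              ((mul_le_of_le_one_left (hpr0 e) (hg1 i)).trans (hprv e v hv)) (hw i e)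
          · simp
      _ = L * (Z v / max L (Z v)) := by rw [← Finset.sum_mul, hh]; ring
      _ ≤ L := mul_le_of_le_one_right hL.le
          (div_le_one_of_le₀ (le_max_right _ _) (by positivity))
  · have hloss : ∀ i e, w i e - w i e * (g i * ∏ v ∈ e, h v) ≤
        w i e * (1 - g i) + ∑ v ∈ e, w i e * (1 - h v) := by
      intro i e
      have h1 := abs_prod_sub_prod_le e (fun _ => 1) h (by simp) (fun v _ => ⟨hh0 v, hh1 v⟩)
      simp only [Finset.prod_const_one, abs_of_nonneg (sub_nonneg.2 (hh1 _))] at h1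
      have h2 := (le_abs_self _).trans h1
      have h3 : 1 - g i * ∏ v ∈ e, h v ≤ (1 - g i) + ∑ v ∈ e, (1 - h v) := by
        nlinarith [hg0 i, hg1 i, hpr0 e, hpr1 e]
      rw [← Finset.mul_sum, ← mul_add]
      calc _ = w i e * (1 - g i * ∏ v ∈ e, h v) := by ring
        _ ≤ _ := mul_le_mul_of_nonneg_left h3 (hw i e)
    calc _ = ∑ i, ∑ e, (e.card : ℝ) * (w i e - w i e * (g i * ∏ v ∈ e, h v)) := by
          rw [Finset.sum_sub_distrib, Finset.sum_comm, Finset.sum_comm (s := Finset.univ (α := V)),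
            ← Finset.sum_sub_distrib]
          refine Finset.sum_congr rfl fun i _ => ?_
          rw [sum_vertexWeight, sum_vertexWeight, ← Finset.sum_sub_distrib]
          simp only [mul_sub]
      _ ≤ ∑ i, ∑ e, (R : ℝ) * (w i e * (1 - g i) + ∑ v ∈ e, w i e * (1 - h v)) := by
          refine Finset.sum_le_sum fun i _ => Finset.sum_le_sum fun e _ => ?_
          by_cases hwe : w i e = 0
          · simp [hwe]
          · exact mul_le_mul (by exact_mod_cast hR i e hwe) (hloss i e)
              (sub_nonneg.2 (hle i e)) (Nat.cast_nonneg R)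
      _ = R * (∑ i, X i * (1 - g i) + ∑ v, Z v * (1 - h v)) := by
          simp only [← Finset.mul_sum, Finset.sum_add_distrib]
          congr 2
          · exact Finset.sum_congr rfl fun i _ => by rw [Finset.sum_mul]
          · simp only [hZ, vertexWeight, Finset.sum_mul]
            rw [Finset.sum_comm (s := Finset.univ (α := V))]
            refine Finset.sum_congr rfl fun i _ => ?_
            rw [Finset.sum_comm (s := Finset.univ (α := V))]
            refine Finset.sum_congr rfl fun e _ => ?_
            rw [Finset.mul_sum]
            simp [ite_mul]
      _ = _ := by
          simp only [hg, hh, mul_one_sub_div_max hL, mul_one_sub_div_max one_pos]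
          rfl

theorem exp_neg_le_one_sub {x α : ℝ} (hx : 0 ≤ x) (hxα : x ≤ α) (hα : α < 1) :
    Real.exp (-(x / (1 - α))) ≤ 1 - x := by
  have h1 : 0 < 1 - x := by linarith
  have h2 : (1 - x)⁻¹ ≤ Real.exp (x / (1 - α)) := by
    have h3 := Real.add_one_le_exp (x / (1 - α))
    have h4 : x / (1 - x) ≤ x / (1 - α) := by gcongr
    have h5 : (1 - x)⁻¹ = x / (1 - x) + 1 := by field_simp; ring
    linarith
  rw [Real.exp_neg]
  exact inv_le_of_inv_le₀ h1 h2

/-- One round of random choices, for weights `w` that are close to being regular. -/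
theorem exists_random_round (W : Finset V) (w : ι → Finset V → ℝ) (hw : ∀ i e, 0 ≤ w i e)
    (hw0 : ∀ i, w i ∅ = 0) (R : ℕ)
    (hR : ∀ i e, w i e ≠ 0 → e.card ≤ R) (α b κ : ℝ) (hα : α < 1) (hα0 : 0 ≤ α)
    (hb : 1 < b) (hκ0 : 0 ≤ κ) (hvα : ∀ i v, vertexWeight (w i) v ≤ α)
    (hκ : ∀ v v', v ≠ v' → ∑ i, pairWeight (w i) v v' ≤ κ) :
    ∃ (Ω : Type) (_ : Fintype Ω) (p : Ω → ℝ) (E : Ω → ι → Finset V) (T : Ω → Finset V),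
      (∀ ω, 0 ≤ p ω) ∧ ∑ ω, p ω = 1 ∧ (∀ ω, p ω ≠ 0 → ∀ i, E ω i = ∅ ∨ w i (E ω i) ≠ 0) ∧
      (∀ f, |∑ ω, (if (∀ i, Disjoint f (E ω i)) ∧ f ⊆ T ω then p ω else 0) - b⁻¹ ^ f.card| ≤
        (f.card : ℝ) ^ 2 * (κ + α * Real.log b)) ∧
      ∑ v ∈ W, ∑ ω, (if (∀ i, v ∉ E ω i) ∧ v ∉ T ω then p ω else 0) ≤
        ∑ v ∈ W, (Real.log b - ∑ i, vertexWeight (w i) v) +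
        R * (∑ i, max (∑ e, w i e - 1) 0 +
          ∑ v, max (∑ i, vertexWeight (w i) v - (1 - α) * Real.log b) 0) := by
  have hlog : 0 < Real.log b := Real.log_pos hb
  have hL : 0 < (1 - α) * Real.log b := mul_pos (by linarith) hlog
  have hLle : (1 - α) * Real.log b ≤ Real.log b := mul_le_of_le_one_left hlog.le (by linarith)
  obtain ⟨a, ha, haw, ha1, haL, hloss⟩ := exists_thinning w hw R hR _ hL
  -- complete `a i` to a probability distribution by putting the missing mass on the empty set
  set c : ι → Finset V → ℝ := fun i e => if e = ∅ then 1 - ∑ e, a i e else a i e with hc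
  have ha0 : ∀ i, a i ∅ = 0 := fun i => le_antisymm ((haw i ∅).trans (hw0 i).le) (ha i ∅)
  have hcv : ∀ i, vertexWeight (c i) = vertexWeight (a i) := fun i => by
    funext v
    refine Finset.sum_congr rfl fun e _ => ?_
    split_ifs with h
    · simp [hc, Finset.ne_empty_of_mem h]
    · rfl
  have hcp : ∀ i, pairWeight (c i) = pairWeight (a i) := fun i => by
    funext v v'
    refine Finset.sum_congr rfl fun e _ => ?_
    split_ifs with h
    · simp [hc, Finset.ne_empty_of_mem h.1]
    · rfl
  have hc0 : ∀ i e, 0 ≤ c i e := fun i e => by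
    simp only [hc]
    split_ifs
    · linarith [ha1 i]
    · exact ha i e
  have hc1 : ∀ i, ∑ e, c i e = 1 := fun i => by
    have : ∀ e, c i e = (if e = ∅ then 1 - ∑ e, a i e else 0) + a i e := fun e => by
      simp only [hc]
      split_ifs with h
      · simp [h, ha0]
      · simp
    simp [this, Finset.sum_add_distrib]
  have hvb : ∀ i v, vertexWeight (a i) v ≤ α := fun i v =>
    (vertexWeight_mono (haw i) v).trans (hvα i v)
  have hexp : Real.exp (-Real.log b) = b⁻¹ := by rw [Real.exp_neg, Real.exp_log (by linarith)]
  obtain ⟨Ω, hΩ, p, E, T, hp, hp1, hE, hf, hv⟩ := exists_random_edges c hc0 hc1 b⁻¹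
    (κ + α * Real.log b) (by positivity) (by positivity) (by
      intro v
      calc b⁻¹ = Real.exp (-Real.log b) := hexp.symm
        _ ≤ Real.exp (-((∑ i, vertexWeight (a i) v) / (1 - α))) := by
          rw [Real.exp_le_exp, neg_le_neg_iff, div_le_iff₀ (by linarith)]
          linarith [haL v]
        _ = ∏ i, Real.exp (-(vertexWeight (a i) v / (1 - α))) := by
          rw [← Real.exp_sum, Finset.sum_neg_distrib, Finset.sum_div]
        _ ≤ _ := Finset.prod_le_prod (fun i _ => (Real.exp_pos _).le) fun i _ => by
          rw [hcv]
          exact exp_neg_le_one_sub (vertexWeight_nonneg (ha i) v) (hvb i v) hα)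
    (by
      intro v v' hvv
      simp only [hcv, hcp]
      rw [Finset.sum_add_distrib]
      refine add_le_add ((Finset.sum_le_sum fun i _ => pairWeight_mono (haw i) v v').trans
        (hκ v v' hvv)) ?_
      calc _ ≤ ∑ i, α * vertexWeight (a i) v' := Finset.sum_le_sum fun i _ =>
            mul_le_mul_of_nonneg_right (hvb i v) (vertexWeight_nonneg (ha i) v')
        _ ≤ _ := by
            rw [← Finset.mul_sum]
            exact mul_le_mul_of_nonneg_left ((haL v').trans hLle) hα0)
  refine ⟨Ω, hΩ, p, E, T, hp, hp1, ?_, hf, ?_⟩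
  · intro ω hω i
    by_cases h : E ω i = ∅
    · exact Or.inl h
    · right
      have := hE ω hω i
      simp only [hc, if_neg h] at this
      exact ((lt_of_le_of_ne (ha i _) this.symm).trans_le (haw i _)).ne'
  · have hwaste : ∀ v, ∏ i, (1 - vertexWeight (c i) v) - b⁻¹ ≤
        Real.log b - ∑ i, vertexWeight (a i) v := by
      intro v
      have h1 : ∏ i, (1 - vertexWeight (c i) v) ≤ Real.exp (-∑ i, vertexWeight (a i) v) := by
        rw [← Finset.sum_neg_distrib, Real.exp_sum]
        refine Finset.prod_le_prod (fun i _ => ?_) fun i _ => ?_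
        · rw [hcv]; linarith [hvb i v]
        · rw [hcv]; linarith [Real.add_one_le_exp (-vertexWeight (a i) v)]
      set S := ∑ i, vertexWeight (a i) v
      have hS0 : 0 ≤ S := Finset.sum_nonneg fun i _ => vertexWeight_nonneg (ha i) v
      have hSL : S ≤ Real.log b := (haL v).trans hLle
      have h2 : Real.exp (-S) - Real.exp (-Real.log b) ≤ Real.log b - S := by
        have h3 := Real.add_one_le_exp (S - Real.log b)
        have h4 : Real.exp (-Real.log b) = Real.exp (-S) * Real.exp (S - Real.log b) := by
          rw [← Real.exp_add]; ring_nf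
        have h5 : Real.exp (-S) ≤ 1 := Real.exp_le_one_iff.2 (by linarith)
        have h6 := Real.exp_pos (-S)
        rw [h4]
        nlinarith
      rw [hexp] at h2
      linarith
    have hsub : ∀ v, 0 ≤ ∑ i, vertexWeight (w i) v - ∑ i, vertexWeight (a i) v := fun v =>
      sub_nonneg.2 (Finset.sum_le_sum fun i _ => vertexWeight_mono (haw i) v)
    calc _ ≤ ∑ v ∈ W, (Real.log b - ∑ i, vertexWeight (a i) v) :=
          Finset.sum_le_sum fun v _ => (hv v).trans_le (hwaste v)
      _ = ∑ v ∈ W, (Real.log b - ∑ i, vertexWeight (w i) v) +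
          ∑ v ∈ W, (∑ i, vertexWeight (w i) v - ∑ i, vertexWeight (a i) v) := by
          rw [← Finset.sum_add_distrib]
          exact Finset.sum_congr rfl fun v _ => by ring
      _ ≤ _ := by
          gcongr
          exact (Finset.sum_le_sum_of_subset_of_nonneg (Finset.subset_univ W)
            fun v _ _ => hsub v).trans hloss

end Thinning

section Moments

variable {Ω V K : Type} [Fintype Ω] [Fintype K]

/-- The probability that the random set `W` contains `f`. -/
noncomputable def survival (p : Ω → ℝ) (W : Ω → Finset V) (f : Finset V) : ℝ :=
  ∑ ω, if f ⊆ W ω then p ω else 0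

theorem pow_mul_survival_sub_le {p : Ω → ℝ} {W : Ω → Finset V} {t ξ : ℝ} {n : ℕ} (ht : 1 ≤ t)
    (hq : ∀ f : Finset V, f.card ≤ n → |survival p W f - t⁻¹ ^ f.card| ≤ ξ) (f : Finset V)
    (hf : f.card ≤ n) : |t ^ f.card * survival p W f - 1| ≤ t ^ f.card * ξ := by
  have h0 : 0 < t ^ f.card := by positivity
  have h1 : t ^ f.card * survival p W f - 1 = t ^ f.card * (survival p W f - t⁻¹ ^ f.card) := by
    rw [mul_sub, ← mul_pow, mul_inv_cancel₀ (by linarith), one_pow]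
  rw [h1, abs_mul, abs_of_pos h0]
  exact mul_le_mul_of_nonneg_left (hq f hf) h0.le

theorem sum_mul_sum_ite_eq (p : Ω → ℝ) (W : Ω → Finset V) (c : K → ℝ) (F : K → Finset V) (t : ℝ) :
    ∑ ω, p ω * ∑ k, c k * (if F k ⊆ W ω then t ^ (F k).card else 0) =
      ∑ k, c k * (t ^ (F k).card * survival p W (F k)) := by
  simp only [survival, Finset.mul_sum]
  rw [Finset.sum_comm]
  refine Finset.sum_congr rfl fun k _ => Finset.sum_congr rfl fun ω _ => ?_
  split_ifs <;> ring

theorem first_moment_ge {p : Ω → ℝ} {W : Ω → Finset V} {t B ξ : ℝ} {R n : ℕ} (hRn : R ≤ n)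
    (ht : 1 ≤ t) (htB : t ^ R ≤ B) (hξ : 0 ≤ ξ)
    (hq : ∀ f : Finset V, f.card ≤ n → |survival p W f - t⁻¹ ^ f.card| ≤ ξ) (c : K → ℝ)
    (hc : ∀ k, 0 ≤ c k) (F : K → Finset V) (hF : ∀ k, c k ≠ 0 → (F k).card ≤ R) :
    (1 - ξ * B) * ∑ k, c k ≤
      ∑ ω, p ω * ∑ k, c k * (if F k ⊆ W ω then t ^ (F k).card else 0) := by
  rw [sum_mul_sum_ite_eq, Finset.mul_sum]
  refine Finset.sum_le_sum fun k _ => ?_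
  by_cases hk : c k = 0
  · simp [hk]
  have h1 := (abs_le.1 (pow_mul_survival_sub_le ht hq (F k) ((hF k hk).trans hRn))).1
  have h2 : t ^ (F k).card * ξ ≤ B * ξ := by
    gcongr
    exact (pow_le_pow_right₀ ht (hF k hk)).trans htB
  rw [mul_comm]
  exact mul_le_mul_of_nonneg_left (by linarith) (hc k)

theorem second_moment_le {p : Ω → ℝ} {W : Ω → Finset V} {t B ξ : ℝ} {R : ℕ}
    (ht : 1 ≤ t) (htB : t ^ R ≤ B) (hξ : 0 ≤ ξ)
    (hq : ∀ f : Finset V, f.card ≤ 2 * R → |survival p W f - t⁻¹ ^ f.card| ≤ ξ) (c : K → ℝ)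
    (hc : ∀ k, 0 ≤ c k) (F : K → Finset V) (f₀ : Finset V) (hf₀ : f₀.card ≤ R)
    (hF₀ : ∀ k, c k ≠ 0 → f₀ ⊆ F k) (hF : ∀ k, c k ≠ 0 → (F k).card ≤ R) :
    ∑ ω, p ω * (if f₀ ⊆ W ω then (∑ k, c k * (if F k ⊆ W ω then t ^ (F k).card else 0) -
      (∑ k, c k) * t ^ f₀.card) ^ 2 else 0) ≤
      4 * ξ * B ^ 2 * (∑ k, c k) ^ 2 +
        B * ∑ k, ∑ k', if F k ∩ F k' ≠ f₀ then c k * c k' else 0 := by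
  set D := ∑ k, c k with hD
  set u := t ^ f₀.card with hu
  set S : Ω → ℝ := fun ω => ∑ k, c k * (if F k ⊆ W ω then t ^ (F k).card else 0) with hS
  have hD0 : 0 ≤ D := Finset.sum_nonneg fun k _ => hc k
  have hu1 : 1 ≤ u := one_le_pow₀ ht
  have huB : u ≤ B := (pow_le_pow_right₀ ht hf₀).trans htB
  have hB1 : 1 ≤ B := hu1.trans huB
  have hS0 : ∀ ω, ¬ f₀ ⊆ W ω → S ω = 0 := fun ω hω => Finset.sum_eq_zero fun k _ => by
    by_cases hk : c k = 0
    · simp [hk]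
    · rw [if_neg fun h => hω ((hF₀ k hk).trans h), mul_zero]
  have hpt : ∀ ω, p ω * (if f₀ ⊆ W ω then (S ω - D * u) ^ 2 else 0) =
      p ω * S ω ^ 2 - 2 * D * u * (p ω * S ω) + D ^ 2 * u ^ 2 * (if f₀ ⊆ W ω then p ω else 0) := by
    intro ω
    split_ifs with h
    · ring
    · rw [hS0 ω h]; ring
  have hfst : (1 - ξ * B) * D ≤ ∑ ω, p ω * S ω :=
    first_moment_ge (by omega) ht htB hξ hq c hc F hF
  have hzero : u ^ 2 * survival p W f₀ ≤ u + B ^ 2 * ξ := by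
    have h1 := (abs_le.1 (pow_mul_survival_sub_le ht hq f₀ (by omega))).2
    rw [← hu] at h1
    have h2 : u * u * ξ ≤ B * B * ξ := by gcongr
    nlinarith
  have hsnd : ∑ ω, p ω * S ω ^ 2 ≤ u * D ^ 2 + ξ * B ^ 2 * D ^ 2 +
      B * ∑ k, ∑ k', if F k ∩ F k' ≠ f₀ then c k * c k' else 0 := by
    have hexp : ∑ ω, p ω * S ω ^ 2 = ∑ k, ∑ k', c k * c k' *
        (t ^ ((F k).card + (F k').card) * survival p W (F k ∪ F k')) := by
      simp only [hS, sq, Finset.sum_mul_sum]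
      simp only [survival, Finset.mul_sum]
      rw [Finset.sum_comm]
      refine Finset.sum_congr rfl fun k _ => ?_
      rw [Finset.sum_comm]
      refine Finset.sum_congr rfl fun k' _ => Finset.sum_congr rfl fun ω _ => ?_
      by_cases h1 : F k ⊆ W ω <;> by_cases h2 : F k' ⊆ W ω <;>
        simp [Finset.union_subset_iff, h1, h2]
      ring
    have hterm : ∀ k k', c k * c k' *
        (t ^ ((F k).card + (F k').card) * survival p W (F k ∪ F k')) ≤
        (u + ξ * B ^ 2) * (c k * c k') + B * (if F k ∩ F k' ≠ f₀ then c k * c k' else 0) := by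
      intro k k'
      by_cases hk : c k = 0
      · simp [hk]
      by_cases hk' : c k' = 0
      · simp [hk']
      have hF1 := hF k hk
      have hF2 := hF k' hk'
      have hcard := Finset.card_union_add_card_inter (F k) (F k')
      have hUc : (F k ∪ F k').card ≤ 2 * R := (Finset.card_union_le _ _).trans (by omega)
      have hIc : (F k ∩ F k').card ≤ R := (Finset.card_le_card Finset.inter_subset_left).trans hF1
      have h1 := (abs_le.1 (pow_mul_survival_sub_le ht hq (F k ∪ F k') hUc)).2
      have h2 : t ^ (F k ∩ F k').card ≤ u + (if F k ∩ F k' ≠ f₀ then B else 0) := by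
        split_ifs with h
        · linarith [pow_le_pow_right₀ ht hIc]
        · rw [not_not.1 h]; simp [hu]
      have h3 : t ^ ((F k).card + (F k').card) ≤ B ^ 2 := by
        rw [pow_add, sq]
        have hk1 := (pow_le_pow_right₀ ht hF1).trans htB
        have hk2 := (pow_le_pow_right₀ ht hF2).trans htB
        gcongr
      have h4 : t ^ ((F k).card + (F k').card) * survival p W (F k ∪ F k') ≤
          u + ξ * B ^ 2 + (if F k ∩ F k' ≠ f₀ then B else 0) := by
        have h5 : 0 < t ^ (F k ∩ F k').card := by positivity
        rw [← hcard, pow_add] at h3 ⊢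
        have h6 := mul_le_mul_of_nonneg_left h1 h5.le
        have h7 := mul_le_mul_of_nonneg_right h3 hξ
        nlinarith
      calc _ ≤ c k * c k' * (u + ξ * B ^ 2 + (if F k ∩ F k' ≠ f₀ then B else 0)) :=
            mul_le_mul_of_nonneg_left h4 (mul_nonneg (hc k) (hc k'))
        _ = _ := by split_ifs <;> ring
    rw [hexp]
    refine (Finset.sum_le_sum fun k _ => Finset.sum_le_sum fun k' _ => hterm k k').trans ?_
    simp only [Finset.sum_add_distrib, ← Finset.mul_sum]
    rw [← Finset.sum_mul, ← hD]
    exact le_of_eq (by ring)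
  rw [Finset.sum_congr rfl fun ω _ => hpt ω]
  simp only [Finset.sum_add_distrib, Finset.sum_sub_distrib, ← Finset.mul_sum]
  change _ + D ^ 2 * u ^ 2 * survival p W f₀ ≤ _
  have h1 := mul_le_mul_of_nonneg_left hfst (show 0 ≤ 2 * D * u by positivity)
  have h2 := mul_le_mul_of_nonneg_left hzero (sq_nonneg D)
  have h3 : u * (ξ * B * D ^ 2) ≤ B * (ξ * B * D ^ 2) := by gcongr
  nlinarith

theorem abs_le_sq_div_add {x γ : ℝ} (hγ : 0 < γ) : |x| ≤ x ^ 2 / γ + γ := by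
  have h : |x| * γ ≤ x ^ 2 + γ * γ := by nlinarith [sq_abs x, sq_nonneg (|x| - γ), abs_nonneg x]
  calc |x| = |x| * γ / γ := by field_simp
    _ ≤ (x ^ 2 + γ * γ) / γ := by gcongr
    _ = _ := by field_simp

end Moments

section RoundWeight

variable {V ι : Type}

/-- The weights used in round `j`: only indices labelled `j` and sets inside `W` count, and a set
`e` is boosted by the inverse of its heuristic survival probability `t⁻¹ ^ #e`. -/
noncomputable def roundWeight (μ : ι → Finset V → ℝ) (τ : ι → ℕ) (j : ℕ) (t : ℝ) (W : Finset V)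
    (i : ι) (e : Finset V) : ℝ :=
  if τ i = j ∧ e ≠ ∅ ∧ e ⊆ W then μ i e * t ^ e.card else 0

theorem roundWeight_nonneg {μ : ι → Finset V → ℝ} (hμ : ∀ i e, 0 ≤ μ i e) (τ : ι → ℕ) (j : ℕ)
    {t : ℝ} (ht : 1 ≤ t) (W : Finset V) (i : ι) (e : Finset V) :
    0 ≤ roundWeight μ τ j t W i e := by
  unfold roundWeight
  split_ifs
  · have := hμ i e
    positivity
  · exact le_rfl

theorem ne_zero_of_roundWeight_ne_zero {μ : ι → Finset V → ℝ} {τ : ι → ℕ} {j : ℕ}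
    {t : ℝ} {W : Finset V} {i : ι} {e : Finset V} (h : roundWeight μ τ j t W i e ≠ 0) :
    τ i = j ∧ μ i e ≠ 0 := by
  unfold roundWeight at h
  split_ifs at h with h1
  · exact ⟨h1.1, left_ne_zero_of_mul h⟩
  · exact absurd rfl h

theorem roundWeight_le {μ : ι → Finset V → ℝ} (hμ : ∀ i e, 0 ≤ μ i e) {R : ℕ}
    (hR : ∀ i e, μ i e ≠ 0 → e.card ≤ R) (τ : ι → ℕ) (j : ℕ)
    {t B : ℝ} (ht : 1 ≤ t) (htB : t ^ R ≤ B) (W : Finset V) (i : ι) (e : Finset V) :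
    roundWeight μ τ j t W i e ≤ B * μ i e := by
  have hB : 0 ≤ B := le_trans (by positivity) htB
  unfold roundWeight
  split_ifs
  · by_cases h : μ i e = 0
    · simp [h]
    · rw [mul_comm]
      exact mul_le_mul_of_nonneg_right ((pow_le_pow_right₀ ht (hR i e h)).trans htB) (hμ i e)
  · exact mul_nonneg hB (hμ i e)

theorem sum_roundWeight [Fintype V] (μ : ι → Finset V → ℝ) (τ : ι → ℕ) (j : ℕ) (t : ℝ)
    (W : Finset V) (i : ι) :
    ∑ e, roundWeight μ τ j t W i e =
      ∑ e, (if τ i = j ∧ e ≠ ∅ then μ i e else 0) * (if e ⊆ W then t ^ e.card else 0) := by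
  refine Finset.sum_congr rfl fun e _ => ?_
  by_cases h1 : τ i = j <;> by_cases h2 : e ⊆ W <;> by_cases h3 : e = ∅ <;>
    simp [roundWeight, h1, h2, h3]

end RoundWeight

section Cover

variable {V ι : Type} [Fintype V] [Fintype ι]

/-- A random partial choice of sets `E i`, each of them empty (no choice made) or in the support
of `μ i`, together with a random set `W` of vertices that are still to be covered. -/
structure RandomCover (μ : ι → Finset V → ℝ) where
  Ω : Type
  fintype : Fintype Ω
  p : Ω → ℝ
  W : Ω → Finset V
  E : Ω → ι → Finset V
  nonneg : ∀ ω, 0 ≤ p ω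
  sum_eq_one : ∑ ω, p ω = 1
  eq_empty_or : ∀ ω, p ω ≠ 0 → ∀ i, E ω i = ∅ ∨ μ i (E ω i) ≠ 0

attribute [instance] RandomCover.fintype

/-- The vertices that are neither covered nor still to be covered. -/
noncomputable def RandomCover.lost {μ : ι → Finset V → ℝ} (X : RandomCover μ) (ω : X.Ω) :
    Finset V :=
  Finset.univ \ (X.W ω ∪ Finset.univ.biUnion (X.E ω))

/-- The bound of `exists_random_round` on the number of vertices lost in a round. -/
noncomputable def roundCost (w : ι → Finset V → ℝ) (W : Finset V) (R : ℕ) (l L : ℝ) : ℝ :=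
  ∑ v ∈ W, (l - ∑ i, vertexWeight (w i) v) +
    R * (∑ i, max (∑ e, w i e - 1) 0 + ∑ v, max (∑ i, vertexWeight (w i) v - L) 0)

theorem vertexWeight_const_mul (B : ℝ) (c : Finset V → ℝ) (v : V) :
    vertexWeight (fun e => B * c e) v = B * vertexWeight c v := by
  simp [vertexWeight, Finset.mul_sum]

theorem pairWeight_const_mul (B : ℝ) (c : Finset V → ℝ) (v v' : V) :
    pairWeight (fun e => B * c e) v v' = B * pairWeight c v v' := by
  simp [pairWeight, Finset.mul_sum]

/-- Extending a random cover by one round of random choices. -/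
theorem RandomCover.exists_extension {μ : ι → Finset V → ℝ} (hμ : ∀ i e, 0 ≤ μ i e) {R : ℕ}
    (hR : ∀ i e, μ i e ≠ 0 → e.card ≤ R) (τ : ι → ℕ) (j : ℕ) {t B A b : ℝ} (ht : 1 ≤ t)
    (htB : t ^ R ≤ B) (hA : 0 ≤ A) (hAB : B * A < 1) (hb : 1 < b)
    (hvA : ∀ i v, vertexWeight (μ i) v ≤ A)
    (hpA : ∀ v v', v ≠ v' → ∑ i, pairWeight (μ i) v v' ≤ A) (X : RandomCover μ)
    (hX : ∀ ω i, j ≤ τ i → X.E ω i = ∅) :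
    ∃ Y : RandomCover μ, (∀ ω i, j + 1 ≤ τ i → Y.E ω i = ∅) ∧
      (∀ f, |survival Y.p Y.W f - b⁻¹ ^ f.card * survival X.p X.W f| ≤
        (f.card : ℝ) ^ 2 * (B * A + B * A * Real.log b)) ∧
      ∑ ω, Y.p ω * (Y.lost ω).card ≤ ∑ ω, X.p ω * (X.lost ω).card +
        ∑ ω, X.p ω * roundCost (roundWeight μ τ j t (X.W ω)) (X.W ω) R (Real.log b)
          ((1 - B * A) * Real.log b) := by
  have hB : 0 ≤ B := le_trans (by positivity) htB
  have hround := fun ω => exists_random_round (X.W ω) (roundWeight μ τ j t (X.W ω))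
    (roundWeight_nonneg hμ τ j ht _) (by simp [roundWeight]) R
    (fun i e h => hR i e (ne_zero_of_roundWeight_ne_zero h).2) (B * A) b (B * A) hAB
    (by positivity) hb (by positivity)
    (fun i v => (vertexWeight_mono (roundWeight_le hμ hR τ j ht htB _ i) v).trans (by
      rw [vertexWeight_const_mul]
      exact mul_le_mul_of_nonneg_left (hvA i v) hB))
    (fun v v' h => (Finset.sum_le_sum fun i _ =>
      pairWeight_mono (roundWeight_le hμ hR τ j ht htB _ i) v v').trans (by
      simp only [pairWeight_const_mul, ← Finset.mul_sum]
      exact mul_le_mul_of_nonneg_left (hpA v v' h) hB))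
  choose Ω' hΩ' q E' T hq hq1 hE' hsurv hcost using hround
  set W' : (Σ ω, Ω' ω) → Finset V := fun x =>
    (X.W x.1).filter fun v => (∀ i, v ∉ E' x.1 x.2 i) ∧ v ∈ T x.1 x.2 with hW'
  have hsub : ∀ (f : Finset V) x, f ⊆ W' x ↔
      f ⊆ X.W x.1 ∧ ((∀ i, Disjoint f (E' x.1 x.2 i)) ∧ f ⊆ T x.1 x.2) := by
    intro f x
    simp only [hW', Finset.subset_iff, Finset.mem_filter, Finset.disjoint_left]
    grind
  let Y : RandomCover μ :=
    { Ω := Σ ω, Ω' ω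
      fintype := inferInstance
      p := fun x => X.p x.1 * q x.1 x.2
      W := W'
      E := fun x i => if τ i = j then E' x.1 x.2 i else X.E x.1 i
      nonneg := fun x => mul_nonneg (X.nonneg _) (hq _ _)
      sum_eq_one := by
        rw [Fintype.sum_sigma]
        simp [← Finset.mul_sum, hq1, X.sum_eq_one]
      eq_empty_or := by
        intro x hx i
        split_ifs
        · exact (hE' x.1 x.2 (right_ne_zero_of_mul hx) i).imp_right fun h =>
            (ne_zero_of_roundWeight_ne_zero h).2
        · exact X.eq_empty_or x.1 (left_ne_zero_of_mul hx) i }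
  refine ⟨Y, ?_, ?_, ?_⟩
  · intro x i hi
    change (if τ i = j then E' x.1 x.2 i else X.E x.1 i) = ∅
    rw [if_neg (by omega)]
    exact hX _ _ (by omega)
  · intro f
    have h1 : survival Y.p Y.W f = ∑ ω, (if f ⊆ X.W ω then X.p ω else 0) *
        ∑ x, (if (∀ i, Disjoint f (E' ω x i)) ∧ f ⊆ T ω x then q ω x else 0) := by
      change ∑ x : Σ ω, Ω' ω, (if f ⊆ W' x then X.p x.1 * q x.1 x.2 else 0) = _
      rw [Fintype.sum_sigma]
      refine Finset.sum_congr rfl fun ω _ => ?_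
      rw [Finset.mul_sum]
      refine Finset.sum_congr rfl fun x _ => ?_
      rw [if_congr (hsub f ⟨ω, x⟩) rfl rfl]
      by_cases h2 : f ⊆ X.W ω <;>
        by_cases h3 : (∀ i, Disjoint f (E' ω x i)) ∧ f ⊆ T ω x <;> simp [h2, h3]
    rw [h1, survival, Finset.mul_sum, ← Finset.sum_sub_distrib]
    refine (Finset.abs_sum_le_sum_abs _ _).trans ?_
    calc _ ≤ ∑ ω, X.p ω * ((f.card : ℝ) ^ 2 * (B * A + B * A * Real.log b)) := by
          refine Finset.sum_le_sum fun ω _ => ?_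
          have hl := Real.log_pos hb
          rw [mul_comm (b⁻¹ ^ f.card), ← mul_sub, abs_mul]
          refine mul_le_mul ?_ (hsurv ω f) (abs_nonneg _) (X.nonneg ω)
          split_ifs
          · rw [abs_of_nonneg (X.nonneg ω)]
          · simpa using X.nonneg ω
      _ = _ := by rw [← Finset.sum_mul, X.sum_eq_one, one_mul]
  · have hlost : ∀ x : Σ ω, Ω' ω, Y.p x ≠ 0 → Y.lost x ⊆ X.lost x.1 ∪
        (X.W x.1).filter fun v => (∀ i, v ∉ E' x.1 x.2 i) ∧ v ∉ T x.1 x.2 := by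
      intro x hx v hv
      have hvW : v ∉ W' x := fun h => by
        refine (Finset.mem_sdiff.1 hv).2 (Finset.mem_union_left _ h)
      have hvE : ∀ i, v ∉ if τ i = j then E' x.1 x.2 i else X.E x.1 i := fun i h =>
        (Finset.mem_sdiff.1 hv).2
          (Finset.mem_union_right _ (Finset.mem_biUnion.2 ⟨i, Finset.mem_univ i, h⟩))
      by_cases hvX : v ∈ X.W x.1
      · refine Finset.mem_union_right _ (Finset.mem_filter.2 ⟨hvX, ?_⟩)
        have h1 : ∀ i, v ∉ E' x.1 x.2 i := by
          intro i hi
          rcases hE' x.1 x.2 (right_ne_zero_of_mul hx) i with h | h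
          · simp [h] at hi
          · have := hvE i
            rw [if_pos (ne_zero_of_roundWeight_ne_zero h).1] at this
            exact this hi
        exact ⟨h1, fun h => hvW (Finset.mem_filter.2 ⟨hvX, h1, h⟩)⟩
      · refine Finset.mem_union_left _ (Finset.mem_sdiff.2 ⟨Finset.mem_univ v, fun h => ?_⟩)
        rcases Finset.mem_union.1 h with h | h
        · exact hvX h
        · obtain ⟨i, -, hi⟩ := Finset.mem_biUnion.1 h
          by_cases hij : τ i = j
          · simp [hX x.1 i hij.ge] at hi
          · have := hvE i
            rw [if_neg hij] at this
            exact this hi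
    calc ∑ x, Y.p x * (Y.lost x).card
        ≤ ∑ x : Σ ω, Ω' ω, X.p x.1 * q x.1 x.2 * ((X.lost x.1).card +
          ∑ v ∈ X.W x.1, if (∀ i, v ∉ E' x.1 x.2 i) ∧ v ∉ T x.1 x.2 then (1 : ℝ) else 0) := by
          refine Finset.sum_le_sum fun x _ => ?_
          by_cases hx : Y.p x = 0
          · have h0 : X.p x.1 * q x.1 x.2 = 0 := hx
            rw [hx, h0]
            simp
          · refine mul_le_mul_of_nonneg_left ?_ (Y.nonneg x)
            have h1 := (Finset.card_le_card (hlost x hx)).trans (Finset.card_union_le _ _)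
            rw [Finset.sum_boole]
            exact_mod_cast h1
      _ = ∑ ω, X.p ω * ((X.lost ω).card + ∑ v ∈ X.W ω, ∑ x,
          if (∀ i, v ∉ E' ω x i) ∧ v ∉ T ω x then q ω x else 0) := by
          rw [Fintype.sum_sigma]
          refine Finset.sum_congr rfl fun ω _ => ?_
          simp only [mul_assoc]
          rw [← Finset.mul_sum]
          congr 1
          simp only [mul_add, Finset.sum_add_distrib]
          rw [← Finset.sum_mul, hq1, one_mul, Finset.sum_comm]
          congr 1
          refine Finset.sum_congr rfl fun x _ => ?_
          rw [Finset.mul_sum]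
          exact Finset.sum_congr rfl fun v _ => by split_ifs <;> simp
      _ ≤ ∑ ω, X.p ω * ((X.lost ω).card +
          roundCost (roundWeight μ τ j t (X.W ω)) (X.W ω) R (Real.log b)
            ((1 - B * A) * Real.log b)) := by
          refine Finset.sum_le_sum fun ω _ => mul_le_mul_of_nonneg_left ?_ (X.nonneg ω)
          gcongr
          exact hcost ω
      _ = _ := by simp only [mul_add, Finset.sum_add_distrib]

end Cover

section Deviation

variable {Ω V K : Type} [Fintype Ω] [Fintype K]

theorem sum_sum_inter_ne_le {R : ℕ} {A : ℝ} (c : K → ℝ) (hc : ∀ k, 0 ≤ c k) (F : K → Finset V)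
    (f₀ : Finset V) (hF₀ : ∀ k, c k ≠ 0 → f₀ ⊆ F k) (hF : ∀ k, c k ≠ 0 → (F k).card ≤ R)
    (hA : 0 ≤ A) (hcA : ∀ v, v ∉ f₀ → ∑ k, (if v ∈ F k then c k else 0) ≤ A) :
    ∑ k, ∑ k', (if F k ∩ F k' ≠ f₀ then c k * c k' else 0) ≤ R * A * ∑ k, c k := by
  rw [Finset.mul_sum]
  refine Finset.sum_le_sum fun k _ => ?_
  by_cases hk : c k = 0
  · simp [hk]
  have h1 : ∀ k', (if F k ∩ F k' ≠ f₀ then c k * c k' else 0) ≤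
      c k * ∑ v ∈ F k \ f₀, if v ∈ F k' then c k' else 0 := by
    intro k'
    have h2 : 0 ≤ ∑ v ∈ F k \ f₀, if v ∈ F k' then c k' else 0 :=
      Finset.sum_nonneg fun v _ => by split_ifs <;> simp [hc]
    split_ifs with h
    · refine mul_le_mul_of_nonneg_left ?_ (hc k)
      by_cases hk' : c k' = 0
      · rwa [hk'] at h2 ⊢
      obtain ⟨v, hv, hv'⟩ : ∃ v ∈ F k ∩ F k', v ∉ f₀ := by
        by_contra! hcon
        exact h (Finset.Subset.antisymm hcon (Finset.subset_inter (hF₀ k hk) (hF₀ k' hk')))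
      rw [Finset.mem_inter] at hv
      have h3 := Finset.single_le_sum (f := fun v => if v ∈ F k' then c k' else 0)
        (fun v _ => by split_ifs <;> simp [hc]) (Finset.mem_sdiff.2 ⟨hv.1, hv'⟩)
      simpa [hv.2] using h3
    · exact mul_nonneg (hc k) h2
  calc _ ≤ ∑ k', c k * ∑ v ∈ F k \ f₀, (if v ∈ F k' then c k' else 0) :=
        Finset.sum_le_sum fun k' _ => h1 k'
    _ = c k * ∑ v ∈ F k \ f₀, ∑ k', (if v ∈ F k' then c k' else 0) := by
        rw [← Finset.mul_sum, Finset.sum_comm]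
    _ ≤ c k * ∑ v ∈ F k \ f₀, A := mul_le_mul_of_nonneg_left
        (Finset.sum_le_sum fun v hv => hcA v (Finset.mem_sdiff.1 hv).2) (hc k)
    _ ≤ c k * (R * A) := by
        refine mul_le_mul_of_nonneg_left ?_ (hc k)
        rw [Finset.sum_const, nsmul_eq_mul]
        refine mul_le_mul_of_nonneg_right ?_ hA
        exact_mod_cast (Finset.card_le_card Finset.sdiff_subset).trans (hF k hk)
    _ = _ := mul_comm _ _

/-- A weighted count of the sets surviving in `W`, conditioned on the survival of their common
core `f₀`, is concentrated around its expectation. -/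
theorem sum_abs_sub_le {p : Ω → ℝ} (hp : ∀ ω, 0 ≤ p ω) (hp1 : ∑ ω, p ω = 1)
    {W : Ω → Finset V} {t B ξ : ℝ} {R : ℕ} (ht : 1 ≤ t) (htB : t ^ R ≤ B) (hξ : 0 ≤ ξ)
    (hq : ∀ f : Finset V, f.card ≤ 2 * R → |survival p W f - t⁻¹ ^ f.card| ≤ ξ) (c : K → ℝ)
    (hc : ∀ k, 0 ≤ c k) (F : K → Finset V) (f₀ : Finset V) (hf₀ : f₀.card ≤ R)
    (hF₀ : ∀ k, c k ≠ 0 → f₀ ⊆ F k) (hF : ∀ k, c k ≠ 0 → (F k).card ≤ R) {A γ : ℝ}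
    (hA : 0 ≤ A) (hcA : ∀ v, v ∉ f₀ → ∑ k, (if v ∈ F k then c k else 0) ≤ A) (hγ : 0 < γ) :
    ∑ ω, p ω * (if f₀ ⊆ W ω then |∑ k, c k * (if F k ⊆ W ω then t ^ (F k).card else 0) -
      (∑ k, c k) * t ^ f₀.card| else 0) ≤
      (4 * ξ * B ^ 2 * (∑ k, c k) ^ 2 + B * (R * A * ∑ k, c k)) / γ + γ := by
  have hB : 0 ≤ B := le_trans (by positivity) htB
  have h1 := second_moment_le ht htB hξ hq c hc F f₀ hf₀ hF₀ hF
  have h2 := mul_le_mul_of_nonneg_left (sum_sum_inter_ne_le c hc F f₀ hF₀ hF hA hcA) hB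
  refine le_trans ?_ (add_le_add_left ((div_le_div_iff_of_pos_right hγ).2
    (h1.trans (add_le_add_right h2 _))) γ)
  calc _ ≤ ∑ ω, p ω * ((if f₀ ⊆ W ω then (∑ k, c k * (if F k ⊆ W ω then t ^ (F k).card else 0) -
      (∑ k, c k) * t ^ f₀.card) ^ 2 else 0) / γ + γ) := by
        refine Finset.sum_le_sum fun ω _ => mul_le_mul_of_nonneg_left ?_ (hp ω)
        split_ifs
        · exact abs_le_sq_div_add hγ
        · simpa using hγ.le
    _ = _ := by
        simp only [mul_add, Finset.sum_add_distrib, ← Finset.sum_mul, hp1, one_mul, ← mul_div_assoc,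
          ← Finset.sum_div]

end Deviation

section Cost

variable {Ω V ι : Type} [Fintype Ω] [Fintype V]

/-- The expected excess of the boosted total weight of an index. -/
theorem sum_max_roundWeight_le {μ : ι → Finset V → ℝ} (hμ : ∀ i e, 0 ≤ μ i e) {R : ℕ}
    (hR : ∀ i e, μ i e ≠ 0 → e.card ≤ R) (τ : ι → ℕ) (j : ℕ) {p : Ω → ℝ}
    (hp : ∀ ω, 0 ≤ p ω) (hp1 : ∑ ω, p ω = 1) {W : Ω → Finset V} {t B ξ A γ : ℝ} (ht : 1 ≤ t)
    (htB : t ^ R ≤ B) (hξ : 0 ≤ ξ)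
    (hq : ∀ f : Finset V, f.card ≤ 2 * R → |survival p W f - t⁻¹ ^ f.card| ≤ ξ)
    (hA : 0 ≤ A) (hvA : ∀ i v, vertexWeight (μ i) v ≤ A) (hγ : 0 < γ) (i : ι)
    (h1 : ∑ e, μ i e ≤ 1) :
    ∑ ω, p ω * max (∑ e, roundWeight μ τ j t (W ω) i e - 1) 0 ≤
      ((4 * ξ * B ^ 2 + B ^ 2 * (R * A)) / γ + γ) * ∑ v, vertexWeight (μ i) v := by
  have hB : 0 ≤ B := le_trans (by positivity) htB
  set c : Finset V → ℝ := fun e => if τ i = j ∧ e ≠ ∅ then μ i e else 0 with hcdef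
  have hc : ∀ e, 0 ≤ c e := fun e => by simp only [hcdef]; split_ifs <;> simp [hμ]
  have hcμ : ∀ e, c e ≤ μ i e := fun e => by
    have := hμ i e
    simp only [hcdef]; split_ifs <;> simp [hμ]
  set n := ∑ e, c e with hn
  have hn0 : 0 ≤ n := Finset.sum_nonneg fun e _ => hc e
  have hnv : n ≤ ∑ v, vertexWeight (μ i) v := by
    rw [sum_vertexWeight]
    refine Finset.sum_le_sum fun e _ => ?_
    have := hμ i e
    simp only [hcdef]
    split_ifs with h
    · have h2 : (1 : ℝ) ≤ e.card := by
        exact_mod_cast Finset.card_pos.2 (Finset.nonempty_iff_ne_empty.2 h.2)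
      nlinarith
    · positivity
  set κ := (4 * ξ * B ^ 2 + B ^ 2 * (R * A)) / γ + γ with hκ
  have hκ0 : 0 ≤ κ := by positivity
  refine le_trans ?_ (mul_le_mul_of_nonneg_left hnv hκ0)
  simp only [sum_roundWeight]
  by_cases hnB : B * n ≤ 1
  · rw [Finset.sum_eq_zero]
    · positivity
    · intro ω _
      rw [max_eq_right, mul_zero]
      rw [sub_nonpos]
      refine le_trans ?_ hnB
      rw [hn, Finset.mul_sum]
      refine Finset.sum_le_sum fun e _ => ?_
      rw [mul_comm]
      by_cases hce : c e = 0
      · simp only [hcdef] at hce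
        simp [hcdef, hce]
      refine mul_le_mul_of_nonneg_right ?_ (hc e)
      split_ifs
      · exact (pow_le_pow_right₀ ht (hR i e (ite_ne_right_iff.1 hce).2)).trans htB
      · exact hB
  · push Not at hnB
    have hnpos : 0 < n := by
      by_contra! h
      nlinarith
    have hn1 : n ≤ 1 := (Finset.sum_le_sum fun e _ => hcμ e).trans h1
    have hdev := sum_abs_sub_le hp hp1 ht htB hξ hq c hc (fun e => e) ∅ (by simp)
      (fun e _ => Finset.empty_subset e) (fun e he => hR _ _ (ite_ne_right_iff.1 he).2) hA
      (fun v _ => (vertexWeight_mono hcμ v).trans (hvA i v)) (mul_pos hγ hnpos)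
    simp only [Finset.empty_subset, if_true, Finset.card_empty, pow_zero, mul_one, ← hn] at hdev
    refine (Finset.sum_le_sum fun ω _ => mul_le_mul_of_nonneg_left ?_ (hp ω)).trans
      (hdev.trans ?_)
    · refine max_le ?_ (abs_nonneg _)
      refine le_trans ?_ (le_abs_self _)
      simp only [hcdef]
      linarith
    · have h2 : (4 * ξ * B ^ 2 * n ^ 2 + B * (R * A * n)) / (γ * n) =
          (4 * ξ * B ^ 2 * n + B * (R * A)) / γ := by
        field_simp
      rw [h2, hκ, add_mul, div_mul_eq_mul_div]
      gcongr
      have h3 : 0 ≤ B * (R * A) := by positivity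
      nlinarith

variable [Fintype ι]

theorem sum_vertexWeight_roundWeight (μ : ι → Finset V → ℝ) (τ : ι → ℕ) (j : ℕ) (t : ℝ)
    (W : Finset V) (v : V) :
    ∑ i, vertexWeight (roundWeight μ τ j t W i) v =
      ∑ k : ι × Finset V, (if τ k.1 = j ∧ v ∈ k.2 then μ k.1 k.2 else 0) *
        (if k.2 ⊆ W then t ^ k.2.card else 0) := by
  rw [Fintype.sum_prod_type]
  refine Finset.sum_congr rfl fun i _ => Finset.sum_congr rfl fun e _ => ?_
  by_cases hv : v ∈ e
  · have : e ≠ ∅ := Finset.ne_empty_of_mem hv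
    by_cases h1 : τ i = j <;> by_cases h2 : e ⊆ W <;> simp [roundWeight, hv, h1, h2, this]
  · simp [hv]

theorem sum_vertexWeight_roundWeight_eq_zero (μ : ι → Finset V → ℝ) (τ : ι → ℕ) (j : ℕ) (t : ℝ)
    {W : Finset V} {v : V} (hv : v ∉ W) :
    ∑ i, vertexWeight (roundWeight μ τ j t W i) v = 0 := by
  refine Finset.sum_eq_zero fun i _ => Finset.sum_eq_zero fun e _ => ?_
  split_ifs with h
  · exact if_neg fun hs => hv (hs.2.2 h)
  · rfl

theorem sum_ite_vertexWeight (μ : ι → Finset V → ℝ) (τ : ι → ℕ) (j : ℕ) (v : V) :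
    ∑ i, (if τ i = j then vertexWeight (μ i) v else 0) =
      ∑ k : ι × Finset V, if τ k.1 = j ∧ v ∈ k.2 then μ k.1 k.2 else 0 := by
  rw [Fintype.sum_prod_type]
  refine Finset.sum_congr rfl fun i _ => ?_
  by_cases h : τ i = j <;> simp [h, vertexWeight]

/-- The expected excess of the boosted weight at a vertex. -/
theorem sum_max_vertexWeight_le {μ : ι → Finset V → ℝ} (hμ : ∀ i e, 0 ≤ μ i e) {R : ℕ}
    (hR1 : 1 ≤ R) (hR : ∀ i e, μ i e ≠ 0 → e.card ≤ R) (τ : ι → ℕ) (j : ℕ) {p : Ω → ℝ}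
    (hp : ∀ ω, 0 ≤ p ω) (hp1 : ∑ ω, p ω = 1) {W : Ω → Finset V} {t B ξ A γ L : ℝ} (ht : 1 ≤ t)
    (htB : t ^ R ≤ B) (hξ : 0 ≤ ξ)
    (hq : ∀ f : Finset V, f.card ≤ 2 * R → |survival p W f - t⁻¹ ^ f.card| ≤ ξ)
    (hA : 0 ≤ A) (hpA : ∀ v v', v ≠ v' → ∑ i, pairWeight (μ i) v v' ≤ A) (hγ : 0 < γ)
    (hL : 0 ≤ L) (v : V) {d : ℝ} (hd : ∑ i, (if τ i = j then vertexWeight (μ i) v else 0) = d) :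
    ∑ ω, p ω * max (∑ i, vertexWeight (roundWeight μ τ j t (W ω) i) v - L) 0 ≤
      (4 * ξ * B ^ 2 * d ^ 2 + B * (R * A * d)) / γ + γ + max (d * t - L) 0 := by
  have h0 : ∀ k : ι × Finset V, 0 ≤ if τ k.1 = j ∧ v ∈ k.2 then μ k.1 k.2 else 0 := fun k => by
    split_ifs <;> simp [hμ]
  have hdev := sum_abs_sub_le hp hp1 ht htB hξ hq
    (fun k : ι × Finset V => if τ k.1 = j ∧ v ∈ k.2 then μ k.1 k.2 else 0) h0
    (fun k => k.2) {v} (by simpa using hR1)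
    (fun k hk => by simpa using (ite_ne_right_iff.1 hk).1.2)
    (fun k hk => hR _ _ (ite_ne_right_iff.1 hk).2) hA (fun v' hv' => by
      refine le_trans ?_ (hpA v v' (by simpa [eq_comm] using hv'))
      rw [Fintype.sum_prod_type]
      refine Finset.sum_le_sum fun i _ => Finset.sum_le_sum fun e _ => ?_
      have := hμ i e
      split_ifs <;> grind) hγ
  rw [← sum_ite_vertexWeight, hd, Finset.card_singleton, pow_one] at hdev
  refine le_trans ?_ (add_le_add_left hdev (max (d * t - L) 0))
  rw [← one_mul (max (d * t - L) 0), ← hp1, Finset.sum_mul, ← Finset.sum_add_distrib]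
  refine Finset.sum_le_sum fun ω _ => ?_
  rw [← mul_add]
  refine mul_le_mul_of_nonneg_left ?_ (hp ω)
  rw [sum_vertexWeight_roundWeight]
  split_ifs with h
  · refine max_le ?_ (by positivity)
    have h1 := le_abs_self (∑ k : ι × Finset V, (if τ k.1 = j ∧ v ∈ k.2 then μ k.1 k.2 else 0) *
        (if k.2 ⊆ W ω then t ^ k.2.card else 0) - d * t)
    have h2 := le_max_left (d * t - L) 0
    linarith
  · rw [← sum_vertexWeight_roundWeight, sum_vertexWeight_roundWeight_eq_zero _ _ _ _
      (by simpa using h), zero_sub, max_eq_right (neg_nonpos.2 hL), zero_add]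
    exact le_max_right _ _

/-- The expected number of vertices lost in a round. -/
theorem sum_roundCost_le {μ : ι → Finset V → ℝ} (hμ : ∀ i e, 0 ≤ μ i e) {R : ℕ}
    (hμ1 : ∀ i, ∑ e, μ i e ≤ 1)
    (hR1 : 1 ≤ R) (hR : ∀ i e, μ i e ≠ 0 → e.card ≤ R) (τ : ι → ℕ) (j : ℕ) {p : Ω → ℝ}
    (hp : ∀ ω, 0 ≤ p ω) (hp1 : ∑ ω, p ω = 1) {W : Ω → Finset V} {t B ξ A γ l L M : ℝ} (ht : 1 ≤ t)
    (htB : t ^ R ≤ B) (hξ : 0 ≤ ξ)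
    (hq : ∀ f : Finset V, f.card ≤ 2 * R → |survival p W f - t⁻¹ ^ f.card| ≤ ξ)
    (hA : 0 ≤ A) (hvA : ∀ i v, vertexWeight (μ i) v ≤ A)
    (hpA : ∀ v v', v ≠ v' → ∑ i, pairWeight (μ i) v v' ≤ A) (hγ : 0 < γ)
    (hl : 0 ≤ l) (hL : 0 ≤ L) (hM1 : 1 ≤ M) (hM : ∀ v, ∑ i, vertexWeight (μ i) v ≤ M)
    {d : V → ℝ} (hd : ∀ v, ∑ i, (if τ i = j then vertexWeight (μ i) v else 0) = d v) :
    ∑ ω, p ω * roundCost (roundWeight μ τ j t (W ω)) (W ω) R l L ≤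
      ∑ v, (l * (t⁻¹ + ξ) - (1 - ξ * B) * d v) +
        R * (2 * M ^ 2 * ((4 * ξ * B ^ 2 + B ^ 2 * (R * A)) / γ + γ) * Fintype.card V +
          ∑ v, max (d v * t - L) 0) := by
  have hB1 : 1 ≤ B := le_trans (one_le_pow₀ ht) htB
  set κ := (4 * ξ * B ^ 2 + B ^ 2 * (R * A)) / γ + γ with hκ
  have hκ0 : 0 ≤ κ := by positivity
  have hsplit : ∑ ω, p ω * roundCost (roundWeight μ τ j t (W ω)) (W ω) R l L =
      ∑ v, (l * survival p W {v} -
        ∑ ω, p ω * ∑ i, vertexWeight (roundWeight μ τ j t (W ω) i) v) +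
      R * (∑ i, ∑ ω, p ω * max (∑ e, roundWeight μ τ j t (W ω) i e - 1) 0 +
        ∑ v, ∑ ω, p ω * max (∑ i, vertexWeight (roundWeight μ τ j t (W ω) i) v - L) 0) := by
    have hpt : ∀ ω, roundCost (roundWeight μ τ j t (W ω)) (W ω) R l L =
        ∑ v, ((if {v} ⊆ W ω then l else 0) -
          ∑ i, vertexWeight (roundWeight μ τ j t (W ω) i) v) +
        R * (∑ i, max (∑ e, roundWeight μ τ j t (W ω) i e - 1) 0 +
          ∑ v, max (∑ i, vertexWeight (roundWeight μ τ j t (W ω) i) v - L) 0) := by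
      intro ω
      rw [roundCost]
      congr 1
      rw [← Finset.sum_subset (Finset.subset_univ (W ω))]
      · exact Finset.sum_congr rfl fun v hv => by simp [hv]
      · intro v _ hv
        rw [sum_vertexWeight_roundWeight_eq_zero _ _ _ _ hv]
        simp [hv]
    rw [Finset.sum_comm (s := (Finset.univ : Finset ι)),
      Finset.sum_comm (s := (Finset.univ : Finset V)) (f := fun v ω => p ω * max _ 0),
      ← Finset.sum_add_distrib, Finset.mul_sum]
    simp only [survival, Finset.mul_sum _ _ l, ← Finset.sum_sub_distrib]
    rw [Finset.sum_comm, ← Finset.sum_add_distrib]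
    refine Finset.sum_congr rfl fun ω _ => ?_
    rw [hpt, mul_add]
    congr 1
    · rw [Finset.mul_sum]
      refine Finset.sum_congr rfl fun v _ => ?_
      split_ifs <;> ring
    · rw [← Finset.mul_sum, ← Finset.mul_sum]
      ring
  rw [hsplit]
  have hi : ∑ i, ∑ ω, p ω * max (∑ e, roundWeight μ τ j t (W ω) i e - 1) 0 ≤
      κ * (M * Fintype.card V) := by
    calc _ ≤ ∑ i, κ * ∑ v, vertexWeight (μ i) v := Finset.sum_le_sum fun i _ =>
          sum_max_roundWeight_le hμ hR τ j hp hp1 ht htB hξ hq hA hvA hγ i (hμ1 i)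
      _ = κ * ∑ v, ∑ i, vertexWeight (μ i) v := by rw [← Finset.mul_sum, Finset.sum_comm]
      _ ≤ κ * ∑ v : V, M := mul_le_mul_of_nonneg_left (Finset.sum_le_sum fun v _ => hM v) hκ0
      _ = _ := by simp [mul_comm]
  have hdM : ∀ v, 0 ≤ d v ∧ d v ≤ M := by
    intro v
    rw [← hd v]
    have h0 := fun i => vertexWeight_nonneg (hμ i) v
    exact ⟨Finset.sum_nonneg fun i _ => by split_ifs <;> simp [h0],
      (Finset.sum_le_sum fun i _ => by split_ifs <;> simp [h0]).trans (hM v)⟩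
  have hv : ∑ v, ∑ ω, p ω * max (∑ i, vertexWeight (roundWeight μ τ j t (W ω) i) v - L) 0 ≤
      κ * M ^ 2 * Fintype.card V + ∑ v, max (d v * t - L) 0 := by
    calc _ ≤ ∑ v, (κ * M ^ 2 + max (d v * t - L) 0) := by
          refine Finset.sum_le_sum fun v _ => (sum_max_vertexWeight_le hμ hR1 hR τ j hp hp1 ht htB
            hξ hq hA hpA hγ hL v (hd v)).trans ?_
          gcongr
          obtain ⟨h0, h1⟩ := hdM v
          have h2 : d v ^ 2 ≤ M ^ 2 := by gcongr
          have h3 : d v ≤ M ^ 2 := by nlinarith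
          have h4 : (1 : ℝ) ≤ M ^ 2 := one_le_pow₀ hM1
          have h5 : B ≤ B ^ 2 := by nlinarith
          rw [hκ, add_mul, div_mul_eq_mul_div]
          have h6 : 4 * ξ * B ^ 2 * d v ^ 2 ≤ 4 * ξ * B ^ 2 * M ^ 2 := by gcongr
          have h7 : B * (R * A * d v) ≤ B ^ 2 * (R * A * M ^ 2) := by gcongr
          refine add_le_add ((div_le_div_iff_of_pos_right hγ).2 ?_) (by nlinarith)
          nlinarith
      _ = _ := by simp [Finset.sum_add_distrib, mul_comm]
  have hfirst : ∀ v, (1 - ξ * B) * d v ≤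
      ∑ ω, p ω * ∑ i, vertexWeight (roundWeight μ τ j t (W ω) i) v := by
    intro v
    have h1 := first_moment_ge (n := 2 * R) (by omega) ht htB hξ hq
      (fun k : ι × Finset V => if τ k.1 = j ∧ v ∈ k.2 then μ k.1 k.2 else 0)
      (fun k => by split_ifs <;> simp [hμ]) (fun k => k.2)
      (fun k hk => hR _ _ (ite_ne_right_iff.1 hk).2)
    rw [← sum_ite_vertexWeight, hd v] at h1
    simpa only [sum_vertexWeight_roundWeight] using h1
  refine add_le_add (Finset.sum_le_sum fun v _ => ?_) ?_
  · have h1 := (abs_le.1 (hq {v} (by simp; omega))).2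
    rw [Finset.card_singleton, pow_one] at h1
    have h2 := hfirst v
    have h3 : l * survival p W {v} ≤ l * (t⁻¹ + ξ) := by gcongr; linarith
    linarith
  · refine mul_le_mul_of_nonneg_left ?_ (Nat.cast_nonneg R)
    have h4 : κ * (M * Fintype.card V) ≤ κ * (M ^ 2 * Fintype.card V) := by
      gcongr
      nlinarith
    linarith

end Cost

section Core

variable {V ι : Type} [Fintype V] [Fintype ι]

/-- Running the first `j` rounds: the survival probabilities stay close to those of independent
deletions, and the expected loss is at most the sum of the expected losses of the rounds. -/
theorem RandomCover.exists_of_rounds {μ : ι → Finset V → ℝ} (hμ : ∀ i e, 0 ≤ μ i e)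
    (hμ1 : ∀ i, ∑ e, μ i e ≤ 1) {R : ℕ} (hR1 : 1 ≤ R) (hR : ∀ i e, μ i e ≠ 0 → e.card ≤ R)
    (τ : ι → ℕ) (m : ℕ) {A B b γ ξ M : ℝ} (hA : 0 ≤ A) (hAB : B * A < 1) (hb : 1 < b)
    (hbB : (b ^ m) ^ R ≤ B) (hvA : ∀ i v, vertexWeight (μ i) v ≤ A)
    (hpA : ∀ v v', v ≠ v' → ∑ i, pairWeight (μ i) v v' ≤ A) (hγ : 0 < γ)
    (hξ : ξ = m * ((2 * R : ℝ) ^ 2 * (B * A + B * A * Real.log b)))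
    (hM1 : 1 ≤ M) (hM : ∀ v, ∑ i, vertexWeight (μ i) v ≤ M) (d : ℕ → V → ℝ)
    (hd : ∀ j v, ∑ i, (if τ i = j then vertexWeight (μ i) v else 0) = d j v) (j : ℕ)
    (hj : j ≤ m) :
    ∃ X : RandomCover μ, (∀ ω i, j ≤ τ i → X.E ω i = ∅) ∧
      (∀ f : Finset V, f.card ≤ 2 * R → |survival X.p X.W f - (b ^ j)⁻¹ ^ f.card| ≤
        j * ((2 * R : ℝ) ^ 2 * (B * A + B * A * Real.log b))) ∧
      ∑ ω, X.p ω * (X.lost ω).card ≤ ∑ k ∈ Finset.range j,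
        (∑ v, (Real.log b * ((b ^ k)⁻¹ + ξ) - (1 - ξ * B) * d k v) +
          R * (2 * M ^ 2 * ((4 * ξ * B ^ 2 + B ^ 2 * (R * A)) / γ + γ) * Fintype.card V +
            ∑ v, max (d k v * b ^ k - (1 - B * A) * Real.log b) 0)) := by
  have hB : 0 ≤ B := le_trans (by positivity) hbB
  have hlog := Real.log_pos hb
  set ε := (2 * R : ℝ) ^ 2 * (B * A + B * A * Real.log b) with hε
  have hε0 : 0 ≤ ε := by positivity
  induction j with
  | zero =>
    refine ⟨⟨Unit, inferInstance, fun _ => 1, fun _ => Finset.univ, fun _ _ => ∅, by simp, by simp,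
      by simp⟩, by simp, ?_, ?_⟩
    · intro f _
      simp [survival]
    · simp [RandomCover.lost]
  | succ j ih =>
    obtain ⟨X, hX, hsurv, hlost⟩ := ih (by omega)
    have ht : 1 ≤ b ^ j := one_le_pow₀ hb.le
    have htB : (b ^ j) ^ R ≤ B := le_trans (by
      gcongr
      · exact hb.le
      · omega) hbB
    obtain ⟨Y, hY, hsurv', hlost'⟩ :=
      X.exists_extension hμ hR τ j ht htB hA hAB hb hvA hpA hX
    refine ⟨Y, hY, ?_, ?_⟩
    · intro f hf
      have h1 := hsurv' f
      have h2 := hsurv f hf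
      have h3 : (f.card : ℝ) ^ 2 * (B * A + B * A * Real.log b) ≤ ε := by
        rw [hε]
        gcongr
        exact_mod_cast hf
      have h4 : b⁻¹ ^ f.card ≤ 1 := pow_le_one₀ (by positivity) (inv_le_one_of_one_le₀ hb.le)
      have h5 : survival Y.p Y.W f - (b ^ (j + 1))⁻¹ ^ f.card =
          (survival Y.p Y.W f - b⁻¹ ^ f.card * survival X.p X.W f) +
            b⁻¹ ^ f.card * (survival X.p X.W f - (b ^ j)⁻¹ ^ f.card) := by
        rw [pow_succ, mul_inv, mul_pow]
        ring
      rw [h5]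
      refine (abs_add_le _ _).trans ?_
      have h6 : |b⁻¹ ^ f.card * (survival X.p X.W f - (b ^ j)⁻¹ ^ f.card)| ≤ 1 * (j * ε) := by
        rw [abs_mul, abs_of_nonneg (by positivity)]
        exact mul_le_mul h4 h2 (abs_nonneg _) zero_le_one
      push_cast
      linarith
    · rw [Finset.sum_range_succ]
      refine hlost'.trans (add_le_add hlost ?_)
      refine sum_roundCost_le hμ hμ1 hR1 hR τ j X.nonneg X.sum_eq_one ht htB (hξ ▸ by positivity)
        (fun f hf => (hsurv f hf).trans ?_) hA hvA hpA hγ hlog.le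
        (mul_nonneg (by linarith) hlog.le) hM1 hM (hd j)
      rw [hξ]
      gcongr
      omega

theorem RandomCover.exists_cover {μ : ι → Finset V → ℝ} (hμ : ∀ i e, 0 ≤ μ i e)
    (hμ1 : ∀ i, ∑ e, μ i e = 1) (X : RandomCover μ) {K : ℝ}
    (hK : ∑ v, survival X.p X.W {v} + ∑ ω, X.p ω * (X.lost ω).card ≤ K) :
    ∃ e : ι → Finset V, (∀ i, 0 < μ i (e i)) ∧
      ((Finset.univ \ Finset.univ.biUnion e).card : ℝ) ≤ K := by
  have h1 : ∑ v, survival X.p X.W {v} = ∑ ω, X.p ω * (X.W ω).card := by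
    simp only [survival, Finset.singleton_subset_iff]
    rw [Finset.sum_comm]
    refine Finset.sum_congr rfl fun ω _ => ?_
    rw [← Finset.sum_filter]
    simp [mul_comm]
  obtain ⟨ω, hω, hωK⟩ : ∃ ω, X.p ω ≠ 0 ∧ ((X.W ω).card : ℝ) + (X.lost ω).card ≤ K := by
    by_contra! hcon
    obtain ⟨ω₀, -, hω₀⟩ : ∃ ω ∈ Finset.univ, X.p ω ≠ 0 :=
      Finset.exists_ne_zero_of_sum_ne_zero (by rw [X.sum_eq_one]; exact one_ne_zero)
    have h2 : ∑ ω, X.p ω * K < ∑ ω, X.p ω * (((X.W ω).card : ℝ) + (X.lost ω).card) := by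
      refine Finset.sum_lt_sum (fun ω _ => ?_) ⟨ω₀, Finset.mem_univ _, ?_⟩
      · by_cases h : X.p ω = 0
        · simp [h]
        · exact mul_le_mul_of_nonneg_left (hcon ω h).le (X.nonneg ω)
      · exact mul_lt_mul_of_pos_left (hcon ω₀ hω₀) ((X.nonneg ω₀).lt_of_ne' hω₀)
    rw [← Finset.sum_mul, X.sum_eq_one, one_mul] at h2
    simp only [mul_add, Finset.sum_add_distrib] at h2
    linarith
  have hsupp : ∀ i, ∃ e, μ i e ≠ 0 := fun i => by
    obtain ⟨e, -, he⟩ := Finset.exists_ne_zero_of_sum_ne_zero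
      (show ∑ e, μ i e ≠ 0 by rw [hμ1 i]; exact one_ne_zero)
    exact ⟨e, he⟩
  choose e₀ he₀ using hsupp
  refine ⟨fun i => if X.E ω i = ∅ then e₀ i else X.E ω i, fun i => ?_, le_trans ?_ hωK⟩
  · refine (hμ i _).lt_of_ne' ?_
    beta_reduce
    split_ifs with h
    · exact he₀ i
    · exact (X.eq_empty_or ω hω i).resolve_left h
  · have h3 : Finset.univ \ (Finset.univ.biUnion fun i => if X.E ω i = ∅ then e₀ i else X.E ω i) ⊆
        X.W ω ∪ X.lost ω := by
      intro v hv
      simp only [RandomCover.lost, Finset.mem_union, Finset.mem_sdiff, Finset.mem_biUnion,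
        Finset.mem_univ, true_and, not_or, not_exists] at hv ⊢
      by_cases hvW : v ∈ X.W ω
      · exact Or.inl hvW
      · refine Or.inr ⟨hvW, fun i hi => hv i ?_⟩
        rwa [if_neg (Finset.ne_empty_of_mem hi)]
    exact_mod_cast (Finset.card_le_card h3).trans (Finset.card_union_le _ _)

/-- A labelling of the indices by rounds `0, …, m - 1` (and `m`, meaning unused) such that every
vertex receives roughly the proportion `q k` of its weight in round `k`. -/
theorem exists_round_labelling {μ : ι → Finset V → ℝ} (hμ : ∀ i e, 0 ≤ μ i e) {A M : ℝ}
    (hA : 0 ≤ A) (hvA : ∀ i v, vertexWeight (μ i) v ≤ A)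
    (hM : ∀ v, ∑ i, vertexWeight (μ i) v ≤ M) (m : ℕ) {q : ℕ → ℝ} (hq : ∀ k, 0 ≤ q k)
    (hq1 : ∑ k ∈ Finset.range m, q k ≤ 1) :
    ∃ τ : ι → ℕ, ∑ v, ∑ k ∈ Finset.range m,
      (∑ i, (if τ i = k then vertexWeight (μ i) v else 0) -
        q k * ∑ i, vertexWeight (μ i) v) ^ 2 ≤ 2 * (A * (M * Fintype.card V)) := by
  obtain ⟨τ, hτ⟩ := exists_balanced_labelling (Finset.range (m + 1))
    (fun k => if k < m then q k else 1 - ∑ k ∈ Finset.range m, q k)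
    (fun k _ => by
      split_ifs
      · exact hq k
      · linarith)
    (by
      rw [Finset.sum_range_succ, Finset.sum_congr rfl fun k hk => if_pos (Finset.mem_range.1 hk)]
      simp)
    (fun i v => vertexWeight (μ i) v) Finset.univ
  refine ⟨τ, le_trans ?_ (hτ.trans ?_)⟩
  · refine Finset.sum_le_sum fun v _ => ?_
    rw [Finset.sum_range_succ]
    refine le_add_of_le_of_nonneg (le_of_eq ?_) (sq_nonneg _)
    refine Finset.sum_congr rfl fun k hk => ?_
    rw [if_pos (Finset.mem_range.1 hk), Finset.mul_sum, ← Finset.sum_sub_distrib]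
    congr 1
    refine Finset.sum_congr rfl fun i _ => ?_
    split_ifs <;> ring
  · refine mul_le_mul_of_nonneg_left ?_ zero_le_two
    calc _ ≤ ∑ i, ∑ v, A * vertexWeight (μ i) v := by
          refine Finset.sum_le_sum fun i _ => Finset.sum_le_sum fun v _ => ?_
          rw [sq]
          exact mul_le_mul_of_nonneg_right (hvA i v) (vertexWeight_nonneg (hμ i) v)
      _ = A * ∑ v, ∑ i, vertexWeight (μ i) v := by
          rw [Finset.sum_comm]
          simp only [← Finset.mul_sum]
      _ ≤ A * ∑ v : V, M := mul_le_mul_of_nonneg_left (Finset.sum_le_sum fun v _ => hM v) hA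
      _ = _ := by simp [mul_comm]

/-- The error terms accumulated over all rounds are negligible. -/
theorem error_terms_le {A B R m l t ξ γ : ℝ} (hA : 0 ≤ A) (hB : 1000 ≤ B)
    (hAB : A * B ^ 100 ≤ 1) (hR : 0 ≤ R) (hRB : R ≤ B) (hm : 0 ≤ m) (hmB : m ≤ B) (hl : 0 ≤ l)
    (hl9 : l ≤ 9) (ht : 0 ≤ t) (htB : t ≤ B)
    (hξ : ξ = m * ((2 * R) ^ 2 * (B * A + B * A * l))) (hγ : γ = B⁻¹ ^ 40) :
    ξ ≤ B⁻¹ ∧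
    m * (B * A * l + l * ξ + ξ * B * 101 +
      2 * R * 101 ^ 2 * ((4 * ξ * B ^ 2 + B ^ 2 * (R * A)) / γ + γ)) +
      (1 + R * t) * (2 * (A * 101) / γ + γ * m) ≤ B⁻¹ := by
  have hB0 : 0 < B := by linarith
  set g := B⁻¹ with hg
  have hg0 : 0 < g := by positivity
  have hBg : B * g = 1 := mul_inv_cancel₀ hB0.ne'
  have hg1 : g ≤ 1 / 1000 := by
    rw [hg, inv_eq_one_div]
    exact one_div_le_one_div_of_le (by norm_num) hB
  have hAg : A ≤ g ^ 100 := by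
    rw [hg, inv_pow, ← one_div, le_div_iff₀ (by positivity)]
    exact hAB
  have hcancel : ∀ k n : ℕ, B ^ k * g ^ (n + k) = g ^ n := fun k n => by
    rw [pow_add, mul_left_comm, ← mul_pow, hBg, one_pow, mul_one]
  have hgpow : ∀ {k n : ℕ}, k ≤ n → g ^ n ≤ g ^ k := fun h =>
    pow_le_pow_of_le_one hg0.le (by linarith) h
  have hsmall : ∀ {c : ℝ} {k n : ℕ}, c ≤ 1 → k ≤ n → c * g ^ n ≤ g ^ k := fun hc h =>
    (mul_le_of_le_one_left (by positivity) hc).trans (hgpow h)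
  have hξ0 : 0 ≤ ξ := by rw [hξ]; positivity
  have hξg : ξ ≤ g ^ 95 := by
    rw [hξ]
    calc m * ((2 * R) ^ 2 * (B * A + B * A * l))
        ≤ B * ((2 * B) ^ 2 * (B * g ^ 100 + B * g ^ 100 * 9)) := by gcongr
      _ = 40 * (B ^ 4 * g ^ (96 + 4)) := by ring
      _ = 40 * g * g ^ 95 := by rw [hcancel]; ring
      _ ≤ g ^ 95 := hsmall (by linarith) le_rfl
  have hγdiv : ∀ x, x / γ = x * B ^ 40 := fun x => by
    rw [hγ, hg, inv_pow, div_inv_eq_mul]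
  have hγ0 : 0 ≤ γ := by rw [hγ]; positivity
  have hκ : (4 * ξ * B ^ 2 + B ^ 2 * (R * A)) / γ + γ ≤ 6 * g ^ 40 := by
    rw [hγdiv, hγ]
    calc (4 * ξ * B ^ 2 + B ^ 2 * (R * A)) * B ^ 40 + g ^ 40
        ≤ (4 * g ^ 95 * B ^ 2 + B ^ 2 * (B * g ^ 100)) * B ^ 40 + g ^ 40 := by gcongr
      _ = 4 * (B ^ 42 * g ^ (53 + 42)) + B ^ 43 * g ^ (57 + 43) + g ^ 40 := by ring
      _ = 4 * g ^ 53 + g ^ 57 + g ^ 40 := by rw [hcancel, hcancel]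
      _ ≤ 6 * g ^ 40 := by
          have h1 := hgpow (show 40 ≤ 53 by norm_num)
          have h2 := hgpow (show 40 ≤ 57 by norm_num)
          linarith
  have h1 : B * A * l ≤ g ^ 30 := by
    calc B * A * l ≤ B * g ^ 100 * 9 := by gcongr
      _ = 9 * (B ^ 1 * g ^ (99 + 1)) := by ring
      _ = 9 * g * g ^ 98 := by rw [hcancel]; ring
      _ ≤ g ^ 30 := hsmall (by linarith) (by norm_num)
  have h2 : l * ξ ≤ g ^ 30 := by
    calc l * ξ ≤ 9 * g ^ 95 := by gcongr
      _ = 9 * g * g ^ 94 := by ring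
      _ ≤ g ^ 30 := hsmall (by linarith) (by norm_num)
  have h3 : ξ * B * 101 ≤ g ^ 30 := by
    calc ξ * B * 101 ≤ g ^ 95 * B * 101 := by gcongr
      _ = 101 * (B ^ 1 * g ^ (94 + 1)) := by ring
      _ = 101 * g * g ^ 93 := by rw [hcancel]; ring
      _ ≤ g ^ 30 := hsmall (by linarith) (by norm_num)
  have h4 : 2 * R * 101 ^ 2 * ((4 * ξ * B ^ 2 + B ^ 2 * (R * A)) / γ + γ) ≤ g ^ 30 := by
    calc _ ≤ 2 * B * 101 ^ 2 * (6 * g ^ 40) := by gcongr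
      _ = 2 * 101 ^ 2 * 6 * (B ^ 1 * g ^ (39 + 1)) := by ring
      _ = (2 * 101 ^ 2 * 6 * g ^ 2) * g ^ 37 := by rw [hcancel]; ring
      _ ≤ g ^ 30 := hsmall (by nlinarith) (by norm_num)
  have h5 : 2 * (A * 101) / γ + γ * m ≤ g ^ 30 := by
    rw [hγdiv, hγ]
    calc 2 * (A * 101) * B ^ 40 + g ^ 40 * m ≤ 2 * (g ^ 100 * 101) * B ^ 40 + g ^ 40 * B := by
          gcongr
      _ = 202 * (B ^ 40 * g ^ (60 + 40)) + B ^ 1 * g ^ (39 + 1) := by ring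
      _ = ((404 * g) * g ^ 59 + (2 * g) * g ^ 38) / 2 := by rw [hcancel, hcancel]; ring
      _ ≤ (g ^ 30 + g ^ 30) / 2 := by
          have h1 := hsmall (c := 404 * g) (by linarith) (show 30 ≤ 59 by norm_num)
          have h2 := hsmall (c := 2 * g) (by linarith) (show 30 ≤ 38 by norm_num)
          linarith
      _ = _ := by ring
  refine ⟨hξg.trans (by simpa using hgpow (show 1 ≤ 95 by norm_num)), ?_⟩
  calc _ ≤ B * (g ^ 30 + g ^ 30 + g ^ 30 + g ^ 30) + (B ^ 2 + B * B) * g ^ 30 := by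
        gcongr
        nlinarith
    _ = 4 * (B ^ 1 * g ^ (29 + 1)) + 2 * (B ^ 2 * g ^ (28 + 2)) := by ring
    _ = ((8 * g) * g ^ 28 + (4 * g) * g ^ 27) / 2 := by rw [hcancel, hcancel]; ring
    _ ≤ (g ^ 1 + g ^ 1) / 2 := by
        have h6 := hsmall (c := 8 * g) (by linarith) (show 1 ≤ 28 by norm_num)
        have h7 := hsmall (c := 4 * g) (by linarith) (show 1 ≤ 27 by norm_num)
        linarith
    _ = _ := by ring

end Core

section Main

variable {V ι : Type} [Fintype V] [Fintype ι]

theorem sum_inv_pow_mul_log_le {b : ℝ} (hb : 1 < b) (m : ℕ) :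
    ∑ k ∈ Finset.range m, Real.log b * (b ^ k)⁻¹ ≤ b := by
  have hb0 : 0 < b := by linarith
  have hlog : Real.log b ≤ b - 1 := Real.log_le_sub_one_of_pos hb0
  have hgeom : (∑ k ∈ Finset.range m, b⁻¹ ^ k) * (1 - b⁻¹) ≤ 1 := by
    have h := geom_sum_mul b⁻¹ m
    have h1 : 0 ≤ b⁻¹ ^ m := by positivity
    linarith
  have hS : 0 ≤ ∑ k ∈ Finset.range m, b⁻¹ ^ k := Finset.sum_nonneg fun k _ => by positivity
  calc ∑ k ∈ Finset.range m, Real.log b * (b ^ k)⁻¹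
      = Real.log b * ∑ k ∈ Finset.range m, b⁻¹ ^ k := by simp [Finset.mul_sum]
    _ ≤ (b - 1) * ∑ k ∈ Finset.range m, b⁻¹ ^ k := mul_le_mul_of_nonneg_right hlog hS
    _ = b * ((∑ k ∈ Finset.range m, b⁻¹ ^ k) * (1 - b⁻¹)) := by
        field_simp
    _ ≤ b * 1 := mul_le_mul_of_nonneg_left hgeom hb0.le
    _ = b := mul_one b

/-- The covering statement with explicit parameters. -/
theorem exists_cover {μ : ι → Finset V → ℝ} (hμ : ∀ i e, 0 ≤ μ i e)
    (hμ1 : ∀ i, ∑ e, μ i e = 1) {R m : ℕ} (hR1 : 1 ≤ R) (hR : ∀ i e, μ i e ≠ 0 → e.card ≤ R)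
    {A B b C η : ℝ} (hA : 0 ≤ A) (hB : 1000 ≤ B) (hAB : A * B ^ 100 ≤ 1) (hRB : (R : ℝ) ≤ B)
    (hmB : (m : ℝ) ≤ B) (hb : 1 < b) (hb10 : b ≤ 10) (hbC : b ≤ C) (hC : C ≤ 100) (hη1 : η ≤ 1)
    (hηB : B⁻¹ ≤ η) (hbm : (b ^ m)⁻¹ ≤ η) (hbmB : (b ^ m) ^ R ≤ B)
    (hvA : ∀ i v, vertexWeight (μ i) v ≤ A)
    (hpA : ∀ v v', v ≠ v' → ∑ i, pairWeight (μ i) v v' ≤ A)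
    (hd : ∀ v, |∑ i, vertexWeight (μ i) v - C| ≤ η) :
    ∃ e : ι → Finset V, (∀ i, 0 < μ i (e i)) ∧
      ((Finset.univ \ Finset.univ.biUnion e).card : ℝ) ≤ 5 * η * Fintype.card V := by
  have hB0 : 0 < B := by linarith
  have hη0 : 0 < η := lt_of_lt_of_le (by positivity) hηB
  have hb0 : 0 < b := by linarith
  have hlog := Real.log_pos hb
  have hlog9 : Real.log b ≤ 9 := by linarith [Real.log_le_sub_one_of_pos hb0]
  have hBA : B * A < 1 := by
    have h1 : A * B * B ^ 99 ≤ 1 := by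
      calc A * B * B ^ 99 = A * B ^ 100 := by ring
        _ ≤ 1 := hAB
    have h2 : B ≤ B ^ 99 := le_self_pow₀ (by linarith) (by norm_num)
    have h3 : 0 ≤ A * B := by positivity
    nlinarith
  have hM : ∀ v, ∑ i, vertexWeight (μ i) v ≤ 101 := fun v => by
    linarith [(abs_le.1 (hd v)).2]
  have hbm1 : 1 ≤ b ^ m := one_le_pow₀ hb.le
  have hbmB' : b ^ m ≤ B := (le_self_pow₀ hbm1 (by omega)).trans hbmB
  set N : ℝ := (Fintype.card V : ℝ) with hN
  have hN0 : 0 ≤ N := Nat.cast_nonneg _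
  set l := Real.log b with hl
  set L := (1 - B * A) * l with hL
  have hBA0 : 0 ≤ B * A := by positivity
  have hL0 : 0 ≤ L := mul_nonneg (by linarith) hlog.le
  have hLl : L ≤ l := by nlinarith
  set q : ℕ → ℝ := fun k => L * (b ^ k)⁻¹ / (C + η) with hqdef
  have hCη : 0 < C + η := by linarith
  have hq0 : ∀ k, 0 ≤ q k := fun k => by positivity
  have hqC : ∀ k, q k * (C + η) = L * (b ^ k)⁻¹ := fun k => div_mul_cancel₀ _ hCη.ne'
  have hq1 : ∑ k ∈ Finset.range m, q k ≤ 1 := by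
    rw [← Finset.sum_div, div_le_one hCη]
    calc ∑ k ∈ Finset.range m, L * (b ^ k)⁻¹ ≤ ∑ k ∈ Finset.range m, l * (b ^ k)⁻¹ := by gcongr
      _ ≤ b := sum_inv_pow_mul_log_le hb m
      _ ≤ C + η := by linarith
  obtain ⟨τ, hτ⟩ := exists_round_labelling hμ hA hvA hM m hq0 hq1
  set d : ℕ → V → ℝ := fun k v => ∑ i, if τ i = k then vertexWeight (μ i) v else 0 with hddef
  set γ : ℝ := B⁻¹ ^ 40 with hγ
  have hγ0 : 0 < γ := by positivity
  set ξ : ℝ := m * ((2 * R : ℝ) ^ 2 * (B * A + B * A * l)) with hξ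
  have hξ0 : 0 ≤ ξ := by positivity
  obtain ⟨X, -, hsurv, hlost⟩ := RandomCover.exists_of_rounds hμ (fun i => (hμ1 i).le) hR1 hR τ m
    hA hBA hb hbmB hvA hpA hγ0 hξ (by norm_num) hM d (fun _ _ => rfl) m le_rfl
  obtain ⟨hξB, herr⟩ := error_terms_le hA hB hAB (Nat.cast_nonneg R) hRB (Nat.cast_nonneg m) hmB
    hlog.le hlog9 (by positivity) hbmB' hξ hγ
  refine X.exists_cover hμ hμ1 ?_
  set κ := (4 * ξ * B ^ 2 + B ^ 2 * (R * A)) / γ + γ with hκ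
  set D : ℕ → V → ℝ := fun k v => d k v - q k * ∑ i, vertexWeight (μ i) v with hD
  have hDsum : ∑ k ∈ Finset.range m, ∑ v, |D k v| ≤ (2 * (A * 101) / γ + γ * m) * N := by
    rw [Finset.sum_comm]
    calc ∑ v, ∑ k ∈ Finset.range m, |D k v|
        ≤ ∑ v, ∑ k ∈ Finset.range m, (D k v ^ 2 / γ + γ) := by
          gcongr
          exact abs_le_sq_div_add hγ0
      _ = (∑ v, ∑ k ∈ Finset.range m, D k v ^ 2) / γ + γ * m * N := by
          simp only [Finset.sum_add_distrib, ← Finset.sum_div, Finset.sum_const,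
            Finset.card_range, Finset.card_univ, nsmul_eq_mul]
          ring
      _ ≤ 2 * (A * (101 * N)) / γ + γ * m * N := by
          gcongr
      _ = _ := by ring
  have hround : ∀ k ∈ Finset.range m,
      (∑ v, (l * ((b ^ k)⁻¹ + ξ) - (1 - ξ * B) * d k v) +
        R * (2 * 101 ^ 2 * κ * N + ∑ v, max (d k v * b ^ k - L) 0)) ≤
      2 * η * q k * N + (B * A * l + l * ξ + ξ * B * 101 + 2 * R * 101 ^ 2 * κ) * N +
        (1 + R * b ^ m) * ∑ v, |D k v| := by
    intro k hk
    have hbk : 1 ≤ b ^ k := one_le_pow₀ hb.le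
    have hbkm : b ^ k ≤ b ^ m := pow_le_pow_right₀ hb.le (Finset.mem_range.1 hk).le
    have hbk1 : (b ^ k)⁻¹ ≤ 1 := inv_le_one_of_one_le₀ hbk
    have hbk0 : 0 ≤ (b ^ k)⁻¹ := by positivity
    have h1 : ∑ v, (l * ((b ^ k)⁻¹ + ξ) - (1 - ξ * B) * d k v) ≤
        ∑ v, (2 * η * q k + (B * A * l + l * ξ + ξ * B * 101) + |D k v|) := by
      refine Finset.sum_le_sum fun v _ => ?_
      have hdv := (abs_le.1 (hd v)).1
      have hdk : d k v ≤ 101 := by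
        refine (Finset.sum_le_sum fun i _ => ?_).trans (hM v)
        split_ifs
        · exact le_rfl
        · exact vertexWeight_nonneg (hμ i) v
      have h2 : d k v = D k v + q k * ∑ i, vertexWeight (μ i) v := by simp [hD]
      have h3 := neg_abs_le (D k v)
      have h4 : q k * (C - η) ≤ q k * ∑ i, vertexWeight (μ i) v :=
        mul_le_mul_of_nonneg_left (by linarith) (hq0 k)
      have h5 : ξ * B * d k v ≤ ξ * B * 101 := by gcongr
      have h6 : (l - L) * (b ^ k)⁻¹ ≤ (l - L) * 1 :=
        mul_le_mul_of_nonneg_left hbk1 (by linarith)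
      have h7 := hqC k
      have h8 : l - L = B * A * l := by rw [hL]; ring
      linarith
    have h2 : ∀ v, max (d k v * b ^ k - L) 0 ≤ b ^ m * |D k v| := by
      intro v
      refine max_le ?_ (by positivity)
      have hdv := (abs_le.1 (hd v)).2
      have h3 : q k * (∑ i, vertexWeight (μ i) v) ≤ q k * (C + η) :=
        mul_le_mul_of_nonneg_left (by linarith) (hq0 k)
      have h4 : L = L * (b ^ k)⁻¹ * b ^ k := by
        rw [mul_assoc, inv_mul_cancel₀ (by positivity), mul_one]
      calc d k v * b ^ k - L = (d k v - L * (b ^ k)⁻¹) * b ^ k := by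
            rw [sub_mul, ← h4]
        _ ≤ |D k v| * b ^ k := by
            gcongr
            rw [← hqC k]
            refine le_trans ?_ (le_abs_self _)
            simp only [hD]
            linarith
        _ ≤ |D k v| * b ^ m := by gcongr
        _ = _ := mul_comm _ _
    have h3 : ∑ v, max (d k v * b ^ k - L) 0 ≤ b ^ m * ∑ v, |D k v| := by
      rw [Finset.mul_sum]
      exact Finset.sum_le_sum fun v _ => h2 v
    have h4 : (R : ℝ) * (2 * 101 ^ 2 * κ * N + ∑ v, max (d k v * b ^ k - L) 0) ≤
        R * (2 * 101 ^ 2 * κ * N + b ^ m * ∑ v, |D k v|) := by gcongr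
    simp only [Finset.sum_add_distrib (s := (Finset.univ : Finset V)), Finset.sum_const,
      Finset.card_univ, nsmul_eq_mul] at h1
    rw [← hN] at h1
    linarith
  have hlost' := hlost.trans (Finset.sum_le_sum hround)
  rw [Finset.sum_add_distrib, Finset.sum_add_distrib, ← Finset.sum_mul, ← Finset.mul_sum,
    ← Finset.mul_sum, Finset.sum_const, Finset.card_range, nsmul_eq_mul,
    ← Finset.mul_sum] at hlost'
  have h1 : 2 * η * (∑ k ∈ Finset.range m, q k) * N ≤ 2 * η * 1 * N := by gcongr
  have h2 : (1 + R * b ^ m) * ∑ k ∈ Finset.range m, ∑ v, |D k v| ≤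
      (1 + R * b ^ m) * ((2 * (A * 101) / γ + γ * m) * N) := by gcongr
  have h3 := mul_le_mul_of_nonneg_right (herr.trans hηB) hN0
  have h4 : ∑ v, survival X.p X.W {v} ≤ (η + η) * N := by
    calc ∑ v, survival X.p X.W {v} ≤ ∑ v : V, (η + η) := by
          refine Finset.sum_le_sum fun v _ => ?_
          have h5 := (abs_le.1 (hsurv {v} (by simp; omega))).2
          rw [Finset.card_singleton, pow_one] at h5
          linarith
      _ = _ := by
          rw [Finset.sum_const, Finset.card_univ, nsmul_eq_mul]
          exact mul_comm _ _
  linarith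

end Main

theorem sum_map_subtype {α : Type} (V : Finset α) (g : Finset α → ℝ) :
    ∑ e : Finset V, g (e.map (Function.Embedding.subtype _)) = ∑ e ∈ V.powerset, g e := by
  refine Finset.sum_bij' (fun e _ => e.map (Function.Embedding.subtype _))
    (fun e _ => e.subtype (· ∈ V)) ?_ ?_ ?_ ?_ ?_
  · intro e _
    rw [Finset.mem_powerset]
    intro a ha
    obtain ⟨b, -, rfl⟩ := Finset.mem_map.1 ha
    exact b.2
  · simp
  · intro e _
    ext a
    simp
  · intro e he
    rw [Finset.subtype_map]
    exact Finset.filter_true_of_mem (Finset.mem_powerset.1 he)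
  · simp

theorem vertexWeight_map_subtype {α : Type} (V : Finset α) (c : Finset α → ℝ) (v : V) :
    vertexWeight (fun e : Finset V => c (e.map (Function.Embedding.subtype _))) v =
      ∑ e ∈ V.powerset.filter (fun e => (v : α) ∈ e), c e := by
  rw [Finset.sum_filter, ← sum_map_subtype V fun e => if (v : α) ∈ e then c e else 0]
  simp [vertexWeight]

theorem pairWeight_map_subtype {α : Type} (V : Finset α) (c : Finset α → ℝ) (v v' : V) :
    pairWeight (fun e : Finset V => c (e.map (Function.Embedding.subtype _))) v v' =
      ∑ e ∈ V.powerset.filter (fun e => (v : α) ∈ e ∧ (v' : α) ∈ e), c e := by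
  rw [Finset.sum_filter,
    ← sum_map_subtype V fun e => if (v : α) ∈ e ∧ (v' : α) ∈ e then c e else 0]
  simp [pairWeight]

/-- `exists_cover` for subsets of a finset. -/
theorem exists_cover_finset {α : Type} (V : Finset α) (I : Finset ℕ) {μ : ℕ → Finset α → ℝ}
    (hμ : ∀ i ∈ I, ∀ e, 0 ≤ μ i e) (hμ1 : ∀ i ∈ I, ∑ e ∈ V.powerset, μ i e = 1) {R m : ℕ}
    (hR1 : 1 ≤ R) (hR : ∀ i ∈ I, ∀ e, μ i e ≠ 0 → e.card ≤ R)
    {A B b C η : ℝ} (hA : 0 ≤ A) (hB : 1000 ≤ B) (hAB : A * B ^ 100 ≤ 1) (hRB : (R : ℝ) ≤ B)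
    (hmB : (m : ℝ) ≤ B) (hb : 1 < b) (hb10 : b ≤ 10) (hbC : b ≤ C) (hC : C ≤ 100) (hη1 : η ≤ 1)
    (hηB : B⁻¹ ≤ η) (hbm : (b ^ m)⁻¹ ≤ η) (hbmB : (b ^ m) ^ R ≤ B)
    (hvA : ∀ i ∈ I, ∀ v ∈ V, ∑ e ∈ V.powerset.filter (fun e => v ∈ e), μ i e ≤ A)
    (hpA : ∀ v ∈ V, ∀ v' ∈ V, v ≠ v' →
      ∑ i ∈ I, ∑ e ∈ V.powerset.filter (fun e => v ∈ e ∧ v' ∈ e), μ i e ≤ A)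
    (hd : ∀ v ∈ V, |(∑ i ∈ I, ∑ e ∈ V.powerset.filter (fun e => v ∈ e), μ i e) - C| ≤ η) :
    ∃ e : ℕ → Finset α, (∀ i ∈ I, 0 < μ i (e i)) ∧
      ((V \ I.biUnion e).card : ℝ) ≤ 5 * η * V.card := by
  obtain ⟨e, he, hcard⟩ := exists_cover (V := V) (ι := I)
    (μ := fun i e => μ i (e.map (Function.Embedding.subtype _))) (fun i e => hμ i i.2 _)
    (fun i => by rw [sum_map_subtype V (μ i), hμ1 i i.2]) hR1
    (fun i e h => by simpa using hR i i.2 _ h) hA hB hAB hRB hmB hb hb10 hbC hC hη1 hηB hbm hbmB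
    (fun i v => by rw [vertexWeight_map_subtype]; exact hvA i i.2 v v.2)
    (fun v v' h => by
      simp only [pairWeight_map_subtype]
      rw [Finset.sum_coe_sort I
        fun i => ∑ e ∈ V.powerset.filter (fun e => (v : α) ∈ e ∧ (v' : α) ∈ e), μ i e]
      exact hpA v v.2 v' v'.2 fun h' => h (Subtype.ext h'))
    (fun v => by
      simp only [vertexWeight_map_subtype]
      rw [Finset.sum_coe_sort I fun i => ∑ e ∈ V.powerset.filter (fun e => (v : α) ∈ e), μ i e]
      exact hd v v.2)
  refine ⟨fun i => if h : i ∈ I then (e ⟨i, h⟩).map (Function.Embedding.subtype _) else ∅,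
    fun i hi => by simpa [hi] using he ⟨i, hi⟩, ?_⟩
  rw [Fintype.card_coe] at hcard
  refine le_trans (Nat.cast_le.2 ?_) hcard
  have hsub : V \ (I.biUnion fun i => if h : i ∈ I then
      (e ⟨i, h⟩).map (Function.Embedding.subtype _) else ∅) ⊆
      (Finset.univ \ Finset.univ.biUnion e).map (Function.Embedding.subtype _) := by
    intro v hv
    obtain ⟨hvV, hv⟩ := Finset.mem_sdiff.1 hv
    refine Finset.mem_map.2 ⟨⟨v, hvV⟩, Finset.mem_sdiff.2 ⟨Finset.mem_univ _, fun h => hv ?_⟩, rfl⟩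
    obtain ⟨i, -, hi⟩ := Finset.mem_biUnion.1 h
    refine Finset.mem_biUnion.2 ⟨i, i.2, ?_⟩
    rw [dif_pos i.2]
    exact Finset.mem_map.2 ⟨_, hi, rfl⟩
  have h := Finset.card_le_card hsub
  rw [Finset.card_map] at h
  convert h

/-- The choice of the number of rounds `m` and the size bound `R`, for `x = log y`. -/
theorem exists_parameters {δ b : ℝ} (hδ : 0 < δ) (hδ2 : δ ≤ 1 / 2) (hb : 1 < b) (hb10 : b ≤ 10) :
    ∃ x₀ : ℝ, ∀ x, x₀ ≤ x → 0 ≤ x ∧ 1000 ≤ Real.exp (√x) ∧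
      Real.exp (-(x / 2)) * Real.exp (√x) ^ 100 ≤ 1 ∧
      ∃ R m : ℕ, 1 ≤ R ∧ (∀ n : ℕ, (n : ℝ) ≤ x ^ (1 / 2 : ℝ) / Real.log x → n ≤ R) ∧
        (R : ℝ) ≤ Real.exp (√x) ∧ (m : ℝ) ≤ Real.exp (√x) ∧
        (Real.exp (√x))⁻¹ ≤ 1 / (x ^ δ * Real.log x) ∧
        (b ^ m)⁻¹ ≤ 1 / (x ^ δ * Real.log x) ∧ (b ^ m) ^ R ≤ Real.exp (√x) := by
  have hlogb := Real.log_pos hb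
  have hev : ∀ᶠ x : ℝ in Filter.atTop, ‖Real.log x‖ ≤ min (1 / 10) (Real.log b) *
      ‖x ^ (1 / 2 : ℝ)‖ :=
    (isLittleO_log_rpow_atTop (by norm_num)).def (lt_min (by norm_num) hlogb)
  obtain ⟨x₀, hx₀⟩ := Filter.eventually_atTop.1 hev
  refine ⟨max x₀ 1000000, fun x hx => ?_⟩
  have hx1 : 1000000 ≤ x := (le_max_right _ _).trans hx
  have hx0 : 0 < x := by linarith
  have hs := hx₀ x ((le_max_left _ _).trans hx)
  rw [← Real.sqrt_eq_rpow]
  rw [← Real.sqrt_eq_rpow, Real.norm_of_nonneg (Real.sqrt_nonneg x)] at hs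
  have hlog1 : 1 ≤ Real.log x := by
    rw [Real.le_log_iff_exp_le hx0]
    linarith [Real.exp_one_lt_three]
  rw [Real.norm_of_nonneg (by linarith)] at hs
  set r := √x with hr
  have hr2 : r ^ 2 = x := Real.sq_sqrt hx0.le
  have hr1 : 1000 ≤ r := Real.le_sqrt_of_sq_le (by norm_num; exact hx1)
  have hs1 : Real.log x ≤ 1 / 10 * r := hs.trans (by gcongr; exact min_le_left _ _)
  have hs2 : Real.log x ≤ Real.log b * r := hs.trans (by gcongr; exact min_le_right _ _)
  have hrexp : r ≤ Real.exp r := by linarith [Real.add_one_le_exp r]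
  have hR : r / Real.log x ≤ r := div_le_self (by linarith) hlog1
  set u := x ^ δ * Real.log x with hu
  have hxδ1 : 1 ≤ x ^ δ := Real.one_le_rpow (by linarith) hδ.le
  have hxδ : x ^ δ ≤ r := by
    rw [hr, Real.sqrt_eq_rpow]
    exact Real.rpow_le_rpow_of_exponent_le (by linarith) hδ2
  have hu1 : 1 ≤ u := one_le_mul_of_one_le_of_one_le hxδ1 hlog1
  have hux : 10 * u ≤ x := by
    have : u ≤ r * (1 / 10 * r) := by rw [hu]; gcongr
    linarith [hr2, sq r]
  set m := ⌈Real.log u / Real.log b⌉₊ with hm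
  have hpow : b ^ m = Real.exp (m * Real.log b) := by
    rw [← Real.log_pow, Real.exp_log (by positivity)]
  have hub : u ≤ b ^ m := by
    rw [hpow, ← Real.log_le_iff_le_exp (by linarith), ← div_le_iff₀ hlogb]
    exact Nat.le_ceil _
  have hbx : b ^ m ≤ x := by
    have h1 : (m : ℝ) < Real.log u / Real.log b + 1 :=
      Nat.ceil_lt_add_one (div_nonneg (Real.log_nonneg hu1) hlogb.le)
    have h2 : m * Real.log b ≤ Real.log u + Real.log b := by
      have h3 := mul_le_mul_of_nonneg_right h1.le hlogb.le
      rwa [add_mul, div_mul_cancel₀ _ hlogb.ne', one_mul] at h3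
    calc b ^ m ≤ Real.exp (Real.log u + Real.log b) := by
          rw [hpow]
          exact Real.exp_le_exp.2 h2
      _ = u * b := by
          rw [Real.exp_add, Real.exp_log (by linarith), Real.exp_log (by linarith)]
      _ ≤ u * 10 := by gcongr
      _ ≤ x := by linarith
  refine ⟨hx0.le, by linarith, ?_, ⌊r / Real.log x⌋₊, m, ?_, fun n hn => Nat.le_floor hn, ?_, ?_,
    ?_, ?_, ?_⟩
  · rw [← Real.exp_nat_mul, ← Real.exp_add, Real.exp_le_one_iff]
    push_cast
    nlinarith
  · rw [Nat.one_le_floor_iff, one_le_div (by linarith)]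
    linarith
  · exact (Nat.floor_le (by positivity)).trans (hR.trans hrexp)
  · refine le_trans ?_ hrexp
    have h1 : m * Real.log b ≤ Real.log x := by
      rw [← Real.log_pow]
      exact Real.log_le_log (by positivity) hbx
    nlinarith
  · rw [← one_div]
    refine one_div_le_one_div_of_le (by linarith) ?_
    have h1 := Real.quadratic_le_exp_of_nonneg (show 0 ≤ r by linarith)
    linarith
  · rw [← one_div]
    exact one_div_le_one_div_of_le (by linarith) hub
  · calc (b ^ m) ^ ⌊r / Real.log x⌋₊ ≤ x ^ ⌊r / Real.log x⌋₊ := by gcongr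
      _ = Real.exp (⌊r / Real.log x⌋₊ * Real.log x) := by
          rw [← Real.log_pow, Real.exp_log (by positivity)]
      _ ≤ Real.exp r := by
          rw [Real.exp_le_exp, ← le_div_iff₀ (by linarith)]
          exact Nat.floor_le (by positivity)

theorem stmt8 :
    ∃ C₅ : ℝ, 0 < C₅ ∧ ∀ δ : ℝ, 0 < δ → δ ≤ 1/2 → ∃ y₀ : ℝ, ∀ y : ℝ, y₀ ≤ y →
      ∀ (α : Type) (V : Finset α) (s : ℕ) (μ : ℕ → Finset α → ℝ),
        (V.card : ℝ) ≤ y → 1 ≤ s → (s : ℝ) ≤ y →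
        -- each μ i is a probability mass function on the subsets of V
        (∀ i ∈ Finset.Icc 1 s, (∀ e, 0 ≤ μ i e) ∧ (∀ e, μ i e ≠ 0 → e ⊆ V) ∧
          ∑ e ∈ V.powerset, μ i e = 1) →
        -- (1) size bound on the random subsets
        (∀ i ∈ Finset.Icc 1 s, ∀ e, μ i e ≠ 0 →
          (e.card : ℝ) ≤ Real.log y ^ (1/2 : ℝ) / Real.log (Real.log y)) →
        -- (2) pointwise probability bound
        (∀ i ∈ Finset.Icc 1 s, ∀ v ∈ V,
          ∑ e ∈ V.powerset.filter (fun e => v ∈ e), μ i e ≤ y ^ (-(1/2 : ℝ) - 1/100)) →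
        -- (3) pair correlation bound
        (∀ v ∈ V, ∀ v' ∈ V, v ≠ v' →
          ∑ i ∈ Finset.Icc 1 s, ∑ e ∈ V.powerset.filter (fun e => v ∈ e ∧ v' ∈ e), μ i e ≤
            y ^ (-(1/2 : ℝ))) →
        -- (4) near-constant expected covering number
        ∀ C₄ η : ℝ, (10 : ℝ) ^ (2 * δ) ≤ C₄ → C₄ ≤ 100 →
          1 / (Real.log y ^ δ * Real.log (Real.log y)) ≤ η →
          (∀ v ∈ V,
            |(∑ i ∈ Finset.Icc 1 s, ∑ e ∈ V.powerset.filter (fun e => v ∈ e), μ i e) - C₄| ≤ η) →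
        ∃ e : ℕ → Finset α, (∀ i ∈ Finset.Icc 1 s, 0 < μ i (e i)) ∧
          (((V \ (Finset.Icc 1 s).biUnion e).card : ℝ) ≤ C₅ * η * V.card) := by

  refine ⟨5, by norm_num, fun δ hδ hδ2 => ?_⟩
  have hb : (1 : ℝ) < 10 ^ (2 * δ) := Real.one_lt_rpow (by norm_num) (by linarith)
  have hb10 : (10 : ℝ) ^ (2 * δ) ≤ 10 :=
    (Real.rpow_le_rpow_of_exponent_le (by norm_num) (by linarith)).trans_eq (Real.rpow_one 10)
  obtain ⟨x₀, hx₀⟩ := exists_parameters hδ hδ2 hb hb10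
  refine ⟨max 1 (Real.exp x₀), fun y hy α V s μ _ _ _ hμ hcard hvA hpA C₄ η hbC hC hη hd => ?_⟩
  have hy1 : 1 ≤ y := (le_max_left _ _).trans hy
  have hy0 : 0 < y := by linarith
  obtain ⟨hx0, hB, hAB, R, m, hR1, hR, hRB, hmB, hηB, hbm, hbmB⟩ := hx₀ (Real.log y)
    ((Real.le_log_iff_exp_le hy0).2 ((le_max_right _ _).trans hy))
  rcases le_or_gt 1 η with hη1 | hη1
  · have hsupp : ∀ i, ∃ e, i ∈ Finset.Icc 1 s → 0 < μ i e := by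
      intro i
      by_cases hi : i ∈ Finset.Icc 1 s
      · obtain ⟨e, -, he⟩ := Finset.exists_ne_zero_of_sum_ne_zero
          (show ∑ e ∈ V.powerset, μ i e ≠ 0 by rw [(hμ i hi).2.2]; exact one_ne_zero)
        exact ⟨e, fun _ => ((hμ i hi).1 e).lt_of_ne' he⟩
      · exact ⟨∅, fun h => absurd h hi⟩
    choose e he using hsupp
    refine ⟨e, he, ?_⟩
    have h1 : ((V \ (Finset.Icc 1 s).biUnion e).card : ℝ) ≤ V.card := by
      exact_mod_cast Finset.card_le_card Finset.sdiff_subset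
    have h2 : (0 : ℝ) ≤ V.card := Nat.cast_nonneg _
    nlinarith
  · have hA : y ^ (-(1 / 2 : ℝ)) = Real.exp (-(Real.log y / 2)) := by
      rw [Real.rpow_def_of_pos hy0]
      ring_nf
    rw [← hA] at hAB
    exact exists_cover_finset V (Finset.Icc 1 s) (fun i hi => (hμ i hi).1)
      (fun i hi => (hμ i hi).2.2) hR1 (fun i hi e he => hR _ (hcard i hi e he)) (by positivity) hB
      hAB hRB hmB hb hb10 hbC hC hη1.le (hηB.trans hη) (hbm.trans hη) hbmB
      (fun i hi v hv => (hvA i hi v hv).trans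
        (Real.rpow_le_rpow_of_exponent_le hy1 (by norm_num))) hpA hd
end
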